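/- arXiv:2007.14944 — 4 statements merged into one kernel-verified Lean document; each statement's English description precedes it below -/
import Mathlib

section
/- For every δ, ν ∈ ℝ with 0 < δ < 1 and ν > 0, there exists a constant Δ₀(δ,ν) such that for all Δ ≥ Δ₀(δ,ν): if G is a finite simple graph with maximum degree at most Δ and L is a list assignment of E(G) such that (i) |L(e)| ≥ (ln Δ)^25 for all e ∈ E(G), and (ii) the vector x = (1/|L(e)| : e ∈ E(G)) is an element of (1−δ)·MP(G), then G is L-edge-colourable. -/
open scoped Pointwise

/-- An `L`-edge-colouring of a simple graph `G`. -/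
def IsLEdgeColouring {V : Type} (G : SimpleGraph V) (L : Sym2 V → Finset ℕ)
    (γ : Sym2 V → ℕ) : Prop :=
  (∀ e ∈ G.edgeSet, γ e ∈ L e) ∧
  ∀ e ∈ G.edgeSet, ∀ f ∈ G.edgeSet, e ≠ f → (∃ v, v ∈ e ∧ v ∈ f) → γ e ≠ γ f

/-- `M` is a matching of `G`: a set of edges of `G`, pairwise sharing no vertex. -/
def IsMatchingFinset {V : Type} [Fintype V] [DecidableEq V] (G : SimpleGraph V)
    [DecidableRel G.Adj] (M : Finset (Sym2 V)) : Prop :=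
  M ⊆ G.edgeFinset ∧ ∀ e ∈ M, ∀ f ∈ M, e ≠ f → ∀ v : V, ¬(v ∈ e ∧ v ∈ f)

/-- The matching polytope of `G`: the convex hull in `ℝ^{E(G)}` of the characteristic
vectors of the matchings of `G`. -/
noncomputable def matchingPolytope {V : Type} [Fintype V] [DecidableEq V]
    (G : SimpleGraph V) [DecidableRel G.Adj] : Set (G.edgeFinset → ℝ) :=
  convexHull ℝ {x | ∃ M : Finset (Sym2 V), IsMatchingFinset G M ∧
    x = fun e : G.edgeFinset => if (e : Sym2 V) ∈ M then (1 : ℝ) else 0}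

set_option linter.unusedSectionVars false
set_option linter.unusedDecidableInType false
set_option linter.unusedFintypeInType false
namespace LK
open Finset

section prod
variable {ι α : Type*} [Fintype ι] [DecidableEq ι] [Fintype α]

/-- product weight -/
noncomputable def wt (μ : ι → α → ℝ) (ω : ι → α) : ℝ := ∏ i, μ i (ω i)

/-- expectation with respect to the product weight -/
noncomputable def Ex (μ : ι → α → ℝ) (F : (ι → α) → ℝ) : ℝ := ∑ ω, wt μ ω * F ω

structure IsPM (μ : ι → α → ℝ) : Prop where
  nonneg : ∀ i a, 0 ≤ μ i a
  sum_one : ∀ i, ∑ a, μ i a = 1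

variable {μ : ι → α → ℝ}

lemma wt_nonneg (h : IsPM μ) (ω : ι → α) : 0 ≤ wt μ ω :=
  Finset.prod_nonneg fun i _ => h.nonneg i _

lemma sum_wt (h : IsPM μ) : ∑ ω, wt μ ω = 1 := by
  have := Finset.prod_univ_sum (fun _ : ι => (Finset.univ : Finset α)) (fun i a => μ i a)
  simp only [h.sum_one, Finset.prod_const_one, Fintype.piFinset_univ] at this
  exact this.symm

lemma Ex_const (h : IsPM μ) (k : ℝ) : Ex μ (fun _ => k) = k := by
  unfold Ex; rw [← Finset.sum_mul, sum_wt h, one_mul]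

lemma Ex_add (F G : (ι → α) → ℝ) : Ex μ (fun ω => F ω + G ω) = Ex μ F + Ex μ G := by
  unfold Ex; rw [← Finset.sum_add_distrib]; exact Finset.sum_congr rfl fun _ _ => by ring

lemma Ex_sub (F G : (ι → α) → ℝ) : Ex μ (fun ω => F ω - G ω) = Ex μ F - Ex μ G := by
  unfold Ex; rw [← Finset.sum_sub_distrib]; exact Finset.sum_congr rfl fun _ _ => by ring

lemma Ex_mul_left (k : ℝ) (F : (ι → α) → ℝ) : Ex μ (fun ω => k * F ω) = k * Ex μ F := by
  unfold Ex; rw [Finset.mul_sum]; exact Finset.sum_congr rfl fun _ _ => by ring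

lemma Ex_neg (F : (ι → α) → ℝ) : Ex μ (fun ω => - F ω) = - Ex μ F := by
  unfold Ex; rw [← Finset.sum_neg_distrib]; exact Finset.sum_congr rfl fun _ _ => by ring

lemma Ex_sum {κ : Type*} (s : Finset κ) (F : κ → (ι → α) → ℝ) :
    Ex μ (fun ω => ∑ k ∈ s, F k ω) = ∑ k ∈ s, Ex μ (F k) := by
  unfold Ex; rw [Finset.sum_comm]
  exact Finset.sum_congr rfl fun _ _ => by rw [Finset.mul_sum]

lemma Ex_mono (h : IsPM μ) {F G : (ι → α) → ℝ} (hFG : ∀ ω, F ω ≤ G ω) : Ex μ F ≤ Ex μ G :=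
  Finset.sum_le_sum fun ω _ => mul_le_mul_of_nonneg_left (hFG ω) (wt_nonneg h ω)

lemma Ex_nonneg (h : IsPM μ) {F : (ι → α) → ℝ} (hF : ∀ ω, 0 ≤ F ω) : 0 ≤ Ex μ F :=
  Finset.sum_nonneg fun ω _ => mul_nonneg (wt_nonneg h ω) (hF ω)

open scoped Classical in
/-- independence -/
lemma Ex_mul (h : IsPM μ) {F G : (ι → α) → ℝ} {S T : Set ι} (hF : DependsOn F S)
    (hG : DependsOn G T) (hST : Disjoint S T) :
    Ex μ (fun ω => F ω * G ω) = Ex μ F * Ex μ G := by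
  let e : ((ι → α) × (ι → α)) ≃ ((ι → α) × (ι → α)) :=
    { toFun := fun x => (fun i => if i ∈ S then x.1 i else x.2 i,
        fun i => if i ∈ S then x.2 i else x.1 i)
      invFun := fun x => (fun i => if i ∈ S then x.1 i else x.2 i,
        fun i => if i ∈ S then x.2 i else x.1 i)
      left_inv := by rintro ⟨x, y⟩; ext i <;> by_cases hi : i ∈ S <;> simp [hi]
      right_inv := by rintro ⟨x, y⟩; ext i <;> by_cases hi : i ∈ S <;> simp [hi] }
  have h1 : Ex μ F * Ex μ G = ∑ x : (ι → α) × (ι → α), (wt μ x.1 * F x.1) * (wt μ x.2 * G x.2) := by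
    unfold Ex; rw [Finset.sum_mul_sum, ← Finset.sum_product']; rfl
  have h2 : Ex μ (fun ω => F ω * G ω) =
      ∑ x : (ι → α) × (ι → α), (wt μ x.1 * (F x.1 * G x.1)) * wt μ x.2 := by
    have : Ex μ (fun ω => F ω * G ω) = Ex μ (fun ω => F ω * G ω) * ∑ ω, wt μ ω := by
      rw [sum_wt h, mul_one]
    rw [this]
    unfold Ex; rw [Finset.sum_mul_sum, ← Finset.sum_product']; rfl
  rw [h1, h2]
  symm
  apply Fintype.sum_equiv e
  rintro ⟨x, y⟩
  have e1 : F x = F (e (x, y)).1 := hF fun i hi => by simp [e, hi]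
  have e2 : G y = G (e (x, y)).1 := hG fun i hi => by
    have : i ∉ S := fun h' => (Set.disjoint_left.mp hST) h' hi
    simp [e, this]
  have e3 : wt μ x * wt μ y = wt μ (e (x, y)).1 * wt μ (e (x, y)).2 := by
    unfold wt; rw [← Finset.prod_mul_distrib, ← Finset.prod_mul_distrib]
    refine Finset.prod_congr rfl fun i _ => ?_
    by_cases hi : i ∈ S <;> simp [e, hi, mul_comm]
  calc wt μ x * F x * (wt μ y * G y) = (wt μ x * wt μ y) * (F x * G y) := by ring
    _ = _ := by rw [e3, e1, e2]; ring

lemma dep_mono {β : Type*} {F : (ι → α) → β} {S T : Set ι} (hF : DependsOn F S)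
    (h : S ⊆ T) : DependsOn F T := fun _ _ hxy => hF fun i hi => hxy i (h hi)

open scoped Classical in
lemma Ex_prod (h : IsPM μ) {κ : Type*} (s : Finset κ) (F : κ → (ι → α) → ℝ) (S : κ → Set ι)
    (hF : ∀ k, DependsOn (F k) (S k)) (hS : ∀ k l, k ∈ s → l ∈ s → k ≠ l → Disjoint (S k) (S l)) :
    Ex μ (fun ω => ∏ k ∈ s, F k ω) = ∏ k ∈ s, Ex μ (F k) := by
  induction s using Finset.induction_on with
  | empty => simp [Ex_const h]
  | insert a s ha ih =>
    simp only [Finset.prod_insert ha]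
    rw [← ih fun k l hk hl => hS k l (mem_insert_of_mem hk) (mem_insert_of_mem hl)]
    refine Ex_mul h (S := S a) (T := ⋃ k ∈ s, S k) (hF a) ?_ ?_
    · intro x y hxy
      refine Finset.prod_congr rfl fun k hk => hF k fun i hi => hxy i ?_
      simp only [Set.mem_iUnion]; exact ⟨k, hk, hi⟩
    · simp only [Set.disjoint_iUnion_right]
      exact fun k hk => hS a k (mem_insert_self _ _) (mem_insert_of_mem hk)
        (fun e => ha (e ▸ hk))

/-- average over one coordinate -/
noncomputable def Ei (μ : ι → α → ℝ) (i : ι) (F : (ι → α) → ℝ) (x : ι → α) : ℝ :=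
  ∑ a, μ i a * F (Function.update x i a)

noncomputable def EL (μ : ι → α → ℝ) : List ι → ((ι → α) → ℝ) → (ι → α) → ℝ
  | [], F => F
  | i :: l, F => Ei μ i (EL μ l F)

lemma EL_append (A B : List ι) (F : (ι → α) → ℝ) : EL μ (A ++ B) F = EL μ A (EL μ B F) := by
  induction A with
  | nil => rfl
  | cons a l ih => simp only [List.cons_append, EL, ih]

open scoped Classical in
lemma Ex_Ei (h : IsPM μ) (i : ι) (F : (ι → α) → ℝ) : Ex μ (Ei μ i F) = Ex μ F := by
  let e : ((ι → α) × α) ≃ ((ι → α) × α) :=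
    { toFun := fun x => (Function.update x.1 i x.2, x.1 i)
      invFun := fun x => (Function.update x.1 i x.2, x.1 i)
      left_inv := by rintro ⟨x, y⟩; simp
      right_inv := by rintro ⟨x, y⟩; simp }
  have h1 : Ex μ (Ei μ i F) = ∑ x : (ι → α) × α,
      wt μ x.1 * (μ i x.2 * F (Function.update x.1 i x.2)) := by
    unfold Ex Ei; simp_rw [Finset.mul_sum]; rw [← Finset.sum_product']; rfl
  have h2 : Ex μ F = ∑ x : (ι → α) × α, (wt μ x.1 * F x.1) * μ i x.2 := by
    have : Ex μ F = Ex μ F * ∑ a, μ i a := by rw [h.sum_one, mul_one]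
    rw [this]; unfold Ex; rw [Finset.sum_mul_sum, ← Finset.sum_product']; rfl
  rw [h1, h2]
  apply Fintype.sum_equiv e
  rintro ⟨x, a⟩
  have : wt μ x * μ i a = wt μ (Function.update x i a) * μ i (x i) := by
    unfold wt
    rw [← Finset.mul_prod_erase univ _ (mem_univ i),
      ← Finset.mul_prod_erase univ (fun j => μ j (Function.update x i a j)) (mem_univ i)]
    have : ∏ j ∈ univ.erase i, μ j (Function.update x i a j) = ∏ j ∈ univ.erase i, μ j (x j) :=
      Finset.prod_congr rfl fun j hj => by rw [Function.update_of_ne (Finset.ne_of_mem_erase hj)]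
    rw [this]; simp; ring
  simp only [e, Equiv.coe_fn_mk]
  rw [← mul_assoc, this]; ring

lemma Ex_EL (h : IsPM μ) (l : List ι) (F : (ι → α) → ℝ) : Ex μ (EL μ l F) = Ex μ F := by
  induction l with
  | nil => rfl
  | cons a l ih => simp only [EL]; rw [Ex_Ei h, ih]

lemma EL_dep (l : List ι) (F : (ι → α) → ℝ) : DependsOn (EL μ l F) {i | i ∉ l} := by
  induction l with
  | nil => intro x y hxy; simp only [EL]; congr 1; ext i; exact hxy i (by simp)
  | cons a l ih =>
    intro x y hxy
    simp only [EL, Ei]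
    refine Finset.sum_congr rfl fun b _ => ?_
    congr 1
    refine ih fun i hi => ?_
    by_cases hia : i = a
    · subst hia; simp
    · rw [Function.update_of_ne hia, Function.update_of_ne hia]
      exact hxy i (by simp [hia]; exact hi)

lemma EL_all (h : IsPM μ) (l : List ι) (hl : ∀ i, i ∈ l) (F : (ι → α) → ℝ) (x : ι → α) :
    EL μ l F x = Ex μ F := by
  have : EL μ l F = fun _ => EL μ l F x := by
    ext y; exact EL_dep l F fun i hi => absurd (hl i) hi
  rw [← Ex_EL h l F, this, Ex_const h]

lemma Ei_mono (h : IsPM μ) (i : ι) {F G : (ι → α) → ℝ} {x : ι → α}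
    (hFG : ∀ a, F (Function.update x i a) ≤ G (Function.update x i a)) : Ei μ i F x ≤ Ei μ i G x :=
  Finset.sum_le_sum fun a _ => mul_le_mul_of_nonneg_left (hFG a) (h.nonneg i a)

lemma EL_diff (h : IsPM μ) (l : List ι) (i : ι) (hi : i ∉ l) (a b : α) (d : ℝ)
    (F : (ι → α) → ℝ) (Q : (ι → α) → Prop) (hQ : ∀ x, Q x → ∀ j ∈ l, ∀ a, Q (Function.update x j a))
    (hF : ∀ x, Q x → |F (Function.update x i a) - F (Function.update x i b)| ≤ d) :
    ∀ x, Q x → |EL μ l F (Function.update x i a) - EL μ l F (Function.update x i b)| ≤ d := by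
  induction l with
  | nil => exact hF
  | cons j l ih =>
    intro x hx
    have hij : i ≠ j := fun e => hi (by simp [e])
    have ih' := ih (fun h' => hi (List.mem_cons_of_mem _ h'))
      (fun x hx k hk => hQ x hx k (List.mem_cons_of_mem _ hk))
    simp only [EL, Ei]
    rw [← Finset.sum_sub_distrib]
    refine (Finset.abs_sum_le_sum_abs _ _).trans ?_
    have : d = ∑ c, μ j c * d := by rw [← Finset.sum_mul, h.sum_one, one_mul]
    rw [this]
    refine Finset.sum_le_sum fun c _ => ?_
    rw [← mul_sub, abs_mul, abs_of_nonneg (h.nonneg j c), Function.update_comm hij,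
      Function.update_comm hij]
    exact mul_le_mul_of_nonneg_left (ih' _ (hQ x hx j List.mem_cons_self c)) (h.nonneg j c)

end prod

section bern
variable {ι : Type*} [Fintype ι] [DecidableEq ι]

/-- Bernoulli weights -/
def bm (b : ι → ℝ) : ι → Bool → ℝ := fun i a => if a then b i else 1 - b i

lemma bm_pm {b : ι → ℝ} (h0 : ∀ i, 0 ≤ b i) (h1 : ∀ i, b i ≤ 1) : IsPM (bm b) where
  nonneg i a := by cases a <;> simp [bm, h0, h1]
  sum_one i := by simp [bm]

lemma bern_mgf {b l g0 g1 d : ℝ} (hb0 : 0 ≤ b) (hb1 : b ≤ 1) (hd : |g1 - g0| ≤ d)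
    (hl : 0 ≤ l) (hld : l * d ≤ 1) :
    b * Real.exp (l * g1) + (1 - b) * Real.exp (l * g0) ≤
      Real.exp (l * (b * g1 + (1 - b) * g0) + l ^ 2 * (b * d ^ 2)) := by
  set m := b * g1 + (1 - b) * g0
  set y := l * (g1 - g0) with hy
  have hya : |y| ≤ 1 := by
    rw [hy, abs_mul, abs_of_nonneg hl]; exact (mul_le_mul_of_nonneg_left hd hl).trans hld
  have e1 : Real.exp (l * g1) = Real.exp (l * m) * Real.exp ((1 - b) * y) := by
    rw [← Real.exp_add]; congr 1; simp only [m, y]; ring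
  have e0 : Real.exp (l * g0) = Real.exp (l * m) * Real.exp (-b * y) := by
    rw [← Real.exp_add]; congr 1; simp only [m, y]; ring
  have ex : ∀ z : ℝ, |z| ≤ 1 → Real.exp z ≤ 1 + z + z ^ 2 := fun z hz => by
    have := (abs_le.mp (Real.abs_exp_sub_one_sub_id_le hz)).2; linarith
  have b1 := ex ((1 - b) * y) (by
    rw [abs_mul, abs_of_nonneg (by linarith)]; nlinarith [abs_nonneg y])
  have b0 := ex (-b * y) (by
    rw [abs_mul, abs_neg, abs_of_nonneg hb0]; nlinarith [abs_nonneg y])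
  have hy2 : y ^ 2 ≤ l ^ 2 * d ^ 2 := by
    rw [hy, mul_pow]
    refine mul_le_mul_of_nonneg_left ?_ (sq_nonneg l)
    rw [← sq_abs (g1 - g0)]; exact pow_le_pow_left₀ (abs_nonneg _) hd 2
  rw [Real.exp_add, e1, e0]
  have key : b * Real.exp ((1 - b) * y) + (1 - b) * Real.exp (-b * y) ≤
      Real.exp (l ^ 2 * (b * d ^ 2)) := by
    calc _ ≤ b * (1 + (1 - b) * y + ((1 - b) * y) ^ 2) + (1 - b) * (1 + -b * y + (-b * y) ^ 2) := by
          gcongr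
      _ = 1 + (b * (1 - b)) * y ^ 2 := by ring
      _ ≤ 1 + b * y ^ 2 := by nlinarith [sq_nonneg y, mul_nonneg hb0 hb0, mul_nonneg (mul_nonneg hb0 hb0) (sq_nonneg y)]
      _ ≤ l ^ 2 * (b * d ^ 2) + 1 := by nlinarith
      _ ≤ _ := Real.add_one_le_exp _
  calc _ = Real.exp (l * m) * (b * Real.exp ((1 - b) * y) + (1 - b) * Real.exp (-b * y)) := by ring
    _ ≤ _ := mul_le_mul_of_nonneg_left key (Real.exp_pos _).le

lemma EL_mgf {b : ι → ℝ} (h0 : ∀ i, 0 ≤ b i) (h1 : ∀ i, b i ≤ 1) (l : List ι) (hl : l.Nodup)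
    (F : (ι → Bool) → ℝ) (Q : (ι → Bool) → Prop)
    (hQ : ∀ x, Q x → ∀ j ∈ l, ∀ a, Q (Function.update x j a)) (d : ι → ℝ)
    (hd : ∀ i ∈ l, ∀ x, Q x → |F (Function.update x i true) - F (Function.update x i false)| ≤ d i)
    (lam : ℝ) (hlam : 0 ≤ lam) (hld : ∀ i ∈ l, lam * d i ≤ 1) :
    ∀ x, Q x → EL (bm b) l (fun x => Real.exp (lam * F x)) x ≤
      Real.exp (lam * EL (bm b) l F x + lam ^ 2 * (l.map fun i => b i * d i ^ 2).sum) := by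
  have hpm := bm_pm h0 h1
  induction l with
  | nil => intro x _; simp [EL]
  | cons i l ih =>
    intro x hx
    have hil : i ∉ l := (List.nodup_cons.mp hl).1
    have ih' := ih (List.nodup_cons.mp hl).2
      (fun x hx k hk => hQ x hx k (List.mem_cons_of_mem _ hk))
      (fun k hk => hd k (List.mem_cons_of_mem _ hk))
      (fun k hk => hld k (List.mem_cons_of_mem _ hk))
    set V := (l.map fun i => b i * d i ^ 2).sum with hV
    have hdiff := EL_diff hpm l i hil true false (d i) F Q
      (fun x hx k hk => hQ x hx k (List.mem_cons_of_mem _ hk)) (hd i List.mem_cons_self) x hx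
    simp only [EL]
    calc _ ≤ Ei (bm b) i (fun x => Real.exp (lam * EL (bm b) l F x + lam ^ 2 * V)) x :=
          Ei_mono hpm i fun a => ih' _ (hQ x hx i List.mem_cons_self a)
      _ = Real.exp (lam ^ 2 * V) * (b i * Real.exp (lam * EL (bm b) l F (Function.update x i true)) +
            (1 - b i) * Real.exp (lam * EL (bm b) l F (Function.update x i false))) := by
          simp only [Ei, Fintype.sum_bool, bm, Real.exp_add]; simp; ring
      _ ≤ Real.exp (lam ^ 2 * V) * _ := by
          refine mul_le_mul_of_nonneg_left (bern_mgf (h0 i) (h1 i) hdiff hlam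
            (hld i List.mem_cons_self)) (Real.exp_pos _).le
      _ = _ := by
          rw [← Real.exp_add]; congr 1
          simp only [Ei, Fintype.sum_bool, bm, List.map_cons, List.sum_cons, ← hV]; simp; ring

/-- two-phase bounded-difference inequality -/
lemma BD2 {b : ι → ℝ} (h0 : ∀ i, 0 ≤ b i) (h1 : ∀ i, b i ≤ 1) (A : Finset ι)
    (F : (ι → Bool) → ℝ) (dA : ι → ℝ) (dB : (ι → Bool) → ι → ℝ)
    (hA : ∀ i ∈ A, ∀ x, |F (Function.update x i true) - F (Function.update x i false)| ≤ dA i)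
    (hB : ∀ i, i ∉ A → ∀ x,
      |F (Function.update x i true) - F (Function.update x i false)| ≤ dB x i)
    (hdep : ∀ i, DependsOn (fun x => dB x i) (A : Set ι)) (VA VB lam : ℝ)
    (hVA : ∑ i ∈ A, b i * dA i ^ 2 ≤ VA) (hVB : ∀ x, ∑ i ∈ Aᶜ, b i * dB x i ^ 2 ≤ VB)
    (hlam : 0 ≤ lam) (hlA : ∀ i ∈ A, lam * dA i ≤ 1) (hlB : ∀ x, ∀ i, i ∉ A → lam * dB x i ≤ 1) :
    Ex (bm b) (fun x => Real.exp (lam * F x)) ≤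
      Real.exp (lam * Ex (bm b) F + lam ^ 2 * (VA + VB)) := by
  have hpm := bm_pm h0 h1
  have hall : ∀ i, i ∈ A.toList ++ (Aᶜ).toList := fun i => by
    simp only [List.mem_append, mem_toList, mem_compl]; exact em _
  have x0 : ι → Bool := fun _ => true
  rw [← EL_all hpm _ hall (fun x => Real.exp (lam * F x)) x0, ← EL_all hpm _ hall F x0,
    EL_append, EL_append]
  have step : ∀ x, EL (bm b) (Aᶜ).toList (fun x => Real.exp (lam * F x)) x ≤
      Real.exp (lam ^ 2 * VB) * Real.exp (lam * EL (bm b) (Aᶜ).toList F x) := by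
    intro x
    have := EL_mgf h0 h1 (Aᶜ).toList (nodup_toList _) F (fun y => ∀ i ∈ A, y i = x i)
      (by
        intro y hy j hj a i hi
        have : i ≠ j := by rintro rfl; simp at hj; exact hj hi
        rw [Function.update_of_ne this]; exact hy i hi) (dB x)
      (by
        intro i hi y hy
        have hi' : i ∉ A := by simpa using hi
        have e : dB y i = dB x i := hdep i fun j hj => hy j hj
        rw [← e]; exact hB i hi' y) lam hlam (fun i hi => hlB x i (by simpa using hi)) x
      (fun _ _ => rfl)
    refine this.trans ?_
    rw [← Real.exp_add]
    apply Real.exp_le_exp.mpr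
    rw [Finset.sum_map_toList]
    nlinarith [mul_le_mul_of_nonneg_left (hVB x) (sq_nonneg lam)]
  have mono : ∀ (l : List ι) (F G : (ι → Bool) → ℝ), (∀ x, F x ≤ G x) →
      ∀ x, EL (bm b) l F x ≤ EL (bm b) l G x := by
    intro l; induction l with
    | nil => intro F G h x; exact h x
    | cons i l ih => intro F G h x; exact Ei_mono hpm i fun a => ih F G h _
  have smul : ∀ (l : List ι) (k : ℝ) (F : (ι → Bool) → ℝ) ,
      ∀ x, EL (bm b) l (fun x => k * F x) x = k * EL (bm b) l F x := by
    intro l k F; induction l with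
    | nil => intro x; rfl
    | cons i l ih => 
      intro x; simp only [EL, Ei, Finset.mul_sum]
      exact Finset.sum_congr rfl fun a _ => by rw [ih]; ring
  refine (mono _ _ _ step x0).trans ?_
  rw [smul]
  have := EL_mgf h0 h1 A.toList (nodup_toList _) (EL (bm b) (Aᶜ).toList F) (fun _ => True)
      (fun _ _ _ _ _ => trivial) dA
      (by
        intro i hi x _
        exact EL_diff hpm _ i (by simpa using hi) true false (dA i) F (fun _ => True)
          (fun _ _ _ _ _ => trivial) (fun x _ => hA i (by simpa using hi) x) x trivial)
      lam hlam (fun i hi => hlA i (by simpa using hi)) x0 trivial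
  refine (mul_le_mul_of_nonneg_left this (Real.exp_pos _).le).trans ?_
  rw [← Real.exp_add]
  apply Real.exp_le_exp.mpr
  rw [Finset.sum_map_toList]
  nlinarith [mul_le_mul_of_nonneg_left hVA (sq_nonneg lam)]

end bern
end LK

set_option linter.unusedSectionVars false
namespace LK
open Finset

section lll
variable {ι α : Type*} [Fintype ι] [DecidableEq ι] [Fintype α] {μ : ι → α → ℝ}

open scoped Classical in
/-- probability of an event -/
noncomputable def Pr (μ : ι → α → ℝ) (A : (ι → α) → Prop) : ℝ :=
  Ex μ (fun ω => if A ω then 1 else 0)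

lemma Pr_nonneg (h : IsPM μ) (A : (ι → α) → Prop) : 0 ≤ Pr μ A :=
  Ex_nonneg h fun ω => by split_ifs <;> norm_num

lemma Pr_mono (h : IsPM μ) {A B : (ι → α) → Prop} (hAB : ∀ ω, A ω → B ω) : Pr μ A ≤ Pr μ B :=
  Ex_mono h fun ω => by
    by_cases hA : A ω
    · simp [hA, hAB ω hA]
    · simp only [hA, if_false]; split_ifs <;> norm_num

lemma Pr_true (h : IsPM μ) {A : (ι → α) → Prop} (hA : ∀ ω, A ω) : Pr μ A = 1 := by
  unfold Pr; simp only [hA, if_true]; exact Ex_const h 1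

lemma Pr_and_indep (h : IsPM μ) {A B : (ι → α) → Prop} {S T : Set ι} (hA : DependsOn A S)
    (hB : DependsOn B T) (hST : Disjoint S T) : Pr μ (fun ω => A ω ∧ B ω) = Pr μ A * Pr μ B := by
  unfold Pr
  rw [← Ex_mul h (S := S) (T := T) _ _ hST]
  · congr 1; ext ω; by_cases h1 : A ω <;> by_cases h2 : B ω <;> simp [h1, h2]
  · intro x y hxy; have := hA hxy; dsimp only; congr 1
  · intro x y hxy; have := hB hxy; dsimp only; congr 1

lemma Pr_split (_h : IsPM μ) (A B : (ι → α) → Prop) :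
    Pr μ B = Pr μ (fun ω => A ω ∧ B ω) + Pr μ (fun ω => ¬ A ω ∧ B ω) := by
  unfold Pr; rw [← Ex_add]
  congr 1; ext ω; by_cases h1 : A ω <;> by_cases h2 : B ω <;> simp [h1, h2]

lemma Pr_exists_le (h : IsPM μ) {κ : Type*} (s : Finset κ) (A : κ → (ι → α) → Prop) :
    Pr μ (fun ω => ∃ k ∈ s, A k ω) ≤ ∑ k ∈ s, Pr μ (A k) := by
  classical
  unfold Pr; rw [← Ex_sum]
  refine Ex_mono h fun ω => ?_
  by_cases hA : ∃ k ∈ s, A k ω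
  · obtain ⟨k, hk, hk'⟩ := hA
    rw [if_pos ⟨k, hk, hk'⟩]
    calc (1 : ℝ) = if A k ω then 1 else 0 := by simp [hk']
      _ ≤ _ := Finset.single_le_sum (f := fun k => if A k ω then (1 : ℝ) else 0)
        (fun i _ => by split_ifs <;> norm_num) hk
  · rw [if_neg hA]; exact Finset.sum_nonneg fun i _ => by split_ifs <;> norm_num

lemma Pr_or_le (h : IsPM μ) (A B : (ι → α) → Prop) :
    Pr μ (fun ω => A ω ∨ B ω) ≤ Pr μ A + Pr μ B := by
  unfold Pr; rw [← Ex_add]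
  refine Ex_mono h fun ω => ?_
  by_cases h1 : A ω <;> by_cases h2 : B ω <;> simp [h1, h2]

/-- Markov / Chernoff -/
lemma Pr_chernoff (h : IsPM μ) (F : (ι → α) → ℝ) (lam t : ℝ) (hl : 0 ≤ lam) :
    Pr μ (fun ω => t ≤ F ω) ≤ Real.exp (-(lam * t)) * Ex μ (fun ω => Real.exp (lam * F ω)) := by
  unfold Pr; rw [← Ex_mul_left]
  refine Ex_mono h fun ω => ?_
  split_ifs with hF
  · rw [← Real.exp_add]; apply Real.one_le_exp
    nlinarith [mul_le_mul_of_nonneg_left hF hl]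
  · positivity

lemma LLL {I : Type*} [Fintype I] [DecidableEq I] (h : IsPM μ) (A : I → (ι → α) → Prop)
    (S : I → Set ι) (N : I → Finset I)
    (hA : ∀ i, DependsOn (A i) (S i)) (hN : ∀ i j, j ∉ N i → Disjoint (S i) (S j))
    (h4 : ∀ i, ∑ j ∈ N i, Pr μ (A j) ≤ 1 / 4) (h4' : ∀ i, Pr μ (A i) ≤ 1 / 4) :
    ∃ ω, wt μ ω ≠ 0 ∧ ∀ i, ¬ A i ω := by
  classical
  have key : ∀ n : ℕ, ∀ s : Finset I, s.card = n → ∀ i,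
      Pr μ (fun ω => A i ω ∧ ∀ j ∈ s, ¬ A j ω) ≤ 2 * Pr μ (A i) * Pr μ (fun ω => ∀ j ∈ s, ¬ A j ω) := by
    intro n
    induction n using Nat.strong_induction_on with
    | _ n ih =>
      intro s hs i
      set s1 := s.filter (fun j => j ∈ N i) with hs1
      set s2 := s.filter (fun j => j ∉ N i) with hs2
      have hind : Pr μ (fun ω => A i ω ∧ ∀ j ∈ s2, ¬ A j ω) =
          Pr μ (A i) * Pr μ (fun ω => ∀ j ∈ s2, ¬ A j ω) := by
        apply Pr_and_indep h (hA i) (T := ⋃ j ∈ s2, S j)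
        · intro x y hxy
          apply propext
          refine forall₂_congr fun j hj => not_congr ?_
          rw [hA j fun k hk => hxy k (by simp only [Set.mem_iUnion]; exact ⟨j, hj, hk⟩)]
        · simp only [Set.disjoint_iUnion_right]
          intro j hj; exact hN i j (by simp [hs2] at hj; exact hj.2)
      have hle1 : Pr μ (fun ω => A i ω ∧ ∀ j ∈ s, ¬ A j ω) ≤
          Pr μ (fun ω => A i ω ∧ ∀ j ∈ s2, ¬ A j ω) :=
        Pr_mono h fun ω hω => ⟨hω.1, fun j hj => hω.2 j (Finset.mem_of_mem_filter j hj)⟩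
      have hp := Pr_nonneg h (A i)
      suffices hhalf : Pr μ (fun ω => ∀ j ∈ s2, ¬ A j ω) ≤ 2 * Pr μ (fun ω => ∀ j ∈ s, ¬ A j ω) by
        calc _ ≤ Pr μ (A i) * Pr μ (fun ω => ∀ j ∈ s2, ¬ A j ω) := hle1.trans hind.le
          _ ≤ Pr μ (A i) * (2 * Pr μ (fun ω => ∀ j ∈ s, ¬ A j ω)) := by gcongr
          _ = _ := by ring
      by_cases he : s1 = ∅
      · have : s2 = s := by
          rw [hs2]; apply Finset.filter_true_of_mem
          intro j hj hjN
          have : j ∈ s1 := by simp [hs1, hj, hjN]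
          simp [he] at this
        rw [this]; linarith [Pr_nonneg h (fun ω => ∀ j ∈ s, ¬ A j ω)]
      · have hcard : s2.card < n := by
          rw [← hs]; apply Finset.card_lt_card
          obtain ⟨j, hj⟩ := Finset.nonempty_iff_ne_empty.mpr he
          refine (Finset.filter_subset _ _).ssubset_of_ne ?_
          intro e
          have hj' : j ∈ s2 := by rw [hs2, e]; exact Finset.mem_of_mem_filter j hj
          simp [hs1] at hj; simp [hs2] at hj'; exact hj'.2 hj.2
        have hsp := Pr_split h (fun ω => ∃ j ∈ s1, A j ω) (fun ω => ∀ j ∈ s2, ¬ A j ω)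
        have hb : Pr μ (fun ω => (∃ j ∈ s1, A j ω) ∧ ∀ j ∈ s2, ¬ A j ω) ≤
            1 / 2 * Pr μ (fun ω => ∀ j ∈ s2, ¬ A j ω) := by
          calc _ ≤ Pr μ (fun ω => ∃ k ∈ s1, (A k ω ∧ ∀ j ∈ s2, ¬ A j ω)) :=
                Pr_mono h fun ω ⟨⟨j, hj, hjA⟩, h2⟩ => ⟨j, hj, hjA, h2⟩
            _ ≤ ∑ k ∈ s1, Pr μ (fun ω => A k ω ∧ ∀ j ∈ s2, ¬ A j ω) := Pr_exists_le h _ _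
            _ ≤ ∑ k ∈ s1, 2 * Pr μ (A k) * Pr μ (fun ω => ∀ j ∈ s2, ¬ A j ω) :=
                Finset.sum_le_sum fun k _ => ih _ hcard s2 rfl k
            _ = 2 * (∑ k ∈ s1, Pr μ (A k)) * Pr μ (fun ω => ∀ j ∈ s2, ¬ A j ω) := by
                rw [Finset.mul_sum, Finset.sum_mul]
            _ ≤ _ := by
                refine mul_le_mul_of_nonneg_right ?_ (Pr_nonneg h _)
                have : ∑ k ∈ s1, Pr μ (A k) ≤ ∑ j ∈ N i, Pr μ (A j) :=
                  Finset.sum_le_sum_of_subset_of_nonneg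
                    (fun j hj => by simp [hs1] at hj; exact hj.2) fun j _ _ => Pr_nonneg h _
                linarith [h4 i]
        have hc : Pr μ (fun ω => ¬ (∃ j ∈ s1, A j ω) ∧ ∀ j ∈ s2, ¬ A j ω) ≤
            Pr μ (fun ω => ∀ j ∈ s, ¬ A j ω) :=
          Pr_mono h fun ω ⟨ha, hb⟩ j hj hA' => by
            by_cases hjN : j ∈ N i
            · exact ha ⟨j, by simp [hs1, hj, hjN], hA'⟩
            · exact hb j (by simp [hs2, hj, hjN]) hA'
        linarith
  have pos : ∀ s : Finset I, 0 < Pr μ (fun ω => ∀ j ∈ s, ¬ A j ω) := by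
    intro s
    induction s using Finset.induction_on with
    | empty => rw [Pr_true h (by simp)]; norm_num
    | insert i t hi ih =>
      have h1 := key _ t rfl i
      have h2 := Pr_split h (A i) (fun ω => ∀ j ∈ t, ¬ A j ω)
      have h3 : Pr μ (fun ω => ¬ A i ω ∧ ∀ j ∈ t, ¬ A j ω) =
          Pr μ (fun ω => ∀ j ∈ insert i t, ¬ A j ω) := by
        congr 1; ext ω; simp
      rw [← h3]
      nlinarith [h4' i]
  by_contra hcon
  push Not at hcon
  have hz : Pr μ (fun ω => ∀ j ∈ (univ : Finset I), ¬ A j ω) = 0 := by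
    unfold Pr Ex
    refine Finset.sum_eq_zero fun ω _ => ?_
    by_cases hw : wt μ ω = 0
    · simp [hw]
    · obtain ⟨i, hi⟩ := hcon ω hw
      beta_reduce
      rw [if_neg (fun hh : ∀ j ∈ (univ : Finset I), ¬ A j ω => hh i (mem_univ i) hi), mul_zero]
  exact absurd (pos univ) (by rw [hz]; exact lt_irrefl _)

end lll
end LK

set_option linter.unusedSectionVars false
namespace LK
open Finset

lemma Ex_coord {ι α : Type*} [Fintype ι] [DecidableEq ι] [Fintype α] {μ : ι → α → ℝ}
    (h : IsPM μ) (i : ι) (g : α → ℝ) : Ex μ (fun ω => g (ω i)) = ∑ a, μ i a * g a := by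
  rw [← Ex_Ei h i, ← Ex_const h (∑ a, μ i a * g a)]
  congr 1; ext ω; simp [Ei]

section graph
variable {V C : Type} [Fintype V] [Fintype C]

open scoped Classical in
/-- a weighted list assignment -/
structure St (H : SimpleGraph V) (p : V → V → C → ℝ) (D K P w : ℝ) : Prop where
  symm : ∀ x y c, p x y c = p y x c
  nonneg : ∀ x y c, 0 ≤ p x y c
  zero : ∀ x y c, ¬ H.Adj x y → p x y c = 0
  sum : ∀ x y, H.Adj x y → ∑ c, p x y c = 1
  leP : ∀ x y c, p x y c ≤ P
  leW : ∀ x c, ∑ y, p x y c ≤ w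
  deg : ∀ x, ((univ.filter fun y => H.Adj x y).card : ℝ) ≤ D
  col : ∀ x, ((univ.filter fun c => ∃ y, p x y c ≠ 0).card : ℝ) ≤ K

/-- colourability from the supports -/
def Col (H : SimpleGraph V) (p : V → V → C → ℝ) : Prop :=
  ∃ γ : Sym2 V → C, (∀ x y, H.Adj x y → p x y (γ s(x, y)) ≠ 0) ∧
    ∀ x y z, y ≠ z → H.Adj x y → H.Adj x z → γ s(x, y) ≠ γ s(x, z)

variable {H : SimpleGraph V} {p : V → V → C → ℝ} {D K P w : ℝ}

lemma St.sum_le (h : St H p D K P w) (x y : V) : ∑ c, p x y c ≤ 1 := by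
  by_cases ha : H.Adj x y
  · exact (h.sum x y ha).le
  · simp [h.zero x y _ ha]

lemma final [Nonempty C] (h : St H p D K P w) (hw : w ≤ 1 / 32) : Col H p := by
  classical
  obtain ⟨c0⟩ := ‹Nonempty C›
  let pl : Sym2 V → C → ℝ := Sym2.lift ⟨p, fun x y => funext fun c => h.symm x y c⟩
  have hpl : ∀ x y, pl s(x, y) = p x y := fun x y => rfl
  let μ : Sym2 V → C → ℝ := fun e c => if e ∈ H.edgeSet then pl e c else if c = c0 then 1 else 0
  have hμ : ∀ x y, H.Adj x y → ∀ c, μ s(x, y) c = p x y c := fun x y hxy c => by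
    simp only [μ, SimpleGraph.mem_edgeSet, hxy, if_true, hpl]
  have hpm : IsPM μ := by
    constructor
    · intro e c
      induction e with | _ x y =>
      by_cases hxy : H.Adj x y
      · rw [hμ x y hxy]; exact h.nonneg x y c
      · simp only [μ, SimpleGraph.mem_edgeSet, hxy, if_false]; split_ifs <;> norm_num
    · intro e
      induction e with | _ x y =>
      by_cases hxy : H.Adj x y
      · simp_rw [hμ x y hxy]; exact h.sum x y hxy
      · simp only [μ, SimpleGraph.mem_edgeSet, hxy, if_false]; simp
  let A : V × V × V → (Sym2 V → C) → Prop := fun j ω =>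
    j.2.1 ≠ j.2.2 ∧ H.Adj j.1 j.2.1 ∧ H.Adj j.1 j.2.2 ∧ ω s(j.1, j.2.1) = ω s(j.1, j.2.2)
  let S : V × V × V → Set (Sym2 V) := fun j => {s(j.1, j.2.1), s(j.1, j.2.2)}
  let r : V × V × V → ℝ := fun j => ∑ c, p j.1 j.2.1 c * p j.1 j.2.2 c
  have hr0 : ∀ j, 0 ≤ r j := fun j =>
    Finset.sum_nonneg fun c _ => mul_nonneg (h.nonneg _ _ _) (h.nonneg _ _ _)
  have hPr : ∀ j, Pr μ (A j) ≤ r j := by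
    rintro ⟨x, y, z⟩
    by_cases hc : y ≠ z ∧ H.Adj x y ∧ H.Adj x z
    · obtain ⟨hyz, hxy, hxz⟩ := hc
      have hne : s(x, y) ≠ s(x, z) := fun e => hyz (Sym2.congr_right.mp e)
      have e1 : Pr μ (A (x, y, z)) ≤ Ex μ (fun ω => ∑ c,
          (if ω s(x, y) = c then (1 : ℝ) else 0) * (if ω s(x, z) = c then (1 : ℝ) else 0)) := by
        refine Ex_mono hpm fun ω => ?_
        by_cases hA : A (x, y, z) ω
        · have : ω s(x, y) = ω s(x, z) := hA.2.2.2
          simp [hA, this]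
        · simp only [hA, if_false]
          exact Finset.sum_nonneg fun c _ => by split_ifs <;> norm_num
      refine e1.trans (le_of_eq ?_)
      rw [Ex_sum]
      refine Finset.sum_congr rfl fun c _ => ?_
      rw [Ex_mul hpm (S := {s(x, y)}) (T := {s(x, z)})
        (F := fun ω => if ω s(x, y) = c then (1 : ℝ) else 0)
        (G := fun ω => if ω s(x, z) = c then (1 : ℝ) else 0)]
      · rw [Ex_coord hpm s(x, y) (fun a => if a = c then (1 : ℝ) else 0),
          Ex_coord hpm s(x, z) (fun a => if a = c then (1 : ℝ) else 0)]
        simp [hμ x y hxy, hμ x z hxz]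
      · intro a b hab; simp only [hab _ (Set.mem_singleton _)]
      · intro a b hab; simp only [hab _ (Set.mem_singleton _)]
      · simpa using hne
    · have : ∀ ω, ¬ A (x, y, z) ω := fun ω hA => hc ⟨hA.1, hA.2.1, hA.2.2.1⟩
      simp only [Pr, this, if_false]
      rw [Ex_const hpm]; exact hr0 _
  have hrz : ∀ a b, ∑ z, r (a, b, z) ≤ w := by
    intro a b
    have hw0 : ∀ c, 0 ≤ ∑ z, p a z c := fun c => Finset.sum_nonneg fun z _ => h.nonneg a z c
    simp only [r]
    rw [Finset.sum_comm]
    calc ∑ c, ∑ z, p a b c * p a z c = ∑ c, p a b c * ∑ z, p a z c := by simp_rw [Finset.mul_sum]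
      _ ≤ ∑ c, p a b c * w := Finset.sum_le_sum fun c _ =>
          mul_le_mul_of_nonneg_left (h.leW a c) (h.nonneg a b c)
      _ = (∑ c, p a b c) * w := by rw [Finset.sum_mul]
      _ ≤ 1 * w := mul_le_mul_of_nonneg_right (h.sum_le a b) ((hw0 c0).trans (h.leW a c0))
      _ = w := one_mul w
  have hrsymm : ∀ x y z, r (x, y, z) = r (x, z, y) := fun x y z =>
    Finset.sum_congr rfl fun c _ => mul_comm _ _
  have hR : ∀ a b, ∑ j ∈ univ.filter (fun j => s(a, b) ∈ S j), r j ≤ 4 * w := by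
    intro a b
    have hle : ∑ j ∈ univ.filter (fun j => s(a, b) ∈ S j), r j ≤
        ∑ j : V × V × V, (((if j.1 = a ∧ j.2.1 = b then r j else 0) + (if j.1 = b ∧ j.2.1 = a then r j else 0))
         + ((if j.1 = a ∧ j.2.2 = b then r j else 0) + (if j.1 = b ∧ j.2.2 = a then r j else 0))) := by
      rw [Finset.sum_filter]
      refine Finset.sum_le_sum ?_
      rintro ⟨x, y, z⟩ _
      have h0 := hr0 (x, y, z)
      have hi : ∀ (q : Prop) [Decidable q], 0 ≤ if q then r (x, y, z) else 0 := fun q _ => by split_ifs <;> simp [h0]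
      show (if s(a, b) ∈ S (x, y, z) then r (x, y, z) else 0) ≤ ((if x = a ∧ y = b then r (x, y, z) else 0) + (if x = b ∧ y = a then r (x, y, z) else 0))
         + ((if x = a ∧ z = b then r (x, y, z) else 0) + (if x = b ∧ z = a then r (x, y, z) else 0))
      by_cases hs : s(a, b) ∈ S (x, y, z)
      · rw [if_pos hs]
        simp only [S, Set.mem_insert_iff, Set.mem_singleton_iff, Sym2.eq_iff] at hs
        have h1 := hi (x = a ∧ y = b)
        have h2 := hi (x = b ∧ y = a)
        have h3 := hi (x = a ∧ z = b)
        have h4 := hi (x = b ∧ z = a)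
        rcases hs with (⟨rfl, rfl⟩ | ⟨rfl, rfl⟩) | (⟨rfl, rfl⟩ | ⟨rfl, rfl⟩)
        · rw [if_pos (⟨rfl, rfl⟩ : a = a ∧ b = b)]; linarith
        · rw [if_pos (⟨rfl, rfl⟩ : b = b ∧ a = a)]; linarith
        · rw [if_pos (⟨rfl, rfl⟩ : a = a ∧ b = b)]; linarith
        · rw [if_pos (⟨rfl, rfl⟩ : b = b ∧ a = a)]; linarith
      · rw [if_neg hs]
        have h1 := hi (x = a ∧ y = b)
        have h2 := hi (x = b ∧ y = a)
        have h3 := hi (x = a ∧ z = b)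
        have h4 := hi (x = b ∧ z = a)
        linarith
    refine hle.trans ?_
    have f1 : ∀ a b, ∑ j : V × V × V, (if j.1 = a ∧ j.2.1 = b then r j else 0) = ∑ z, r (a, b, z) := by
      intro a b
      simp only [Fintype.sum_prod_type, ite_and, Finset.sum_ite_eq', Finset.sum_ite_irrel, Finset.sum_const_zero]
      rw [Finset.sum_comm]; simp
    have f2 : ∀ a b, ∑ j : V × V × V, (if j.1 = a ∧ j.2.2 = b then r j else 0) = ∑ z, r (a, z, b) := by
      intro a b
      simp only [Fintype.sum_prod_type, ite_and, Finset.sum_ite_eq', Finset.sum_ite_irrel, Finset.sum_const_zero]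
      simp
    simp only [Finset.sum_add_distrib]
    rw [f1, f1, f2, f2]
    simp_rw [fun z => hrsymm a z b, fun z => hrsymm b z a]
    linarith [hrz a b, hrz b a]
  obtain ⟨ω, hω, hgood⟩ := LLL hpm A S (fun i => univ.filter fun j => ¬ Disjoint (S i) (S j))
    (by
      rintro ⟨x, y, z⟩ f g hfg
      have e1 := hfg s(x, y) (by simp [S])
      have e2 := hfg s(x, z) (by simp [S])
      simp only [A, e1, e2])
    (by intro i j hj; simpa using hj)
    (by
      rintro ⟨x, y, z⟩
      calc _ ≤ ∑ j ∈ univ.filter (fun j => ¬ Disjoint (S (x, y, z)) (S j)), r j :=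
            Finset.sum_le_sum fun j _ => hPr j
        _ ≤ ∑ j ∈ (univ.filter (fun j => s(x, y) ∈ S j)) ∪ (univ.filter (fun j => s(x, z) ∈ S j)), r j := by
            refine Finset.sum_le_sum_of_subset_of_nonneg ?_ fun j _ _ => hr0 j
            intro j hj
            simp only [mem_filter, mem_univ, true_and, mem_union] at hj ⊢
            rw [Set.not_disjoint_iff] at hj
            obtain ⟨e, he, he'⟩ := hj
            rcases he with rfl | he
            · exact Or.inl he'
            · rw [Set.mem_singleton_iff] at he; subst he; exact Or.inr he'
        _ ≤ _ := by
            have := Finset.sum_union_inter (s₁ := univ.filter (fun j => s(x, y) ∈ S j))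
              (s₂ := univ.filter (fun j => s(x, z) ∈ S j)) (f := r)
            have h0 : 0 ≤ ∑ j ∈ (univ.filter (fun j => s(x, y) ∈ S j)) ∩ (univ.filter (fun j => s(x, z) ∈ S j)), r j :=
              Finset.sum_nonneg fun j _ => hr0 j
            linarith [hR x y, hR x z])
    (by
      rintro ⟨x, y, z⟩
      have := Finset.single_le_sum (f := fun z => r (x, y, z)) (fun z _ => hr0 _) (mem_univ z)
      have := hPr (x, y, z)
      linarith [hrz x y])
  refine ⟨ω, fun x y hxy h0 => hω ?_, fun x y z hyz hxy hxz e => hgood (x, y, z) ⟨hyz, hxy, hxz, e⟩⟩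
  unfold wt
  exact Finset.prod_eq_zero (mem_univ s(x, y)) (by rw [hμ x y hxy]; exact h0)

end graph
end LK

set_option linter.unusedSectionVars false
set_option linter.unusedDecidableInType false
set_option linter.unusedFintypeInType false
namespace LK
open Finset

section round
variable {V C : Type} [Fintype V] [Fintype C] [DecidableEq V] [DecidableEq C]

/-- activation probabilities -/
noncomputable def bb (p : V → V → C → ℝ) (ε : ℝ) : Sym2 V × C → ℝ :=
  fun i => ε * p (Quot.out i.1).1 (Quot.out i.1).2 i.2

open scoped Classical in
/-- indicator that colour `c` is activated at `vz` -/
noncomputable def X (H : SimpleGraph V) (ω : Sym2 V × C → Bool) (v z : V) (c : C) : ℝ :=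
  if H.Adj v z ∧ ω (s(v, z), c) = true then 1 else 0

/-- indicator that no edge `vz` with `z ≠ w` has `c` activated -/
noncomputable def fr (H : SimpleGraph V) (ω : Sym2 V × C → Bool) (v w : V) (c : C) : ℝ :=
  ∏ z ∈ univ.erase w, (1 - X H ω v z c)

/-- indicator that `c` is the only colour activated at `vw` -/
noncomputable def one (H : SimpleGraph V) (ω : Sym2 V × C → Bool) (v w : V) (c : C) : ℝ :=
  X H ω v w c * ∏ c' ∈ univ.erase c, (1 - X H ω v w c')

noncomputable def qv (p : V → V → C → ℝ) (ε : ℝ) (v w : V) (c : C) : ℝ :=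
  ∏ z ∈ univ.erase w, (1 - ε * p v z c)

noncomputable def aa (p : V → V → C → ℝ) (ε : ℝ) (v w : V) (c : C) : ℝ :=
  p v w c / (qv p ε v w c * qv p ε w v c)

variable {H : SimpleGraph V} {p : V → V → C → ℝ} {D K P W ε : ℝ}

lemma X_01 (ω : Sym2 V × C → Bool) (v z : V) (c : C) : X H ω v z c = 0 ∨ X H ω v z c = 1 := by
  unfold X; split_ifs <;> simp

lemma X_symm (ω : Sym2 V × C → Bool) (v z : V) (c : C) : X H ω v z c = X H ω z v c := by
  unfold X; rw [Sym2.eq_swap, H.adj_comm]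

lemma X_nonneg (ω : Sym2 V × C → Bool) (v z : V) (c : C) : 0 ≤ X H ω v z c := by
  rcases X_01 (H := H) ω v z c with h | h <;> rw [h] <;> norm_num

lemma X_le (ω : Sym2 V × C → Bool) (v z : V) (c : C) : X H ω v z c ≤ 1 := by
  rcases X_01 (H := H) ω v z c with h | h <;> rw [h] <;> norm_num

lemma prod01 {κ : Type*} (s : Finset κ) (f : κ → ℝ) (hf : ∀ k, f k = 0 ∨ f k = 1) :
    ∏ k ∈ s, (1 - f k) = 0 ∨ ∏ k ∈ s, (1 - f k) = 1 := by
  by_cases h : ∃ k ∈ s, f k = 1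
  · obtain ⟨k, hk, h1⟩ := h
    left; exact Finset.prod_eq_zero hk (by rw [h1]; norm_num)
  · push Not at h
    right; refine Finset.prod_eq_one fun k hk => ?_
    rcases hf k with h0 | h1
    · rw [h0]; norm_num
    · exact absurd h1 (h k hk)

lemma fr_01 (ω : Sym2 V × C → Bool) (v w : V) (c : C) : fr H ω v w c = 0 ∨ fr H ω v w c = 1 :=
  prod01 _ _ fun z => X_01 ω v z c

lemma fr_nonneg (ω : Sym2 V × C → Bool) (v z : V) (c : C) : 0 ≤ fr H ω v z c := by
  rcases fr_01 (H := H) ω v z c with h | h <;> rw [h] <;> norm_num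

lemma fr_le (ω : Sym2 V × C → Bool) (v z : V) (c : C) : fr H ω v z c ≤ 1 := by
  rcases fr_01 (H := H) ω v z c with h | h <;> rw [h] <;> norm_num

lemma fr_one {ω : Sym2 V × C → Bool} {v w : V} {c : C} (h : fr H ω v w c = 1) {z : V} (hz : z ≠ w) :
    X H ω v z c = 0 := by
  rcases X_01 (H := H) ω v z c with h0 | h1
  · exact h0
  · exfalso
    have : fr H ω v w c = 0 := Finset.prod_eq_zero (mem_erase.2 ⟨hz, mem_univ z⟩) (by rw [h1]; norm_num)
    rw [this] at h; norm_num at h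

lemma fr_zero {ω : Sym2 V × C → Bool} {v w : V} {c : C} (h : fr H ω v w c ≠ 1) :
    ∃ z, z ≠ w ∧ X H ω v z c = 1 := by
  by_contra hc
  push Not at hc
  refine h (Finset.prod_eq_one fun z hz => ?_)
  rcases X_01 (H := H) ω v z c with h0 | h1
  · rw [h0]; norm_num
  · exact absurd h1 (hc z (mem_erase.1 hz).1)

lemma one_01 (ω : Sym2 V × C → Bool) (v w : V) (c : C) : one H ω v w c = 0 ∨ one H ω v w c = 1 := by
  unfold one
  rcases X_01 (H := H) ω v w c with h | h <;>
  rcases prod01 (univ.erase c) (fun c' => X H ω v w c') (fun c' => X_01 ω v w c') with h' | h' <;>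
  simp only [h, h'] <;> norm_num

lemma one_nonneg (ω : Sym2 V × C → Bool) (v z : V) (c : C) : 0 ≤ one H ω v z c := by
  rcases one_01 (H := H) ω v z c with h | h <;> rw [h] <;> norm_num

lemma one_X {ω : Sym2 V × C → Bool} {v w : V} {c : C} (h : one H ω v w c = 1) :
    X H ω v w c = 1 := by
  rcases X_01 (H := H) ω v w c with h0 | h0
  · simp [one, h0] at h
  · exact h0

lemma one_X' {ω : Sym2 V × C → Bool} {v w : V} {c c' : C} (h : one H ω v w c = 1) (hc : c' ≠ c) :
    X H ω v w c' = 0 := by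
  rcases X_01 (H := H) ω v w c' with h0 | h0
  · exact h0
  · exfalso
    have : one H ω v w c = 0 := by
      unfold one
      rw [Finset.prod_eq_zero (mem_erase.2 ⟨hc, mem_univ c'⟩) (by rw [h0]; norm_num), mul_zero]
    rw [this] at h; norm_num at h

lemma one_sum (ω : Sym2 V × C → Bool) (v w : V) (g : C → ℝ) :
    (∑ c, one H ω v w c * g c = 0 ∧ ∀ c, one H ω v w c = 0) ∨ ∃ c, one H ω v w c = 1 ∧ ∑ c, one H ω v w c * g c = g c := by
  by_cases h : ∃ c, one H ω v w c = 1
  · right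
    obtain ⟨c, hc⟩ := h
    refine ⟨c, hc, ?_⟩
    rw [Finset.sum_eq_single c]
    · rw [hc, one_mul]
    · intro c' _ hcc
      have : one H ω v w c' = 0 := by unfold one; rw [one_X' hc hcc, zero_mul]
      rw [this, zero_mul]
    · simp
  · left
    push Not at h
    have h0 : ∀ c, one H ω v w c = 0 := fun c => (one_01 ω v w c).resolve_right (h c)
    exact ⟨by simp [h0], h0⟩

lemma X_congr {ω ω' : Sym2 V × C → Bool} {v z : V} {c : C}
    (h : H.Adj v z → ω (s(v, z), c) = ω' (s(v, z), c)) : X H ω v z c = X H ω' v z c := by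
  unfold X
  by_cases ha : H.Adj v z
  · rw [h ha]
  · simp [ha]

lemma fr_congr {ω ω' : Sym2 V × C → Bool} {v w : V} {c : C}
    (h : ∀ z, z ≠ w → H.Adj v z → ω (s(v, z), c) = ω' (s(v, z), c)) : fr H ω v w c = fr H ω' v w c :=
  Finset.prod_congr rfl fun z hz => by rw [X_congr (h z (mem_erase.1 hz).1)]

lemma one_congr {ω ω' : Sym2 V × C → Bool} {v w : V} {c : C}
    (h : ∀ c', H.Adj v w → ω (s(v, w), c') = ω' (s(v, w), c')) : one H ω v w c = one H ω' v w c := by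
  unfold one
  rw [X_congr (h c)]
  congr 1
  exact Finset.prod_congr rfl fun c' _ => by rw [X_congr (h c')]

lemma prod_lb {κ : Type*} (s : Finset κ) (f : κ → ℝ) (h0 : ∀ k ∈ s, 0 ≤ f k) (h1 : ∀ k ∈ s, f k ≤ 1) :
    1 - ∑ k ∈ s, f k ≤ ∏ k ∈ s, (1 - f k) := by
  classical
  induction s using Finset.induction_on with
  | empty => simp
  | insert a s ha ih =>
    rw [Finset.sum_insert ha, Finset.prod_insert ha]
    have ih' := ih (fun k hk => h0 k (mem_insert_of_mem hk)) (fun k hk => h1 k (mem_insert_of_mem hk))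
    have a0 := h0 a (mem_insert_self a s)
    have a1 := h1 a (mem_insert_self a s)
    have s0 : 0 ≤ ∑ k ∈ s, f k := Finset.sum_nonneg fun k hk => h0 k (mem_insert_of_mem hk)
    nlinarith [mul_le_mul_of_nonneg_left ih' (sub_nonneg.2 a1)]

section

lemma bb_mk (h : St H p D K P W) (v w : V) (c : C) : bb p ε (s(v, w), c) = ε * p v w c := by
  unfold bb
  have : Quot.mk _ (Quot.out s(v, w)) = s(v, w) := Quot.out_eq _
  have h2 : s((Quot.out s(v, w)).1, (Quot.out s(v, w)).2) = s(v, w) := this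
  rcases Sym2.eq_iff.1 h2 with ⟨h3, h4⟩ | ⟨h3, h4⟩
  · simp only [h3, h4]
  · simp only [h3, h4]; rw [h.symm]

lemma p_le_one (h : St H p D K P W) (v w : V) (c : C) : p v w c ≤ 1 :=
  (Finset.single_le_sum (f := fun c => p v w c) (fun c _ => h.nonneg v w c) (mem_univ c)).trans (h.sum_le v w)

lemma bb0 (h : St H p D K P W) (hε : 0 ≤ ε) (i : Sym2 V × C) : 0 ≤ bb p ε i := mul_nonneg hε (h.nonneg _ _ _)

lemma bb1 (h : St H p D K P W) (hε : 0 ≤ ε) (hε1 : ε ≤ 1) (i : Sym2 V × C) : bb p ε i ≤ 1 := by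
  unfold bb
  have := p_le_one h (Quot.out i.1).1 (Quot.out i.1).2 i.2
  have := h.nonneg (Quot.out i.1).1 (Quot.out i.1).2 i.2
  nlinarith

lemma bpm (h : St H p D K P W) (hε : 0 ≤ ε) (hε1 : ε ≤ 1) : IsPM (bm (bb p ε)) := bm_pm (bb0 h hε) (bb1 h hε hε1)

lemma Ex_gX (h : St H p D K P W) (hε : 0 ≤ ε) (hε1 : ε ≤ 1) (v w : V) (c : C) (g : ℝ → ℝ) :
    Ex (bm (bb p ε)) (fun ω => g (X H ω v w c)) = ε * p v w c * g 1 + (1 - ε * p v w c) * g 0 := by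
  classical
  by_cases ha : H.Adj v w
  · have := Ex_coord (bpm h hε hε1) (s(v, w), c) (fun a => g (if a = true then 1 else 0))
    simp only [X, ha, true_and]
    rw [this, Fintype.sum_bool]
    simp [bm, bb_mk h]
  · simp only [X, ha, false_and, if_false, h.zero v w c ha]
    rw [Ex_const (bpm h hε hε1)]; ring

end
end round
end LK

set_option linter.unusedSectionVars false
set_option linter.unusedDecidableInType false
set_option linter.unusedFintypeInType false
namespace LK
open Finset

section round
variable {V C : Type} [Fintype V] [Fintype C] [DecidableEq V] [DecidableEq C]
variable {H : SimpleGraph V} {p : V → V → C → ℝ} {D K P W ε : ℝ}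

/-- coordinates around `v` except `vw`, colour `c` -/
def cs (v w : V) (c : C) : Set (Sym2 V × C) := {i | ∃ z, z ≠ w ∧ i = (s(v, z), c)}

lemma fr_dep (v w : V) (c : C) : DependsOn (fun ω => fr H ω v w c) (cs v w c) :=
  fun _ _ hxy => fr_congr fun z hz _ => hxy _ ⟨z, hz, rfl⟩

lemma X_dep (v w : V) (c : C) : DependsOn (fun ω => X H ω v w c) {(s(v, w), c)} :=
  fun _ _ hxy => X_congr fun _ => hxy _ rfl

lemma one_dep (v w : V) (c : C) : DependsOn (fun ω => one H ω v w c) {i | i.1 = s(v, w)} :=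
  fun _ _ hxy => one_congr fun _ _ => hxy _ rfl

lemma cs_disj {v w : V} (hvw : v ≠ w) (c c' : C) : Disjoint (cs v w c) (cs w v c') := by
  rw [Set.disjoint_left]
  rintro i ⟨z, hz, rfl⟩ ⟨z', hz', e⟩
  simp only [Prod.mk.injEq] at e
  rcases Sym2.eq_iff.1 e.1 with ⟨h1, _⟩ | ⟨_, h2⟩
  · exact hvw h1
  · exact hz h2

lemma cs_disj' {v w : V} {c c' : C} (hc : c ≠ c') : Disjoint (cs v w c) (cs v w c') := by
  rw [Set.disjoint_left]
  rintro i ⟨z, hz, rfl⟩ ⟨z', hz', e⟩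
  simp only [Prod.mk.injEq] at e
  exact hc e.2

lemma cs_disj_edge (v w : V) (c : C) : Disjoint ({i | i.1 = s(w, v)} : Set (Sym2 V × C)) (cs v w c) := by
  rw [Set.disjoint_left]
  rintro i hi ⟨z, hz, rfl⟩
  simp only [Set.mem_ofPred_eq] at hi
  rw [Sym2.eq_swap (a := w)] at hi
  exact hz (Sym2.congr_right.1 hi)

section

lemma bpm' (h : St H p D K P W) (hε : 0 ≤ ε) (hε8 : ε ≤ 1 / 8) (hW : W ≤ 1) : IsPM (bm (bb p ε)) := bpm h hε (by linarith)

lemma ep0 (h : St H p D K P W) (hε : 0 ≤ ε) (hε8 : ε ≤ 1 / 8) (hW : W ≤ 1) (v w : V) (c : C) : 0 ≤ ε * p v w c := mul_nonneg hε (h.nonneg _ _ _)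

lemma ep1 (h : St H p D K P W) (hε : 0 ≤ ε) (hε8 : ε ≤ 1 / 8) (hW : W ≤ 1) (v w : V) (c : C) : ε * p v w c ≤ 1 := by
  have := p_le_one h v w c
  have := h.nonneg v w c
  nlinarith

lemma Ex_fr (h : St H p D K P W) (hε : 0 ≤ ε) (hε8 : ε ≤ 1 / 8) (hW : W ≤ 1) (v w : V) (c : C) : Ex (bm (bb p ε)) (fun ω => fr H ω v w c) = qv p ε v w c := by
  unfold fr qv
  rw [Ex_prod (bpm' h hε hε8 hW) _ (fun z ω => 1 - X H ω v z c) (fun z => {(s(v, z), c)})]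
  · refine Finset.prod_congr rfl fun z _ => ?_
    rw [Ex_gX h hε (by linarith) v z c (fun x => 1 - x)]; ring
  · intro z a b hab; exact congrArg (1 - ·) (X_dep v z c hab)
  · intro z z' _ _ hz
    rw [Set.disjoint_singleton]
    intro e; exact hz (Sym2.congr_right.1 (Prod.mk.inj e).1)

lemma qv_le (h : St H p D K P W) (hε : 0 ≤ ε) (hε8 : ε ≤ 1 / 8) (hW : W ≤ 1) (v w : V) (c : C) : qv p ε v w c ≤ 1 :=
  Finset.prod_le_one (fun z _ => sub_nonneg.2 (ep1 h hε hε8 hW v z c))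
    fun z _ => by linarith [ep0 h hε hε8 hW v z c]

lemma qv_ge (h : St H p D K P W) (hε : 0 ≤ ε) (hε8 : ε ≤ 1 / 8) (hW : W ≤ 1) (v w : V) (c : C) : 1 - ε * W ≤ qv p ε v w c := by
  refine le_trans ?_ (prod_lb _ _ (fun z _ => ep0 h hε hε8 hW v z c) (fun z _ => ep1 h hε hε8 hW v z c))
  have h1 : ∑ z ∈ univ.erase w, ε * p v z c ≤ ∑ z, ε * p v z c :=
    Finset.sum_le_sum_of_subset_of_nonneg (Finset.erase_subset _ _) fun z _ _ => ep0 h hε hε8 hW v z c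
  rw [← Finset.mul_sum] at h1
  have := mul_le_mul_of_nonneg_left (h.leW v c) hε
  rw [← Finset.mul_sum] at h1 ⊢
  linarith

lemma qv_ge' (h : St H p D K P W) (hε : 0 ≤ ε) (hε8 : ε ≤ 1 / 8) (hW : W ≤ 1) (v w : V) (c : C) : 1 - ε ≤ qv p ε v w c := by
  have := qv_ge h hε hε8 hW v w c
  nlinarith

lemma q_ge (h : St H p D K P W) (hε : 0 ≤ ε) (hε8 : ε ≤ 1 / 8) (hW : W ≤ 1) (v w : V) (c : C) : 1 / 2 ≤ qv p ε v w c * qv p ε w v c := by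
  have h1 := qv_ge' h hε hε8 hW v w c
  have h2 := qv_ge' h hε hε8 hW w v c
  nlinarith

lemma q_le (h : St H p D K P W) (hε : 0 ≤ ε) (hε8 : ε ≤ 1 / 8) (hW : W ≤ 1) (v w : V) (c : C) : qv p ε v w c * qv p ε w v c ≤ 1 := by
  have h1 := qv_ge' h hε hε8 hW v w c
  have h2 := qv_ge' h hε hε8 hW w v c
  have h3 := qv_le h hε hε8 hW v w c
  have h4 := qv_le h hε hε8 hW w v c
  nlinarith

lemma aa_nonneg (h : St H p D K P W) (hε : 0 ≤ ε) (hε8 : ε ≤ 1 / 8) (hW : W ≤ 1) (v w : V) (c : C) : 0 ≤ aa p ε v w c :=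
  div_nonneg (h.nonneg _ _ _) (by linarith [q_ge h hε hε8 hW v w c])

lemma aa_le_p (h : St H p D K P W) (hε : 0 ≤ ε) (hε8 : ε ≤ 1 / 8) (hW : W ≤ 1) (v w : V) (c : C) : aa p ε v w c ≤ 2 * p v w c := by
  have h1 := q_ge h hε hε8 hW v w c
  unfold aa
  rw [div_le_iff₀ (by linarith)]
  nlinarith [h.nonneg v w c]

lemma aa_le (h : St H p D K P W) (hε : 0 ≤ ε) (hε8 : ε ≤ 1 / 8) (hW : W ≤ 1) (v w : V) (c : C) : aa p ε v w c ≤ 2 * P := by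
  linarith [aa_le_p h hε hε8 hW v w c, h.leP v w c]

lemma aa_sum (h : St H p D K P W) (hε : 0 ≤ ε) (hε8 : ε ≤ 1 / 8) (hW : W ≤ 1) (v : V) (c : C) : ∑ w, aa p ε v w c ≤ 2 * W := by
  have : ∑ w, aa p ε v w c ≤ ∑ w, 2 * p v w c := Finset.sum_le_sum fun w _ => aa_le_p h hε hε8 hW v w c
  rw [← Finset.mul_sum] at this
  linarith [h.leW v c]

lemma aa_symm (h : St H p D K P W) (hε : 0 ≤ ε) (hε8 : ε ≤ 1 / 8) (hW : W ≤ 1) (v w : V) (c : C) : aa p ε v w c = aa p ε w v c := by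
  unfold aa; rw [h.symm, mul_comm]

lemma W_nonneg (h : St H p D K P W) (hε : 0 ≤ ε) (hε8 : ε ≤ 1 / 8) (hW : W ≤ 1) (v : V) (c : C) : 0 ≤ W := (Finset.sum_nonneg fun y _ => h.nonneg v y c).trans (h.leW v c)

/-- the normaliser -/
noncomputable def Zf (H : SimpleGraph V) (p : V → V → C → ℝ) (ε : ℝ) (ω : Sym2 V × C → Bool) (v w : V) : ℝ :=
  ∑ c, aa p ε v w c * (fr H ω v w c * fr H ω w v c)

lemma Ex_Z (h : St H p D K P W) (hε : 0 ≤ ε) (hε8 : ε ≤ 1 / 8) (hW : W ≤ 1) {v w : V} (ha : H.Adj v w) : Ex (bm (bb p ε)) (fun ω => Zf H p ε ω v w) = 1 := by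
  unfold Zf
  rw [Ex_sum, ← h.sum v w ha]
  refine Finset.sum_congr rfl fun c _ => ?_
  rw [Ex_mul_left, Ex_mul (bpm' h hε hε8 hW) (fr_dep v w c) (fr_dep w v c) (cs_disj ha.ne c c),
    Ex_fr h hε hε8 hW, Ex_fr h hε hε8 hW]
  have h1 := q_ge h hε hε8 hW v w c
  unfold aa
  exact div_mul_cancel₀ _ (by linarith)

lemma Ex_one (h : St H p D K P W) (hε : 0 ≤ ε) (hε8 : ε ≤ 1 / 8) (hW : W ≤ 1) {v w : V} (ha : H.Adj v w) (c : C) :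
    ε * p v w c * (1 - ε) ≤ Ex (bm (bb p ε)) (fun ω => one H ω v w c) := by
  unfold one
  rw [Ex_mul (bpm' h hε hε8 hW) (X_dep v w c) (T := {i | i.1 = s(v, w) ∧ i.2 ≠ c}),
    Ex_prod (bpm' h hε hε8 hW) _ (fun c' ω => 1 - X H ω v w c') (fun c' => {(s(v, w), c')})]
  · rw [Ex_gX h hε (by linarith) v w c (fun x => x)]
    simp_rw [fun c' => Ex_gX h hε (by linarith) v w c' (fun x => 1 - x)]
    have h1 : 1 - ε ≤ ∏ c' ∈ univ.erase c, (1 - ε * p v w c') := by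
      refine le_trans ?_ (prod_lb _ _ (fun z _ => ep0 h hε hε8 hW v w z) (fun z _ => ep1 h hε hε8 hW v w z))
      have h1 : ∑ z ∈ univ.erase c, ε * p v w z ≤ ∑ z, ε * p v w z :=
        Finset.sum_le_sum_of_subset_of_nonneg (Finset.erase_subset _ _) fun z _ _ => ep0 h hε hε8 hW v w z
      rw [← Finset.mul_sum, ← Finset.mul_sum, h.sum v w ha] at h1
      rw [← Finset.mul_sum]
      linarith
    have h2 := mul_le_mul_of_nonneg_left h1 (ep0 h hε hε8 hW v w c)
    refine h2.trans (le_of_eq ?_)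
    simp
  · intro z a b hab; exact congrArg (1 - ·) (X_dep v w z hab)
  · intro z z' _ _ hz
    rw [Set.disjoint_singleton]
    intro e; exact hz (Prod.mk.inj e).2
  · intro a b hab
    refine Finset.prod_congr rfl fun c' hc' => ?_
    rw [X_congr fun _ => hab _ ⟨rfl, (mem_erase.1 hc').1⟩]
  · rw [Set.disjoint_singleton_left]; simp

/-- the main part of the weight -/
noncomputable def gg (H : SimpleGraph V) (ω : Sym2 V × C → Bool) (v w : V) (c : C) : ℝ :=
  fr H ω w v c * (1 - ∑ c', one H ω v w c' * fr H ω w v c')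

lemma Ex_gg (h : St H p D K P W) (hε : 0 ≤ ε) (hε8 : ε ≤ 1 / 8) (hW : W ≤ 1) {v w : V} (ha : H.Adj v w) (c : C) :
    Ex (bm (bb p ε)) (fun ω => gg H ω v w c) ≤ qv p ε w v c * (1 - ε * (1 - ε) ^ 2) := by
  have e1 : ∀ ω, gg H ω v w c = fr H ω w v c - ∑ c', one H ω v w c' * (fr H ω w v c * fr H ω w v c') := by
    intro ω; unfold gg; rw [mul_sub, mul_one, Finset.mul_sum]
    congr 1; exact Finset.sum_congr rfl fun c' _ => by ring
  simp_rw [e1]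
  rw [Ex_sub, Ex_sum, Ex_fr h hε hε8 hW]
  have q0 : 0 ≤ qv p ε w v c := by linarith [qv_ge' h hε hε8 hW w v c]
  have key : ∀ c', (ε * p v w c' * (1 - ε)) * (qv p ε w v c * (1 - ε)) ≤
      Ex (bm (bb p ε)) (fun ω => one H ω v w c' * (fr H ω w v c * fr H ω w v c')) := by
    intro c'
    rw [Ex_mul (bpm' h hε hε8 hW) (one_dep v w c') (T := cs w v c ∪ cs w v c')]
    · have h1 := Ex_one h hε hε8 hW ha c'
      have h2 : qv p ε w v c * (1 - ε) ≤ Ex (bm (bb p ε)) (fun ω => fr H ω w v c * fr H ω w v c') := by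
        by_cases hc : c = c'
        · subst hc
          have : ∀ ω, fr H ω w v c * fr H ω w v c = fr H ω w v c := fun ω => by
            rcases fr_01 (H := H) ω w v c with h | h <;> simp [h]
          simp_rw [this]
          rw [Ex_fr h hε hε8 hW]
          nlinarith
        · rw [Ex_mul (bpm' h hε hε8 hW) (fr_dep w v c) (fr_dep w v c') (cs_disj' hc),
            Ex_fr h hε hε8 hW, Ex_fr h hε hε8 hW]
          exact mul_le_mul_of_nonneg_left (qv_ge' h hε hε8 hW w v c') q0
      have h3 : 0 ≤ qv p ε w v c * (1 - ε) := mul_nonneg q0 (by linarith)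
      refine mul_le_mul h1 h2 h3 (Ex_nonneg (bpm' h hε hε8 hW) fun ω => one_nonneg ω v w c')
    · intro a b hab
      exact congrArg₂ (· * ·) (fr_dep w v c (fun i hi => hab i (Or.inl hi)))
        (fr_dep w v c' (fun i hi => hab i (Or.inr hi)))
    · rw [Set.disjoint_union_right]
      exact ⟨cs_disj_edge w v c, cs_disj_edge w v c'⟩
  have h1 := Finset.sum_le_sum fun c' (_ : c' ∈ univ) => key c'
  have h2 : ∑ c', (ε * p v w c' * (1 - ε)) * (qv p ε w v c * (1 - ε)) = ε * (1 - ε) * (qv p ε w v c * (1 - ε)) := by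
    rw [← Finset.sum_mul, ← Finset.sum_mul, ← Finset.mul_sum, h.sum v w ha, mul_one]
  rw [h2] at h1
  nlinarith

/-- main weight at `v` -/
noncomputable def U1 (H : SimpleGraph V) (p : V → V → C → ℝ) (ε : ℝ) (ω : Sym2 V × C → Bool) (v : V) (c : C) : ℝ :=
  ∑ w, aa p ε v w c * gg H ω v w c

lemma Ex_U1 (h : St H p D K P W) (hε : 0 ≤ ε) (hε8 : ε ≤ 1 / 8) (hW : W ≤ 1) (v : V) (c : C) : Ex (bm (bb p ε)) (fun ω => U1 H p ε ω v c) ≤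
    W * (1 - ε * (1 - ε) ^ 2) / (1 - ε * W) := by
  unfold U1
  rw [Ex_sum]
  have hW0 := W_nonneg h hε hε8 hW v c
  have hd : 0 < 1 - ε * W := by nlinarith
  have h1e : 0 ≤ 1 - ε * (1 - ε) ^ 2 := by nlinarith
  have key : ∀ w, Ex (bm (bb p ε)) (fun ω => aa p ε v w c * gg H ω v w c) ≤
      p v w c * ((1 - ε * (1 - ε) ^ 2) / (1 - ε * W)) := by
    intro w
    rw [Ex_mul_left]
    by_cases ha : H.Adj v w
    · have h1 := mul_le_mul_of_nonneg_left (Ex_gg h hε hε8 hW ha c) (aa_nonneg h hε hε8 hW v w c)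
      refine h1.trans ?_
      have q1 := qv_ge h hε hε8 hW v w c
      have q2 := qv_ge' h hε hε8 hW w v c
      have e : aa p ε v w c * (qv p ε w v c * (1 - ε * (1 - ε) ^ 2)) =
        p v w c * ((1 - ε * (1 - ε) ^ 2) / qv p ε v w c) := by
        unfold aa
        have : qv p ε v w c ≠ 0 := by linarith
        have : qv p ε w v c ≠ 0 := by linarith
        field_simp
      rw [e]
      exact mul_le_mul_of_nonneg_left (div_le_div_of_nonneg_left h1e hd q1) (h.nonneg _ _ _)
    · unfold aa; rw [h.zero v w c ha]; simp
  refine (Finset.sum_le_sum fun w _ => key w).trans ?_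
  rw [← Finset.sum_mul, mul_div_assoc]
  exact mul_le_mul_of_nonneg_right (h.leW v c) (div_nonneg h1e hd.le)

end
end round
end LK

set_option linter.unusedSectionVars false
set_option linter.unusedDecidableInType false
set_option linter.unusedFintypeInType false
namespace LK
open Finset

section round
variable {V C : Type} [Fintype V] [Fintype C] [DecidableEq V] [DecidableEq C]
variable {H : SimpleGraph V} {p : V → V → C → ℝ} {D K P W ε : ℝ}

lemma sum_inc (v : V) (g : Sym2 V → ℝ) : ∑ f, (if v ∈ f then g f else 0) = ∑ z, g s(v, z) := by
  rw [← Finset.sum_filter]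
  symm
  refine Finset.sum_bij (fun z _ => s(v, z)) ?_ ?_ ?_ ?_
  · intro z _; simp
  · intro a _ b _ e; exact Sym2.congr_right.1 e
  · intro f hf
    rw [mem_filter] at hf
    obtain ⟨z, rfl⟩ := Sym2.mem_iff_exists.1 hf.2
    exact ⟨z, mem_univ _, rfl⟩
  · intro z _; rfl

lemma gg_01 (ω : Sym2 V × C → Bool) (v w : V) (c : C) : 0 ≤ gg H ω v w c ∧ gg H ω v w c ≤ 1 := by
  unfold gg
  have h1 := fr_nonneg (H := H) ω w v c
  have h2 := fr_le (H := H) ω w v c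
  rcases one_sum (H := H) ω v w (fun c' => fr H ω w v c') with ⟨h, _⟩ | ⟨c', _, h⟩
  · rw [h]; constructor <;> nlinarith
  · rw [h]
    have h3 := fr_nonneg (H := H) ω w v c'
    have h4 := fr_le (H := H) ω w v c'
    constructor <;> nlinarith

lemma abs_sub01 {a b : ℝ} (h : 0 ≤ a ∧ a ≤ 1) (h' : 0 ≤ b ∧ b ≤ 1) : |a - b| ≤ 1 := by
  rw [abs_le]; constructor <;> linarith [h.1, h.2, h'.1, h'.2]

lemma gg_same_A {ω ω' : Sym2 V × C → Bool} {v w w0 : V} {c c' : C}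
    (hω : ∀ j, j ≠ (s(v, w0), c') → ω j = ω' j) (hw : w ≠ w0) (hwv : w ≠ v) :
    gg H ω v w c = gg H ω' v w c := by
  have h1 : ∀ c, fr H ω w v c = fr H ω' w v c := fun c => fr_congr fun z hz _ => hω _ fun e => by
    rcases Sym2.eq_iff.1 (Prod.mk.inj e).1 with ⟨h1, _⟩ | ⟨h1, _⟩
    · exact hwv h1
    · exact hw h1
  have h2 : ∀ c, one H ω v w c = one H ω' v w c := fun c => one_congr fun c' _ => hω _ fun e =>
    hw (Sym2.congr_right.1 (Prod.mk.inj e).1)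
  unfold gg
  simp_rw [h1, h2]

lemma gg_same_B {ω ω' : Sym2 V × C → Bool} {v w : V} {c c' : C} {f : Sym2 V}
    (hω : ∀ j, j ≠ (f, c') → ω j = ω' j) (hw : w ∉ f) :
    gg H ω v w c = gg H ω' v w c := by
  have h1 : ∀ c, fr H ω w v c = fr H ω' w v c := fun c => fr_congr fun z hz _ => hω _ fun e => by
    apply hw; rw [← (Prod.mk.inj e).1]; simp
  have h2 : ∀ c, one H ω v w c = one H ω' v w c := fun c => one_congr fun c' _ => hω _ fun e => by
    apply hw; rw [← (Prod.mk.inj e).1]; simp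
  unfold gg
  simp_rw [h1, h2]

lemma one_same {ω ω' : Sym2 V × C → Bool} {v w : V} {c c' : C} {f : Sym2 V}
    (hω : ∀ j, j ≠ (f, c') → ω j = ω' j) (hv : v ∉ f) : one H ω v w c = one H ω' v w c :=
  one_congr fun c' _ => hω _ fun e => by
    apply hv; rw [← (Prod.mk.inj e).1]; simp

lemma gg_same_C {ω ω' : Sym2 V × C → Bool} {v w : V} {c c' : C} {f : Sym2 V}
    (hω : ∀ j, j ≠ (f, c') → ω j = ω' j) (hv : v ∉ f) (hc : c' ≠ c) (ho : one H ω v w c' = 0) :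
    gg H ω v w c = gg H ω' v w c := by
  have h1 : ∀ c, c' ≠ c → fr H ω w v c = fr H ω' w v c := fun c hc => fr_congr fun z hz _ => hω _ fun e =>
    hc (Prod.mk.inj e).2.symm
  unfold gg
  rw [h1 c hc]
  congr 2
  refine Finset.sum_congr rfl fun d _ => ?_
  rw [← one_same hω hv]
  by_cases hd : c' = d
  · rw [← hd, ho]; simp
  · rw [h1 d hd]

section

lemma sum_bb (h : St H p D K P W) (hε : 0 ≤ ε) (hε8 : ε ≤ 1 / 8) (hW : W ≤ 1) (v : V) (c : C) : ∑ f : Sym2 V, (if v ∈ f then bb p ε (f, c) else 0) ≤ ε * W := by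
  rw [sum_inc v (fun f => bb p ε (f, c))]
  simp_rw [bb_mk h]
  rw [← Finset.mul_sum]
  exact mul_le_mul_of_nonneg_left (h.leW v c) hε

lemma Z_tail (h : St H p D K P W) (hε : 0 ≤ ε) (hε8 : ε ≤ 1 / 8) (hW : W ≤ 1) (hP : 0 < P) {v w : V} (ha : H.Adj v w) {η : ℝ} (hη : 0 < η) (hη1 : η ≤ 1) :
    Pr (bm (bb p ε)) (fun ω => Zf H p ε ω v w ≤ 1 - η) ≤ Real.exp (-(η ^ 2 / (4 * P))) := by
  have a0 := fun c => aa_nonneg h hε hε8 hW v w c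
  have a1 := fun c => aa_le h hε hε8 hW v w c
  have hkk : ∀ (x : Sym2 V × C → Bool) c, 0 ≤ fr H x v w c * fr H x w v c ∧ fr H x v w c * fr H x w v c ≤ 1 := by
    intro x c
    rcases fr_01 (H := H) x v w c with h1 | h1 <;> rcases fr_01 (H := H) x w v c with h2 | h2 <;>
      rw [h1, h2] <;> norm_num
  let dA : Sym2 V × C → ℝ := fun i => if v ∈ i.1 ∨ w ∈ i.1 then aa p ε v w i.2 else 0
  have hdA0 : ∀ i, 0 ≤ dA i := fun i => by simp only [dA]; split_ifs; exacts [a0 _, le_rfl]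
  have hdA1 : ∀ i, dA i ≤ 2 * P := fun i => by simp only [dA]; split_ifs; exacts [a1 _, by linarith]
  have key := BD2 (bb0 h hε) (bb1 h hε (by linarith)) univ (fun ω => - Zf H p ε ω v w) dA (fun _ _ => 0)
    (by
      rintro ⟨f, c⟩ _ x
      have e : - Zf H p ε (Function.update x (f, c) true) v w - - Zf H p ε (Function.update x (f, c) false) v w
        = ∑ d, aa p ε v w d * (fr H (Function.update x (f, c) false) v w d * fr H (Function.update x (f, c) false) w v d
          - fr H (Function.update x (f, c) true) v w d * fr H (Function.update x (f, c) true) w v d) := by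
        unfold Zf; rw [neg_sub_neg, ← Finset.sum_sub_distrib]
        exact Finset.sum_congr rfl fun d _ => by ring
      simp only [e]
      refine (Finset.abs_sum_le_sum_abs _ _).trans ?_
      have hz : ∀ d, |aa p ε v w d * (fr H (Function.update x (f, c) false) v w d * fr H (Function.update x (f, c) false) w v d
          - fr H (Function.update x (f, c) true) v w d * fr H (Function.update x (f, c) true) w v d)| ≤
          if d = c then dA (f, c) else 0 := by
        intro d
        have hsame : (d ≠ c ∨ ¬ (v ∈ f ∨ w ∈ f)) →
            fr H (Function.update x (f, c) false) v w d * fr H (Function.update x (f, c) false) w v d =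
            fr H (Function.update x (f, c) true) v w d * fr H (Function.update x (f, c) true) w v d := by
          intro hh
          congr 1
          · refine fr_congr fun z _ _ => ?_
            have : (s(v, z), d) ≠ (f, c) := by
              intro e
              rcases hh with hh | hh
              · exact hh (Prod.mk.inj e).2
              · exact hh (Or.inl (by rw [← (Prod.mk.inj e).1]; simp))
            simp [Function.update_of_ne this]
          · refine fr_congr fun z _ _ => ?_
            have : (s(w, z), d) ≠ (f, c) := by
              intro e
              rcases hh with hh | hh
              · exact hh (Prod.mk.inj e).2
              · exact hh (Or.inr (by rw [← (Prod.mk.inj e).1]; simp))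
            simp [Function.update_of_ne this]
        by_cases hd : d = c
        · rw [if_pos hd]
          by_cases hf : v ∈ f ∨ w ∈ f
          · simp only [dA, if_pos hf]
            rw [hd, abs_mul, abs_of_nonneg (a0 c)]
            exact mul_le_of_le_one_right (a0 c) (abs_sub01 (hkk _ _) (hkk _ _))
          · rw [hsame (Or.inr hf)]; simpa using hdA0 _
        · rw [if_neg hd, hsame (Or.inl hd)]; simp
      refine (Finset.sum_le_sum fun d _ => hz d).trans ?_
      simp)
    (by intro i hi; exact absurd (mem_univ i) hi)
    (by intro i a b _; rfl) P 0 (η / (2 * P))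
    (by
      have e1 : ∀ i, bb p ε i * dA i ^ 2 ≤ (aa p ε v w i.2 * (2 * P)) *
          ((if v ∈ i.1 then bb p ε i else 0) + (if w ∈ i.1 then bb p ε i else 0)) := by
        intro i
        have b0 := bb0 h hε i
        have h1 := a0 i.2
        have h2 := a1 i.2
        have h3 : aa p ε v w i.2 ^ 2 ≤ aa p ε v w i.2 * (2 * P) := by nlinarith
        have h4 := mul_le_mul_of_nonneg_left h3 b0
        have h5 : 0 ≤ aa p ε v w i.2 * (2 * P) := by positivity
        have h6 := mul_nonneg h5 b0
        simp only [dA]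
        by_cases hv : v ∈ i.1 <;> by_cases hw : w ∈ i.1 <;> simp only [hv, hw, if_true, if_false, or_true, or_false, true_or, false_or, or_self] <;> nlinarith
      refine (Finset.sum_le_sum fun i _ => e1 i).trans ?_
      rw [Fintype.sum_prod_type_right]
      have e2 : ∀ c, ∑ f : Sym2 V, (aa p ε v w c * (2 * P)) *
          ((if v ∈ f then bb p ε (f, c) else 0) + (if w ∈ f then bb p ε (f, c) else 0)) ≤
          2 * p v w c * (2 * P) * (2 * (1 / 8)) := by
        intro c
        have s1 := sum_bb h hε hε8 hW v c
        have s2 := sum_bb h hε hε8 hW w c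
        have s3 : ε * W ≤ 1 / 8 := by nlinarith [W_nonneg h hε hε8 hW v c]
        rw [← Finset.mul_sum, Finset.sum_add_distrib]
        have h5 : 0 ≤ aa p ε v w c * (2 * P) := mul_nonneg (a0 c) (by linarith)
        have h6 := mul_le_mul_of_nonneg_right (aa_le_p h hε hε8 hW v w c) (by linarith : 0 ≤ 2 * P)
        have s4 : (∑ f : Sym2 V, if v ∈ f then bb p ε (f, c) else 0) + (∑ f : Sym2 V, if w ∈ f then bb p ε (f, c) else 0) ≤ 2 * (1 / 8) := by linarith
        calc _ ≤ aa p ε v w c * (2 * P) * (2 * (1 / 8)) := mul_le_mul_of_nonneg_left s4 h5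
          _ ≤ _ := mul_le_mul_of_nonneg_right h6 (by norm_num)
      refine (Finset.sum_le_sum fun c _ => e2 c).trans ?_
      rw [← Finset.sum_mul, ← Finset.sum_mul, ← Finset.mul_sum, h.sum v w ha]
      linarith)
    (by intro x; simp)
    (by positivity)
    (by
      intro i _
      have := hdA1 i
      rw [div_mul_eq_mul_div, div_le_one (by linarith)]
      nlinarith [hdA0 i])
    (by intro x i hi; exact absurd (mem_univ i) hi)
  have ch := Pr_chernoff (bpm' h hε hε8 hW) (fun ω => - Zf H p ε ω v w) (η / (2 * P)) (-(1 - η)) (by positivity)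
  have hmono : Pr (bm (bb p ε)) (fun ω => Zf H p ε ω v w ≤ 1 - η) ≤
      Pr (bm (bb p ε)) (fun ω => -(1 - η) ≤ - Zf H p ε ω v w) :=
    Pr_mono (bpm' h hε hε8 hW) fun ω hω => by linarith
  refine (hmono.trans ch).trans ((mul_le_mul_of_nonneg_left key (Real.exp_nonneg _)).trans ?_)
  rw [← Real.exp_add, Ex_neg, Ex_Z h hε hε8 hW ha]
  apply Real.exp_le_exp.2
  apply le_of_eq
  field_simp
  ring

end
end round
end LK

set_option linter.unusedSectionVars false
set_option linter.unusedDecidableInType false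
set_option linter.unusedFintypeInType false
namespace LK
open Finset

section round
variable {V C : Type} [Fintype V] [Fintype C] [DecidableEq V] [DecidableEq C]
variable {H : SimpleGraph V} {p : V → V → C → ℝ} {D K P W ε : ℝ}

lemma sum_mem_le (f : Sym2 V) (g : V → ℝ) (M : ℝ) (_hM : 0 ≤ M) (hg : ∀ w, g w ≤ M) (hg0 : ∀ w, 0 ≤ g w) :
    ∑ w, (if w ∈ f then g w else 0) ≤ 2 * M := by
  induction f with | _ x y =>
  have : ∀ w, (if w ∈ s(x, y) then g w else 0) ≤ (if w = x then g w else 0) + (if w = y then g w else 0) := by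
    intro w
    have := hg0 w
    split_ifs with h0 h1 h2 <;> first | linarith | (rw [Sym2.mem_iff] at h0; tauto)
  refine (Finset.sum_le_sum fun w _ => this w).trans ?_
  rw [Finset.sum_add_distrib]
  simp
  linarith [hg x, hg y]

section

lemma U1_diff (h : St H p D K P W) (hε : 0 ≤ ε) (hε8 : ε ≤ 1 / 8) (hW : W ≤ 1) (v : V) (c : C) (ω ω' : Sym2 V × C → Bool) (m : V → ℝ) (hm0 : ∀ w, 0 ≤ m w)
    (hm : ∀ w, w ≠ v → gg H ω v w c = gg H ω' v w c ∨ 1 ≤ m w) :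
    |U1 H p ε ω v c - U1 H p ε ω' v c| ≤ ∑ w, aa p ε v w c * m w := by
  unfold U1
  rw [← Finset.sum_sub_distrib]
  refine (Finset.abs_sum_le_sum_abs _ _).trans (Finset.sum_le_sum fun w _ => ?_)
  rw [← mul_sub, abs_mul, abs_of_nonneg (aa_nonneg h hε hε8 hW v w c)]
  by_cases hw : w = v
  · have : aa p ε v w c = 0 := by unfold aa; rw [hw, h.zero v v c (H.loopless.irrefl v)]; simp
    rw [this]; simp
  · refine mul_le_mul_of_nonneg_left ?_ (aa_nonneg h hε hε8 hW v w c)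
    rcases hm w hw with e | e
    · rw [e]; simpa using hm0 w
    · exact (abs_sub01 (gg_01 _ _ _ _) (gg_01 _ _ _ _)).trans e

lemma U1_tail (h : St H p D K P W) (hε : 0 ≤ ε) (hε8 : ε ≤ 1 / 8) (hW : W ≤ 1) (hP : 0 < P) (v : V) (c : C) {t : ℝ} (ht : 0 < t) (ht1 : t ≤ 1) :
    Pr (bm (bb p ε)) (fun ω => W * (1 - ε * (1 - ε) ^ 2) / (1 - ε * W) + t ≤ U1 H p ε ω v c) ≤
      Real.exp (-(t ^ 2 / (20 * P))) := by
  have a0 := fun w => aa_nonneg h hε hε8 hW v w c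
  have a1 := fun w => aa_le h hε hε8 hW v w c
  have hW0 := W_nonneg h hε hε8 hW v c
  have hεW : ε * W ≤ 1 / 8 := by nlinarith
  have has : ∑ w, aa p ε v w c ≤ 2 := by linarith [aa_sum h hε hε8 hW v c]
  have has0 : 0 ≤ ∑ w, aa p ε v w c := Finset.sum_nonneg fun w _ => a0 w
  let A : Finset (Sym2 V × C) := univ.filter fun i => v ∈ i.1
  let dA : Sym2 V × C → ℝ := fun i => ∑ w, aa p ε v w c * (if i.1 = s(v, w) then 1 else 0)
  let dB : (Sym2 V × C → Bool) → Sym2 V × C → ℝ := fun x i => ∑ w, aa p ε v w c *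
    (if w ∈ i.1 then (if i.2 = c then 1 else 0) + one H x v w i.2 else 0)
  have hdA : ∀ w0 c', dA (s(v, w0), c') = aa p ε v w0 c := by
    intro w0 c'
    simp only [dA]
    rw [Finset.sum_eq_single w0]
    · simp
    · intro w _ hw
      rw [if_neg (fun e => hw (Sym2.congr_right.1 e).symm), mul_zero]
    · simp
  have hm0 : ∀ x w (i : Sym2 V × C), 0 ≤ (if i.2 = c then (1 : ℝ) else 0) + one H x v w i.2 := by
    intro x w i
    have := one_nonneg (H := H) x v w i.2
    split_ifs <;> linarith
  have hm1 : ∀ x w (i : Sym2 V × C), (if i.2 = c then (1 : ℝ) else 0) + one H x v w i.2 ≤ 2 := by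
    intro x w i
    rcases one_01 (H := H) x v w i.2 with h1 | h1 <;> rw [h1] <;> split_ifs <;> norm_num
  have hdB0 : ∀ x i, 0 ≤ dB x i := fun x i => Finset.sum_nonneg fun w _ =>
    mul_nonneg (a0 w) (by split_ifs with h1 h2; exacts [by linarith [one_nonneg (H := H) x v w i.2], by linarith [one_nonneg (H := H) x v w i.2], le_rfl])
  have hdB1 : ∀ x i, dB x i ≤ 8 * P := by
    intro x i
    have := sum_mem_le i.1 (fun w => aa p ε v w c * ((if i.2 = c then (1 : ℝ) else 0) + one H x v w i.2)) (4 * P)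
      (by linarith) (fun w => by
        have := mul_le_mul (a1 w) (hm1 x w i) (hm0 x w i) (by linarith)
        linarith) (fun w => mul_nonneg (a0 w) (hm0 x w i))
    simp only [dB, mul_ite, mul_zero] at this ⊢
    linarith
  have key := BD2 (bb0 h hε) (bb1 h hε (by linarith)) A (fun ω => U1 H p ε ω v c) dA dB
    (by
      rintro ⟨f, c'⟩ hi x
      obtain ⟨w0, rfl⟩ := Sym2.mem_iff_exists.1 (mem_filter.1 hi).2
      refine U1_diff h hε hε8 hW v c _ _ (fun w => if s(v, w0) = s(v, w) then 1 else 0) (fun w => by split_ifs <;> norm_num) ?_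
      intro w hw
      by_cases hww : w = w0
      · right; rw [hww]; simp
      · left
        refine gg_same_A (w0 := w0) (c' := c') (fun j hj => ?_) hww hw
        simp [Function.update_of_ne hj])
    (by
      rintro ⟨f, c'⟩ hi x
      have hv : v ∉ f := fun hv => hi (mem_filter.2 ⟨mem_univ _, hv⟩)
      refine U1_diff h hε hε8 hW v c _ _ (fun w => if w ∈ f then (if c' = c then 1 else 0) + one H x v w c' else 0)
        (fun w => by have := hm0 x w (f, c'); split_ifs at this ⊢ <;> first | exact this | exact le_rfl) ?_
      intro w hw
      have hupd : ∀ j, j ≠ (f, c') → Function.update x (f, c') true j = Function.update x (f, c') false j :=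
        fun j hj => by simp [Function.update_of_ne hj]
      by_cases hwf : w ∈ f
      · simp only [if_pos hwf]
        by_cases hc : c' = c
        · right; rw [if_pos hc]; linarith [one_nonneg (H := H) x v w c']
        · rcases one_01 (H := H) x v w c' with ho | ho
          · left
            refine gg_same_C hupd hv hc ?_
            rw [one_same (ω' := x) (f := f) (c' := c') (fun j hj => by simp [Function.update_of_ne hj]) hv, ho]
          · right; rw [ho, if_neg hc]; norm_num
      · left; exact gg_same_B hupd hwf)
    (by
      intro i x y hxy
      refine Finset.sum_congr rfl fun w _ => ?_
      have : one H x v w i.2 = one H y v w i.2 := one_congr fun c' _ => hxy _ (by simp [A])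
      rw [this]) P (4 * P) (t / (10 * P))
    (by
      have e1 : ∑ i ∈ A, bb p ε i * dA i ^ 2 = ∑ c', ∑ w, bb p ε (s(v, w), c') * aa p ε v w c ^ 2 := by
        rw [Finset.sum_filter, Fintype.sum_prod_type_right]
        refine Finset.sum_congr rfl fun c' _ => ?_
        rw [sum_inc v (fun f => bb p ε (f, c') * dA (f, c') ^ 2)]
        simp_rw [hdA]
      rw [e1, Finset.sum_comm]
      have e2 : ∀ w, ∑ c', bb p ε (s(v, w), c') * aa p ε v w c ^ 2 ≤ aa p ε v w c * (1 / 8 * (2 * P)) := by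
        intro w
        rw [← Finset.sum_mul]
        simp_rw [bb_mk h]
        rw [← Finset.mul_sum]
        have s1 : ε * ∑ c', p v w c' ≤ 1 / 8 := by nlinarith [h.sum_le v w]
        have s2 := mul_le_mul_of_nonneg_left (a1 w) (a0 w)
        have s3 := mul_le_mul_of_nonneg_right s1 (sq_nonneg (aa p ε v w c))
        nlinarith
      refine (Finset.sum_le_sum fun w _ => e2 w).trans ?_
      rw [← Finset.sum_mul]
      nlinarith)
    (by
      intro x
      have e0 : ∑ i ∈ Aᶜ, bb p ε i * dB x i ^ 2 ≤ ∑ i, 8 * P * (bb p ε i * dB x i) := by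
        refine (Finset.sum_le_sum_of_subset_of_nonneg (Finset.subset_univ _) fun i _ _ =>
          mul_nonneg (bb0 h hε i) (sq_nonneg _)).trans (Finset.sum_le_sum fun i _ => ?_)
        have b0 := bb0 h hε i
        have := mul_le_mul_of_nonneg_left (hdB1 x i) (mul_nonneg b0 (hdB0 x i))
        nlinarith
      refine e0.trans ?_
      rw [← Finset.mul_sum]
      have e1 : ∑ i, bb p ε i * dB x i = ∑ w, aa p ε v w c * ∑ c', ((if c' = c then (1:ℝ) else 0) + one H x v w c') *
          ∑ f : Sym2 V, (if w ∈ f then bb p ε (f, c') else 0) := by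
        simp only [dB, Finset.mul_sum]
        rw [Finset.sum_comm]
        refine Finset.sum_congr rfl fun w _ => ?_
        rw [Fintype.sum_prod_type_right]
        refine Finset.sum_congr rfl fun c' _ => Finset.sum_congr rfl fun f _ => ?_
        by_cases hw : w ∈ f
        · simp only [hw, if_true]; ring
        · simp only [hw, if_false]; ring
      have e2 : ∀ w, ∑ c', ((if c' = c then (1:ℝ) else 0) + one H x v w c') *
          ∑ f : Sym2 V, (if w ∈ f then bb p ε (f, c') else 0) ≤ 2 * (1 / 8) := by
        intro w
        have : ∀ c', ((if c' = c then (1:ℝ) else 0) + one H x v w c') *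
          ∑ f : Sym2 V, (if w ∈ f then bb p ε (f, c') else 0) ≤ ((if c' = c then (1:ℝ) else 0) + one H x v w c') * (1 / 8) :=
          fun c' => mul_le_mul_of_nonneg_left ((sum_bb h hε hε8 hW w c').trans hεW) (hm0 x w (s(v, v), c'))
        refine (Finset.sum_le_sum fun c' _ => this c').trans ?_
        rw [← Finset.sum_mul, Finset.sum_add_distrib]
        have : ∑ c', one H x v w c' ≤ 1 := by
          rcases one_sum (H := H) x v w (fun _ => 1) with ⟨h1, _⟩ | ⟨_, _, h1⟩ <;> simp only [mul_one] at h1 <;> rw [h1]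
          norm_num
        simp only [Finset.sum_ite_eq', mem_univ, if_true]
        linarith
      have e3 : ∑ i, bb p ε i * dB x i ≤ 1 / 2 := by
        rw [e1]
        refine (Finset.sum_le_sum fun w _ => mul_le_mul_of_nonneg_left (e2 w) (a0 w)).trans ?_
        rw [← Finset.sum_mul]
        linarith
      nlinarith)
    (by positivity)
    (by
      intro i hi
      obtain ⟨f, c'⟩ := i
      obtain ⟨w0, rfl⟩ := Sym2.mem_iff_exists.1 (mem_filter.1 hi).2
      rw [hdA, div_mul_eq_mul_div, div_le_one (by linarith)]
      nlinarith [a0 w0, a1 w0])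
    (by
      intro x i hi
      rw [div_mul_eq_mul_div, div_le_one (by linarith)]
      nlinarith [hdB0 x i, hdB1 x i])
  have ch := Pr_chernoff (bpm' h hε hε8 hW) (fun ω => U1 H p ε ω v c) (t / (10 * P))
    (W * (1 - ε * (1 - ε) ^ 2) / (1 - ε * W) + t) (by positivity)
  refine ch.trans ((mul_le_mul_of_nonneg_left key (Real.exp_nonneg _)).trans ?_)
  rw [← Real.exp_add]
  apply Real.exp_le_exp.2
  have hE := mul_le_mul_of_nonneg_left (Ex_U1 h hε hε8 hW v c) (by positivity : 0 ≤ t / (10 * P))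
  have e5 : (t / (10 * P)) ^ 2 * (P + 4 * P) - t / (10 * P) * t = -(t ^ 2 / (20 * P)) := by
    field_simp; ring
  linarith

end
end round
end LK

set_option linter.unusedSectionVars false
set_option linter.unusedDecidableInType false
set_option linter.unusedFintypeInType false
namespace LK
open Finset

section round
variable {V C : Type} [Fintype V] [Fintype C] [DecidableEq V] [DecidableEq C]
variable {H : SimpleGraph V} {p : V → V → C → ℝ} {D K P W ε : ℝ}

/-- the weight lost through conflicts at `v` in a given colour -/
noncomputable def Yf (H : SimpleGraph V) (p : V → V → C → ℝ) (ε : ℝ) (ω : Sym2 V × C → Bool) (v : V) (c c' : C) : ℝ :=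
  ∑ w, aa p ε v w c * (X H ω v w c' * (1 - fr H ω v w c'))

/-- conflict weight at `v` -/
noncomputable def U2 (H : SimpleGraph V) (p : V → V → C → ℝ) (ε : ℝ) (ω : Sym2 V × C → Bool) (v : V) (c : C) : ℝ :=
  ∑ c', Yf H p ε ω v c c'

lemma exp_Y (ω : Sym2 V × C → Bool) (v : V) (c c' : C) (lam : ℝ) :
    Real.exp (lam * Yf H p ε ω v c c') =
      ∏ w, (1 + (Real.exp (lam * aa p ε v w c) - 1) * X H ω v w c') -
      ∑ w, (Real.exp (lam * aa p ε v w c) - 1) * (X H ω v w c' * fr H ω v w c') := by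
  by_cases hh : ∃ w, X H ω v w c' = 1 ∧ fr H ω v w c' = 1
  · obtain ⟨w, h1, h2⟩ := hh
    have h0 : ∀ z, z ≠ w → X H ω v z c' = 0 := fun z hz => fr_one h2 hz
    have y0 : Yf H p ε ω v c c' = 0 := by
      refine Finset.sum_eq_zero fun z _ => ?_
      by_cases hz : z = w
      · rw [hz, h2]; simp
      · rw [h0 z hz]; simp
    rw [y0, Finset.prod_eq_single w, Finset.sum_eq_single w, h1, h2]
    · simp
    · intro z _ hz; rw [h0 z hz]; simp
    · simp
    · intro z _ hz; rw [h0 z hz]; simp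
    · simp
  · push Not at hh
    have h0 : ∀ w, X H ω v w c' * fr H ω v w c' = 0 := by
      intro w
      rcases X_01 (H := H) ω v w c' with h1 | h1
      · rw [h1, zero_mul]
      · rw [(fr_01 ω v w c').resolve_right (hh w h1), mul_zero]
    simp_rw [h0]
    unfold Yf
    rw [Finset.mul_sum, Real.exp_sum]
    simp only [mul_zero, Finset.sum_const_zero, sub_zero]
    refine Finset.prod_congr rfl fun w _ => ?_
    have : X H ω v w c' * (1 - fr H ω v w c') = X H ω v w c' := by rw [mul_sub, h0]; ring
    rw [this]
    rcases X_01 (H := H) ω v w c' with h1 | h1 <;> rw [h1] <;> simp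

section

lemma Ex_expY (h : St H p D K P W) (hε : 0 ≤ ε) (hε8 : ε ≤ 1 / 8) (hW : W ≤ 1) (v : V) (c c' : C) {lam : ℝ} (hl : 0 ≤ lam) (hlP : lam * (2 * P) ≤ 1) :
    Ex (bm (bb p ε)) (fun ω => Real.exp (lam * Yf H p ε ω v c c')) ≤
      Real.exp (6 * lam * ε ^ 2 * ∑ w, p v w c' * aa p ε v w c) := by
  simp_rw [exp_Y]
  have a0 := fun w => aa_nonneg h hε hε8 hW v w c
  have a1 := fun w => aa_le h hε hε8 hW v w c
  have m0 : ∀ w, 0 ≤ Real.exp (lam * aa p ε v w c) - 1 := fun w => by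
    have := Real.add_one_le_exp (lam * aa p ε v w c)
    have := mul_nonneg hl (a0 w)
    linarith
  have y1 : ∀ w, lam * aa p ε v w c ≤ 1 := fun w =>
    (mul_le_mul_of_nonneg_left (a1 w) hl).trans hlP
  have m1 : ∀ w, Real.exp (lam * aa p ε v w c) - 1 ≤ 2 * (lam * aa p ε v w c) := fun w => by
    have y0 := mul_nonneg hl (a0 w)
    have := (abs_le.1 (Real.abs_exp_sub_one_sub_id_le (abs_le.2 ⟨by linarith, y1 w⟩))).2
    nlinarith [y1 w]
  rw [Ex_sub, Ex_sum]
  rw [Ex_prod (bpm' h hε hε8 hW) _ (fun w ω => 1 + (Real.exp (lam * aa p ε v w c) - 1) * X H ω v w c')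
    (fun z => {(s(v, z), c')})
    (by intro z a b hab; exact congrArg (fun y => 1 + (Real.exp (lam * aa p ε v z c) - 1) * y) (X_dep v z c' hab))
    (by
      intro z z' _ _ hz
      rw [Set.disjoint_singleton]
      intro e; exact hz (Sym2.congr_right.1 (Prod.mk.inj e).1))]
  set s := ∑ w, (ε * p v w c') * (Real.exp (lam * aa p ε v w c) - 1) with hs
  have hs0 : 0 ≤ s := Finset.sum_nonneg fun w _ => mul_nonneg (ep0 h hε hε8 hW v w c') (m0 w)
  have hs1 : s ≤ 2 * ε := by
    have : s ≤ ∑ w, (ε * p v w c') * 2 := Finset.sum_le_sum fun w _ =>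
      mul_le_mul_of_nonneg_left (by linarith [m1 w, y1 w]) (ep0 h hε hε8 hW v w c')
    rw [← Finset.sum_mul, ← Finset.mul_sum] at this
    nlinarith [h.leW v c']
  have hs2 : s ≤ 2 * lam * ε * ∑ w, p v w c' * aa p ε v w c := by
    rw [Finset.mul_sum]
    refine Finset.sum_le_sum fun w _ => ?_
    have := mul_le_mul_of_nonneg_left (m1 w) (ep0 h hε hε8 hW v w c')
    nlinarith
  have t1 : ∏ w, Ex (bm (bb p ε)) (fun ω => 1 + (Real.exp (lam * aa p ε v w c) - 1) * X H ω v w c') ≤ Real.exp s := by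
    rw [hs, Real.exp_sum]
    refine Finset.prod_le_prod (fun w _ => Ex_nonneg (bpm' h hε hε8 hW) fun ω => ?_) fun w _ => ?_
    · have := mul_nonneg (m0 w) (X_nonneg (H := H) ω v w c'); linarith
    · rw [Ex_gX h hε (by linarith) v w c' (fun y => 1 + (Real.exp (lam * aa p ε v w c) - 1) * y)]
      have := Real.add_one_le_exp ((ε * p v w c') * (Real.exp (lam * aa p ε v w c) - 1))
      linarith
  have t2 : s * (1 - ε) ≤ ∑ w, Ex (bm (bb p ε)) (fun ω => (Real.exp (lam * aa p ε v w c) - 1) * (X H ω v w c' * fr H ω v w c')) := by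
    rw [hs, Finset.sum_mul]
    refine Finset.sum_le_sum fun w _ => ?_
    rw [Ex_mul_left, Ex_mul (bpm' h hε hε8 hW) (X_dep v w c') (fr_dep v w c')
      (by
        rw [Set.disjoint_singleton_left]
        rintro ⟨z, hz, e⟩
        exact hz (Sym2.congr_right.1 (Prod.mk.inj e).1).symm), Ex_fr h hε hε8 hW,
      Ex_gX h hε (by linarith) v w c' (fun y => y)]
    have := mul_le_mul_of_nonneg_left (qv_ge' h hε hε8 hW v w c') (mul_nonneg (ep0 h hε hε8 hW v w c') (m0 w))
    linarith
  have t3 : Real.exp s ≤ 1 + s + s ^ 2 := by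
    have := (abs_le.1 (Real.abs_exp_sub_one_sub_id_le (abs_le.2 ⟨by linarith, by linarith⟩ : |s| ≤ 1))).2
    linarith
  have t4 := Real.add_one_le_exp (3 * ε * s)
  have t5 : Real.exp (3 * ε * s) ≤ Real.exp (6 * lam * ε ^ 2 * ∑ w, p v w c' * aa p ε v w c) := by
    apply Real.exp_le_exp.2
    have := mul_le_mul_of_nonneg_left hs2 (by linarith : 0 ≤ 3 * ε)
    linarith
  nlinarith

lemma U2_tail (h : St H p D K P W) (hε : 0 ≤ ε) (hε8 : ε ≤ 1 / 8) (hW : W ≤ 1) (hP : 0 < P) (v : V) (c : C) {t : ℝ} :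
    Pr (bm (bb p ε)) (fun ω => 12 * ε ^ 2 * W + t ≤ U2 H p ε ω v c) ≤ Real.exp (-(t / (2 * P))) := by
  set lam := 1 / (2 * P) with hlam
  have hl : 0 ≤ lam := by positivity
  have hlP : lam * (2 * P) ≤ 1 := by rw [hlam]; field_simp; exact le_rfl
  have a0 := fun w => aa_nonneg h hε hε8 hW v w c
  refine (Pr_chernoff (bpm' h hε hε8 hW) (fun ω => U2 H p ε ω v c) lam _ hl).trans ?_
  have e1 : ∀ ω, Real.exp (lam * U2 H p ε ω v c) = ∏ c', Real.exp (lam * Yf H p ε ω v c c') := by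
    intro ω; unfold U2; rw [Finset.mul_sum, Real.exp_sum]
  simp_rw [e1]
  rw [Ex_prod (bpm' h hε hε8 hW) _ (fun c' ω => Real.exp (lam * Yf H p ε ω v c c')) (fun c' => {i | i.2 = c'})]
  · have h1 : ∏ c', Ex (bm (bb p ε)) (fun ω => Real.exp (lam * Yf H p ε ω v c c')) ≤
        ∏ c', Real.exp (6 * lam * ε ^ 2 * ∑ w, p v w c' * aa p ε v w c) :=
      Finset.prod_le_prod (fun c' _ => Ex_nonneg (bpm' h hε hε8 hW) fun ω => Real.exp_nonneg _)
        fun c' _ => Ex_expY h hε hε8 hW v c c' hl hlP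
    rw [← Real.exp_sum, ← Finset.mul_sum, Finset.sum_comm] at h1
    have h2 : ∑ w, ∑ c', p v w c' * aa p ε v w c ≤ 2 * W := by
      refine le_trans (Finset.sum_le_sum fun w _ => ?_) (aa_sum h hε hε8 hW v c)
      rw [← Finset.sum_mul]
      exact mul_le_of_le_one_left (a0 w) (h.sum_le v w)
    refine (mul_le_mul_of_nonneg_left h1 (Real.exp_nonneg _)).trans ?_
    rw [← Real.exp_add]
    apply Real.exp_le_exp.2
    have h3 := mul_le_mul_of_nonneg_left h2 (by positivity : 0 ≤ 6 * lam * ε ^ 2)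
    have h4 : t / (2 * P) = lam * t := by rw [hlam]; ring
    rw [h4]
    linarith
  · intro c' a b hab
    have : Yf H p ε a v c c' = Yf H p ε b v c c' := by
      refine Finset.sum_congr rfl fun w _ => ?_
      rw [X_congr fun _ => hab _ rfl, fr_congr fun z _ _ => hab _ rfl]
    simp only [this]
  · intro c1 c2 _ _ hc
    rw [Set.disjoint_left]
    rintro i rfl h2
    exact hc h2

end
end round
end LK

set_option linter.unusedSectionVars false
set_option linter.unusedDecidableInType false
set_option linter.unusedFintypeInType false
namespace LK
open Finset

section round
variable {V C : Type} [Fintype V] [Fintype C] [DecidableEq V] [DecidableEq C]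
variable {H : SimpleGraph V} {p : V → V → C → ℝ} {D K P W ε : ℝ}

/-- coordinates relevant to `v` -/
def Sv (H : SimpleGraph V) (v : V) : Set (Sym2 V × C) :=
  {i | ∃ a, (a = v ∨ H.Adj v a) ∧ ∃ b, H.Adj a b ∧ i.1 = s(a, b)}

lemma Zf_congr {x y : Sym2 V × C → Bool} {v w : V} (hvw : H.Adj v w)
    (hxy : ∀ i ∈ Sv H v, x i = y i) : Zf H p ε x v w = Zf H p ε y v w := by
  unfold Zf
  refine Finset.sum_congr rfl fun c _ => ?_
  rw [fr_congr (v := v) (ω' := y) fun z _ ha => hxy _ ⟨v, Or.inl rfl, z, ha, rfl⟩,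
    fr_congr (v := w) (ω' := y) fun z _ ha => hxy _ ⟨w, Or.inr hvw, z, ha, rfl⟩]

lemma U2_congr {x y : Sym2 V × C → Bool} {v : V} {c : C}
    (hxy : ∀ i ∈ Sv H v, x i = y i) : U2 H p ε x v c = U2 H p ε y v c := by
  unfold U2 Yf
  refine Finset.sum_congr rfl fun c' _ => Finset.sum_congr rfl fun w _ => ?_
  rw [fr_congr (v := v) (ω' := y) fun z _ ha => hxy _ ⟨v, Or.inl rfl, z, ha, rfl⟩,
    X_congr (v := v) (ω' := y) fun ha => hxy _ ⟨v, Or.inl rfl, w, ha, rfl⟩]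

lemma U1_congr (h : St H p D K P W) {x y : Sym2 V × C → Bool} {v : V} {c : C}
    (hxy : ∀ i ∈ Sv H v, x i = y i) : U1 H p ε x v c = U1 H p ε y v c := by
  unfold U1
  refine Finset.sum_congr rfl fun w _ => ?_
  by_cases hvw : H.Adj v w
  · congr 1
    have h1 : ∀ c, fr H x w v c = fr H y w v c := fun c =>
      fr_congr fun z _ ha => hxy _ ⟨w, Or.inr hvw, z, ha, rfl⟩
    have h2 : ∀ c, one H x v w c = one H y v w c := fun c =>
      one_congr fun z ha => hxy _ ⟨v, Or.inl rfl, w, ha, rfl⟩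
    unfold gg
    simp_rw [h1, h2]
  · have : aa p ε v w c = 0 := by unfold aa; rw [h.zero v w c hvw]; simp
    rw [this]; simp

open scoped Classical in
/-- closed neighbourhood -/
noncomputable def nb (H : SimpleGraph V) (v : V) : Finset V := insert v (univ.filter fun y => H.Adj v y)

open scoped Classical in
/-- third closed neighbourhood -/
noncomputable def nb3 (H : SimpleGraph V) (v : V) : Finset V :=
  (nb H v).biUnion fun a => (nb H a).biUnion fun b => nb H b

lemma mem_nb {v a : V} : a ∈ nb H v ↔ a = v ∨ H.Adj v a := by simp [nb]

lemma card_nb (h : St H p D K P W) (v : V) : (nb H v).card ≤ ⌊D⌋₊ + 1 := by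
  classical
  refine (Finset.card_insert_le _ _).trans ?_
  have := Nat.le_floor (h.deg v)
  omega

lemma card_nb3 (h : St H p D K P W) (v : V) : ((nb3 H v).card : ℝ) ≤ (D + 1) ^ 3 := by
  classical
  have h1 : (nb3 H v).card ≤ (⌊D⌋₊ + 1) * ((⌊D⌋₊ + 1) * (⌊D⌋₊ + 1)) := by
    refine (Finset.card_biUnion_le_card_mul _ _ ((⌊D⌋₊ + 1) * (⌊D⌋₊ + 1)) fun a _ => ?_).trans
      (Nat.mul_le_mul_right _ (card_nb h v))
    exact (Finset.card_biUnion_le_card_mul _ _ (⌊D⌋₊ + 1) fun b _ => card_nb h b).trans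
      (Nat.mul_le_mul_right _ (card_nb h a))
  have hD : 0 ≤ D := (Nat.cast_nonneg _).trans (h.deg v)
  have h2 : ((nb3 H v).card : ℝ) ≤ ((⌊D⌋₊ : ℝ) + 1) * (((⌊D⌋₊ : ℝ) + 1) * ((⌊D⌋₊ : ℝ) + 1)) := by
    exact_mod_cast h1
  have h3 : (⌊D⌋₊ : ℝ) ≤ D := Nat.floor_le hD
  calc _ ≤ _ := h2
    _ = ((⌊D⌋₊ : ℝ) + 1) ^ 3 := by ring
    _ ≤ _ := by gcongr

lemma Sv_disj {v v' : V} (hv : v' ∉ nb3 H v) : Disjoint (Sv (C := C) H v) (Sv H v') := by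
  classical
  rw [Set.disjoint_left]
  rintro i ⟨a, ha, b, hab, e⟩ ⟨a', ha', b', hab', e'⟩
  apply hv
  unfold nb3
  rw [mem_biUnion]
  refine ⟨a, mem_nb.2 ha, ?_⟩
  rw [mem_biUnion]
  have hv' : v' ∈ nb H a' := mem_nb.2 (by
    rcases ha' with h | h
    · exact Or.inl h.symm
    · exact Or.inr h.symm)
  rw [e] at e'
  rcases Sym2.eq_iff.1 e' with ⟨h1, _⟩ | ⟨_, h2⟩
  · exact ⟨a, mem_nb.2 (Or.inl rfl), h1 ▸ hv'⟩
  · exact ⟨b, mem_nb.2 (Or.inr hab), h2 ▸ hv'⟩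

section

lemma round_exists (h : St H p D K P W) (hε : 0 ≤ ε) (hε8 : ε ≤ 1 / 8) (hW : W ≤ 1) (hP : 0 < P) {η t θ : ℝ} (hη : 0 < η) (hη1 : η ≤ 1) (ht : 0 < t) (ht1 : t ≤ 1)
    (h1 : θ ≤ η ^ 2 / 4) (h2 : θ ≤ t ^ 2 / 20) (h3 : θ ≤ t / 2)
    (hnum : (D + 1) ^ 3 * ((D + 2 * K) * Real.exp (-(θ / P))) ≤ 1 / 4) :
    ∃ ω, wt (bm (bb p ε)) ω ≠ 0 ∧ (∀ v w, H.Adj v w → 1 - η < Zf H p ε ω v w) ∧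
      ∀ v c, (∃ y, p v y c ≠ 0) → U1 H p ε ω v c < W * (1 - ε * (1 - ε) ^ 2) / (1 - ε * W) + t ∧
        U2 H p ε ω v c < 12 * ε ^ 2 * W + t := by
  classical
  have pm := bpm' h hε hε8 hW
  let N : V → Finset V := fun v => univ.filter fun y => H.Adj v y
  let Cv : V → Finset C := fun v => univ.filter fun c => ∃ y, p v y c ≠ 0
  let B1 : V → V → (Sym2 V × C → Bool) → Prop := fun v w ω => Zf H p ε ω v w ≤ 1 - η
  let B2 : V → C → (Sym2 V × C → Bool) → Prop := fun v c ω =>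
    W * (1 - ε * (1 - ε) ^ 2) / (1 - ε * W) + t ≤ U1 H p ε ω v c ∨ 12 * ε ^ 2 * W + t ≤ U2 H p ε ω v c
  let A : V → (Sym2 V × C → Bool) → Prop := fun v ω => (∃ w ∈ N v, B1 v w ω) ∨ ∃ c ∈ Cv v, B2 v c ω
  have hPrA : ∀ v, Pr (bm (bb p ε)) (A v) ≤ (D + 2 * K) * Real.exp (-(θ / P)) := by
    intro v
    have e1 : ∀ w ∈ N v, Pr (bm (bb p ε)) (B1 v w) ≤ Real.exp (-(θ / P)) := by
      intro w hw
      refine (Z_tail h hε hε8 hW hP (mem_filter.1 hw).2 hη hη1).trans ?_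
      apply Real.exp_le_exp.2
      rw [neg_le_neg_iff, ← div_div]
      exact div_le_div_of_nonneg_right h1 hP.le
    have e2 : ∀ c ∈ Cv v, Pr (bm (bb p ε)) (B2 v c) ≤ 2 * Real.exp (-(θ / P)) := by
      intro c _
      refine (Pr_or_le pm _ _).trans ?_
      have f1 := U1_tail h hε hε8 hW hP v c ht ht1
      have f2 := U2_tail h hε hε8 hW hP v c (t := t)
      have g1 : Real.exp (-(t ^ 2 / (20 * P))) ≤ Real.exp (-(θ / P)) := by
        apply Real.exp_le_exp.2
        rw [neg_le_neg_iff, ← div_div]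
        exact div_le_div_of_nonneg_right h2 hP.le
      have g2 : Real.exp (-(t / (2 * P))) ≤ Real.exp (-(θ / P)) := by
        apply Real.exp_le_exp.2
        rw [neg_le_neg_iff, ← div_div]
        exact div_le_div_of_nonneg_right h3 hP.le
      linarith
    refine (Pr_or_le pm _ _).trans ?_
    have f1 := (Pr_exists_le pm (N v) (B1 v)).trans (Finset.sum_le_card_nsmul _ _ _ e1)
    have f2 := (Pr_exists_le pm (Cv v) (B2 v)).trans (Finset.sum_le_card_nsmul _ _ _ e2)
    rw [nsmul_eq_mul] at f1 f2
    have g1 := mul_le_mul_of_nonneg_right (h.deg v) (Real.exp_nonneg (-(θ / P)))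
    have g2 := mul_le_mul_of_nonneg_right (h.col v) (by positivity : 0 ≤ 2 * Real.exp (-(θ / P)))
    have f1' := f1.trans g1
    have f2' := f2.trans g2
    linarith
  have hDep : ∀ v, DependsOn (A v) (Sv H v) := by
    intro v x y hxy
    have i1 : (∃ w ∈ N v, B1 v w x) = (∃ w ∈ N v, B1 v w y) := by
      apply propext
      refine exists_congr fun w => and_congr_right fun hw => ?_
      simp only [B1]
      rw [Zf_congr (mem_filter.1 hw).2 hxy]
    have i2 : (∃ c ∈ Cv v, B2 v c x) = (∃ c ∈ Cv v, B2 v c y) := by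
      apply propext
      refine exists_congr fun w => and_congr_right fun hw => ?_
      simp only [B2]
      rw [U1_congr h hxy, U2_congr hxy]
    simp only [A]
    rw [i1, i2]
  have hDK : ∀ v : V, 0 ≤ D ∧ 0 ≤ K := fun v =>
    ⟨(Nat.cast_nonneg _).trans (h.deg v), (Nat.cast_nonneg _).trans (h.col v)⟩
  have hb0 : ∀ v : V, 0 ≤ (D + 2 * K) * Real.exp (-(θ / P)) := fun v => by
    have := hDK v
    exact mul_nonneg (by linarith) (Real.exp_nonneg _)
  obtain ⟨ω, hω, hg⟩ := LLL pm A (fun v => Sv H v) (fun v => nb3 H v) hDep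
    (fun v v' hv => Sv_disj hv)
    (by
      intro v
      refine (Finset.sum_le_card_nsmul _ _ _ fun j _ => hPrA j).trans ?_
      rw [nsmul_eq_mul]
      exact (mul_le_mul_of_nonneg_right (card_nb3 h v) (hb0 v)).trans hnum)
    (by
      intro v
      refine (hPrA v).trans (le_trans ?_ hnum)
      have := hDK v
      refine le_mul_of_one_le_left (hb0 v) ?_
      exact one_le_pow₀ (by linarith))
  refine ⟨ω, hω, fun v w hvw => ?_, fun v c hc => ?_⟩
  · by_contra hcon
    exact hg v (Or.inl ⟨w, mem_filter.2 ⟨mem_univ _, hvw⟩, not_lt.1 hcon⟩)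
  · constructor
    · by_contra hcon
      exact hg v (Or.inr ⟨c, mem_filter.2 ⟨mem_univ _, hc⟩, Or.inl (not_lt.1 hcon)⟩)
    · by_contra hcon
      exact hg v (Or.inr ⟨c, mem_filter.2 ⟨mem_univ _, hc⟩, Or.inr (not_lt.1 hcon)⟩)

end
end round
end LK

set_option linter.unusedSectionVars false
set_option linter.unusedDecidableInType false
set_option linter.unusedFintypeInType false
namespace LK
open Finset

section round
variable {V C : Type} [Fintype V] [Fintype C] [DecidableEq V] [DecidableEq C]
variable {H : SimpleGraph V} {p : V → V → C → ℝ} {D K P W ε : ℝ}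

/-- `vw` receives colour `c` in this round -/
def Got (H : SimpleGraph V) (ω : Sym2 V × C → Bool) (v w : V) (c : C) : Prop :=
  X H ω v w c = 1 ∧ fr H ω v w c = 1 ∧ fr H ω w v c = 1

lemma Got_symm {ω : Sym2 V × C → Bool} {v w : V} {c : C} (h : Got H ω v w c) : Got H ω w v c :=
  ⟨by rw [X_symm]; exact h.1, h.2.2, h.2.1⟩

/-- graph of uncoloured edges -/
def Hn (H : SimpleGraph V) (ω : Sym2 V × C → Bool) : SimpleGraph V where
  Adj v w := H.Adj v w ∧ ∀ c, ¬ Got H ω v w c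
  symm := ⟨fun v w h => ⟨h.1.symm, fun c hc => h.2 c (Got_symm hc)⟩⟩
  loopless := ⟨fun v h => H.loopless.irrefl v h.1⟩

open scoped Classical in
/-- updated weights -/
noncomputable def pn (H : SimpleGraph V) (p : V → V → C → ℝ) (ε : ℝ) (ω : Sym2 V × C → Bool) (v w : V) (c : C) : ℝ :=
  if (Hn H ω).Adj v w then aa p ε v w c * (fr H ω v w c * fr H ω w v c) / Zf H p ε ω v w else 0

lemma pn_ne {ω : Sym2 V × C → Bool} {v w : V} {c : C} (h : pn H p ε ω v w c ≠ 0) :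
    p v w c ≠ 0 ∧ fr H ω v w c = 1 ∧ fr H ω w v c = 1 := by
  refine ⟨fun e => h ?_, (fr_01 ω v w c).resolve_left fun e => h ?_, (fr_01 ω w v c).resolve_left fun e => h ?_⟩
  · simp [pn, aa, e]
  · simp [pn, e]
  · simp [pn, e]

lemma pt_bound {ω : Sym2 V × C → Bool} {v w : V} {c : C} (ha : (Hn H ω).Adj v w) :
    fr H ω v w c * fr H ω w v c ≤ gg H ω v w c + ∑ c', X H ω v w c' * (1 - fr H ω v w c') := by
  have hn : ∀ c' ∈ (univ : Finset C), 0 ≤ X H ω v w c' * (1 - fr H ω v w c') := fun c' _ =>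
    mul_nonneg (X_nonneg _ _ _ _) (by linarith [fr_le (H := H) ω v w c'])
  have hs := Finset.sum_nonneg hn
  have hg := (gg_01 (H := H) ω v w c).1
  rcases fr_01 (H := H) ω w v c with h0 | h1
  · rw [h0]; linarith
  · have hf := fr_le (H := H) ω v w c
    have hf0 := fr_nonneg (H := H) ω v w c
    rw [h1, mul_one]
    unfold gg
    rw [h1]
    rcases one_sum (H := H) ω v w (fun c' => fr H ω w v c') with ⟨e, _⟩ | ⟨c0, ho, e⟩
    · rw [e]; linarith
    · rw [e]
      rcases fr_01 (H := H) ω w v c0 with e0 | e0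
      · rw [e0]; linarith
      · have hx := one_X ho
        have hfr : fr H ω v w c0 = 0 := (fr_01 ω v w c0).resolve_right fun e1 => ha.2 c0 ⟨hx, e1, e0⟩
        have := Finset.single_le_sum hn (mem_univ c0)
        rw [hx, hfr] at this
        rw [e0]; linarith

lemma new_St (h : St H p D K P W) (hε : 0 ≤ ε) (hε8 : ε ≤ 1 / 8) (hW : W ≤ 1)
    {η B1 B2 W' : ℝ} (hη1 : η ≤ 1 / 2) (ω : Sym2 V × C → Bool)
    (hZ : ∀ v w, H.Adj v w → 1 - η < Zf H p ε ω v w)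
    (hU : ∀ v c, (∃ y, p v y c ≠ 0) → U1 H p ε ω v c < B1 ∧ U2 H p ε ω v c < B2)
    (hW'0 : 0 ≤ W') (hW' : (B1 + B2) / (1 - η) ≤ W') :
    St (Hn H ω) (pn H p ε ω) D K (4 * P) W' := by
  classical
  have hZs : ∀ v w, Zf H p ε ω v w = Zf H p ε ω w v := fun v w => by
    unfold Zf
    exact Finset.sum_congr rfl fun c _ => by rw [aa_symm h hε hε8 hW, mul_comm (fr H ω v w c)]
  have hkk : ∀ v w c, 0 ≤ fr H ω v w c * fr H ω w v c ∧ fr H ω v w c * fr H ω w v c ≤ 1 := by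
    intro v w c
    rcases fr_01 (H := H) ω v w c with h1 | h1 <;> rcases fr_01 (H := H) ω w v c with h2 | h2 <;>
      rw [h1, h2] <;> norm_num
  have a0 := fun v w c => aa_nonneg h hε hε8 hW v w c
  have a1 := fun v w c => aa_le h hε hε8 hW v w c
  have hP0 : ∀ v w c, 0 ≤ P := fun v w c => (h.nonneg v w c).trans (h.leP v w c)
  refine ⟨?_, ?_, ?_, ?_, ?_, ?_, ?_, ?_⟩
  · intro v w c
    unfold pn
    rw [(Hn H ω).adj_comm, aa_symm h hε hε8 hW, hZs, mul_comm (fr H ω v w c)]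
  · intro v w c
    unfold pn
    split_ifs with ha
    · exact div_nonneg (mul_nonneg (a0 _ _ _) (hkk _ _ _).1) (by linarith [hZ v w ha.1])
    · exact le_rfl
  · intro v w c ha
    simp [pn, ha]
  · intro v w ha
    simp only [pn, ha, if_true]
    rw [← Finset.sum_div]
    exact div_self (by have := hZ v w ha.1; intro e; change Zf H p ε ω v w = 0 at e; linarith)
  · intro v w c
    unfold pn
    split_ifs with ha
    · have hz := hZ v w ha.1
      rw [div_le_iff₀ (by linarith)]
      have e1 : aa p ε v w c * (fr H ω v w c * fr H ω w v c) ≤ 2 * P :=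
        (mul_le_of_le_one_right (a0 _ _ _) (hkk _ _ _).2).trans (a1 _ _ _)
      have := hP0 v w c
      nlinarith
    · linarith [hP0 v w c]
  · intro v c
    by_cases hc : ∃ y, p v y c ≠ 0
    · obtain ⟨u1, u2⟩ := hU v c hc
      have hd : 0 < 1 - η := by linarith
      have key : ∀ w, pn H p ε ω v w c ≤ (aa p ε v w c * (gg H ω v w c + ∑ c', X H ω v w c' * (1 - fr H ω v w c'))) / (1 - η) := by
        intro w
        have hn : 0 ≤ ∑ c', X H ω v w c' * (1 - fr H ω v w c') := Finset.sum_nonneg fun c' _ =>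
          mul_nonneg (X_nonneg _ _ _ _) (by linarith [fr_le (H := H) ω v w c'])
        have hg := (gg_01 (H := H) ω v w c).1
        unfold pn
        split_ifs with ha
        · refine div_le_div₀ ?_ ?_ hd (hZ v w ha.1).le
          · exact mul_nonneg (a0 _ _ _) (by linarith)
          · exact mul_le_mul_of_nonneg_left (pt_bound ha) (a0 _ _ _)
        · exact div_nonneg (mul_nonneg (a0 _ _ _) (by linarith)) hd.le
      refine (Finset.sum_le_sum fun w _ => key w).trans (le_trans ?_ hW')
      rw [← Finset.sum_div]
      refine div_le_div_of_nonneg_right ?_ hd.le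
      have e : ∑ w, aa p ε v w c * (gg H ω v w c + ∑ c', X H ω v w c' * (1 - fr H ω v w c')) =
          U1 H p ε ω v c + U2 H p ε ω v c := by
        unfold U1 U2 Yf
        rw [Finset.sum_comm (f := fun c' w => aa p ε v w c * (X H ω v w c' * (1 - fr H ω v w c'))), ← Finset.sum_add_distrib]
        refine Finset.sum_congr rfl fun w _ => ?_
        rw [mul_add, Finset.mul_sum]
      rw [e]; linarith
    · push Not at hc
      have : ∀ w, pn H p ε ω v w c = 0 := fun w => by
        by_contra hne; exact (pn_ne hne).1 (hc w)
      simp only [this, Finset.sum_const_zero]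
      exact hW'0
  · intro v
    refine le_trans ?_ (h.deg v)
    refine Nat.cast_le.2 (Finset.card_le_card fun y hy => ?_)
    have hy' : (Hn H ω).Adj v y := (mem_filter.1 hy).2
    exact mem_filter.2 ⟨mem_univ _, hy'.1⟩
  · intro v
    refine le_trans ?_ (h.col v)
    refine Nat.cast_le.2 (Finset.card_le_card fun c hc => ?_)
    obtain ⟨y, hy⟩ := (mem_filter.1 hc).2
    exact mem_filter.2 ⟨mem_univ _, y, (pn_ne hy).1⟩

lemma extend (h : St H p D K P W) (ω : Sym2 V × C → Bool) (hω : wt (bm (bb p ε)) ω ≠ 0)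
    (hc : Col (Hn H ω) (pn H p ε ω)) : Col H p := by
  classical
  obtain ⟨γ, h1, h2⟩ := hc
  let R : Sym2 V → C → Prop := fun e c => ∃ x y, e = s(x, y) ∧ Got H ω x y c
  have hR : ∀ x y c, R s(x, y) c → Got H ω x y c := by
    rintro x y c ⟨x', y', e, hg⟩
    rcases Sym2.eq_iff.1 e with ⟨rfl, rfl⟩ | ⟨rfl, rfl⟩
    · exact hg
    · exact Got_symm hg
  let γ' : Sym2 V → C := fun e => if he : ∃ c, R e c then he.choose else γ e
  have hcase : ∀ x y, H.Adj x y → Got H ω x y (γ' s(x, y)) ∨ ((Hn H ω).Adj x y ∧ γ' s(x, y) = γ s(x, y)) := by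
    intro x y hxy
    by_cases he : ∃ c, R s(x, y) c
    · left
      simp only [γ', dif_pos he]
      exact hR x y _ he.choose_spec
    · right
      refine ⟨⟨hxy, fun c hc => he ⟨c, x, y, rfl, hc⟩⟩, ?_⟩
      simp only [γ', dif_neg he]
  refine ⟨γ', ?_, ?_⟩
  · intro x y hxy
    rcases hcase x y hxy with hg | ⟨ha, e⟩
    · have hx := hg.1
      have ht : ω (s(x, y), γ' s(x, y)) = true := by
        by_contra hcon
        unfold X at hx
        rw [if_neg (fun hh => hcon hh.2)] at hx
        norm_num at hx
      intro h0
      apply hω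
      unfold wt
      refine Finset.prod_eq_zero (mem_univ (s(x, y), γ' s(x, y))) ?_
      rw [ht]
      simp only [bm, if_true]
      rw [bb_mk h, h0, mul_zero]
    · rw [e]; exact (pn_ne (h1 x y ha)).1
  · intro x y z hyz hxy hxz e
    rcases hcase x y hxy with hg | ⟨ha, e1⟩ <;> rcases hcase x z hxz with hg' | ⟨ha', e2⟩
    · have := fr_one hg'.2.1 hyz
      rw [← e, hg.1] at this; norm_num at this
    · have h3 := (pn_ne (h1 x z ha')).2.1
      rw [← e2] at h3
      have := fr_one h3 hyz
      rw [← e, hg.1] at this; norm_num at this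
    · have h3 := (pn_ne (h1 x y ha)).2.1
      rw [← e1] at h3
      have := fr_one h3 hyz.symm
      rw [e, hg'.1] at this; norm_num at this
    · rw [e1, e2] at e
      exact h2 x y z hyz ha ha' e

end round

/-- the colouring theorem at local weight `W` -/
def SS (W : ℝ) : Prop := ∃ θ : ℝ, 0 < θ ∧ ∀ (V C : Type) [Fintype V] [Fintype C] [Nonempty C]
  (H : SimpleGraph V) (p : V → V → C → ℝ) (D K P : ℝ), St H p D K P W → 0 < P → P ≤ θ →
  (D + 1) ^ 3 * ((D + 2 * K) * Real.exp (-(θ / P))) ≤ 1 / 4 → Col H p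

lemma SS_base {W : ℝ} (hW : W ≤ 1 / 32) : SS W :=
  ⟨1, one_pos, fun _ _ _ _ _ _ _ _ _ _ h _ _ _ => final h hW⟩

lemma SS_step {W ε η t κ : ℝ} (hε : 0 < ε) (hε8 : ε ≤ 1 / 8) (hW0 : 0 < W) (hW : W ≤ 1)
    (hη : 0 < η) (hη1 : η ≤ 1 / 2) (ht : 0 < t) (ht1 : t ≤ 1) (hκ : κ ≤ 1)
    (hnum : ((W * (1 - ε * (1 - ε) ^ 2) / (1 - ε * W) + t) + (12 * ε ^ 2 * W + t)) / (1 - η) ≤ (1 - κ) * W)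
    (hS : SS ((1 - κ) * W)) : SS W := by
  classical
  obtain ⟨θ', hθ', hS⟩ := hS
  refine ⟨min (θ' / 4) (min (η ^ 2 / 4) (min (t ^ 2 / 20) (t / 2))), by positivity, ?_⟩
  intro V C _ _ _ H p D K P h hP hPθ hD
  by_cases hV : Nonempty V
  swap
  · exact ⟨fun _ => Classical.arbitrary C, fun x => (hV ⟨x⟩).elim, fun x => (hV ⟨x⟩).elim⟩
  set θ := min (θ' / 4) (min (η ^ 2 / 4) (min (t ^ 2 / 20) (t / 2))) with hθ
  have t0 : θ ≤ θ' / 4 := min_le_left _ _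
  have t1 : θ ≤ η ^ 2 / 4 := (min_le_right _ _).trans (min_le_left _ _)
  have t2 : θ ≤ t ^ 2 / 20 := (min_le_right _ _).trans ((min_le_right _ _).trans (min_le_left _ _))
  have t3 : θ ≤ t / 2 := (min_le_right _ _).trans ((min_le_right _ _).trans (min_le_right _ _))
  obtain ⟨ω, hω, hZ, hU⟩ := round_exists h hε.le hε8 hW hP hη (by linarith) ht ht1 t1 t2 t3 hD
  have hn := new_St h hε.le hε8 hW hη1 ω hZ hU (mul_nonneg (by linarith) hW0.le) hnum
  refine extend h ω hω (hS V C _ _ D K (4 * P) hn (by linarith) (by linarith) (le_trans ?_ hD))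
  · obtain ⟨v⟩ := hV
    have hD0 : 0 ≤ D := (Nat.cast_nonneg _).trans (h.deg v)
    have hK0 : 0 ≤ K := (Nat.cast_nonneg _).trans (h.col v)
    have : Real.exp (-(θ' / (4 * P))) ≤ Real.exp (-(θ / P)) := by
      apply Real.exp_le_exp.2
      rw [neg_le_neg_iff, ← div_div]
      exact div_le_div_of_nonneg_right t0 hP.le
    gcongr

end LK

namespace LK
open Finset

lemma num_bound {W δ ε : ℝ} (hδ : 0 < δ) (hδ1 : δ < 1) (hε : ε = δ / 100) (hW0 : 0 < W) (hW : W ≤ 1 - δ) :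
    ((W * (1 - ε * (1 - ε) ^ 2) / (1 - ε * W) + ε * δ * W / 20) + (12 * ε ^ 2 * W + ε * δ * W / 20)) /
      (1 - ε * δ / 10) ≤ (1 - ε * δ / 10) * W := by
  have hε0 : 0 < ε := by rw [hε]; positivity
  have hε1 : ε ≤ 1 / 100 := by rw [hε]; linarith
  have hed : 0 < ε * δ := mul_pos hε0 hδ
  have hed1 : ε * δ ≤ 1 / 100 := by nlinarith
  have heW : ε * W ≤ ε * (1 - δ) := mul_le_mul_of_nonneg_left hW hε0.le
  have hd : 0 < 1 - ε * W := by nlinarith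
  have h2 : ε ^ 2 = ε * δ / 100 := by rw [hε]; ring
  have key : W * (1 - ε * (1 - ε) ^ 2) / (1 - ε * W) ≤ W * (1 - ε * δ / 2) := by
    rw [div_le_iff₀ hd, mul_assoc]
    refine mul_le_mul_of_nonneg_left ?_ hW0.le
    have e1 : (1 - ε * δ / 2) * (1 - ε * (1 - δ)) ≤ (1 - ε * δ / 2) * (1 - ε * W) :=
      mul_le_mul_of_nonneg_left (by linarith) (by linarith)
    refine le_trans ?_ e1
    have e2 : 1 - ε * (1 - ε) ^ 2 ≤ 1 - ε + 2 * ε ^ 2 := by nlinarith [pow_pos hε0 3]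
    have e3 : 1 - ε + ε * δ / 2 ≤ (1 - ε * δ / 2) * (1 - ε * (1 - δ)) := by
      nlinarith [mul_pos (mul_pos hed hε0) (sub_pos.2 hδ1)]
    rw [h2] at e2
    linarith
  rw [div_le_iff₀ (by linarith), h2]
  have hw : 0 < ε * δ * W := mul_pos hed hW0
  nlinarith [mul_pos hw hed, sq_nonneg (ε * δ)]

lemma SS_all {δ : ℝ} (hδ : 0 < δ) (hδ1 : δ < 1) : SS (1 - δ) := by
  obtain ⟨ε, hε⟩ : ∃ ε, ε = δ / 100 := ⟨_, rfl⟩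
  have hε0 : 0 < ε := by rw [hε]; positivity
  have hε1 : ε ≤ 1 / 100 := by rw [hε]; linarith
  have hed : 0 < ε * δ := mul_pos hε0 hδ
  have hed1 : ε * δ ≤ 1 / 100 := by nlinarith
  have hk0 : 0 < 1 - ε * δ / 10 := by linarith
  have hk1 : 1 - ε * δ / 10 < 1 := by linarith
  have step : ∀ W : ℝ, 0 < W → W ≤ 1 - δ → SS ((1 - ε * δ / 10) * W) → SS W := by
    intro W hW0 hW hS
    have hw : 0 < ε * δ * W := mul_pos hed hW0
    exact SS_step hε0 (by linarith) hW0 (by linarith) (η := ε * δ / 10) (t := ε * δ * W / 20) (by linarith)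
      (by linarith) (by linarith) (by nlinarith) (by linarith) (num_bound hδ hδ1 hε hW0 hW) hS
  obtain ⟨n, hn⟩ := exists_pow_lt_of_lt_one (show (0 : ℝ) < 1 / 32 by norm_num) hk1
  have ind : ∀ n : ℕ, SS ((1 - ε * δ / 10) ^ n * (1 - δ)) → SS (1 - δ) := by
    intro n
    induction n with
    | zero => intro h; simpa using h
    | succ k ih =>
      intro h
      apply ih
      have hd : 0 < 1 - δ := by linarith
      refine step _ (by positivity) (mul_le_of_le_one_left hd.le (pow_le_one₀ hk0.le hk1.le)) ?_
      rw [← mul_assoc, ← pow_succ']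
      exact h
  refine ind n (SS_base ?_)
  have : 0 < (1 - ε * δ / 10) ^ n := by positivity
  nlinarith

end LK

namespace LK
open Finset

lemma degree_sum_le {V : Type} [Fintype V] [DecidableEq V] (G : SimpleGraph V) [DecidableRel G.Adj]
    {δ : ℝ} (hδ1 : δ < 1) (x : G.edgeFinset → ℝ) (hx : x ∈ (1 - δ) • matchingPolytope G) (v : V) :
    ∑ e : G.edgeFinset, (if v ∈ (e : Sym2 V) then x e else 0) ≤ 1 - δ := by
  obtain ⟨y, hy, rfl⟩ := hx
  have key : ∑ e : G.edgeFinset, (if v ∈ (e : Sym2 V) then y e else 0) ≤ 1 := by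
    have hsub : matchingPolytope G ⊆
        {z | ∑ e : G.edgeFinset, (if v ∈ (e : Sym2 V) then z e else 0) ≤ 1} := by
      refine convexHull_min ?_ ?_
      · rintro _ ⟨M, hM, rfl⟩
        simp only [Set.mem_ofPred_eq]
        have : ∀ e : G.edgeFinset, (if v ∈ (e : Sym2 V) then (if (e : Sym2 V) ∈ M then (1 : ℝ) else 0) else 0) =
            if v ∈ (e : Sym2 V) ∧ (e : Sym2 V) ∈ M then 1 else 0 := fun e => by
          rw [ite_and]
        rw [Finset.sum_congr rfl fun e _ => this e, Finset.sum_boole]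
        have : (univ.filter fun e : G.edgeFinset => v ∈ (e : Sym2 V) ∧ (e : Sym2 V) ∈ M).card ≤ 1 := by
          refine Finset.card_le_one.2 fun a ha b hb => ?_
          rw [mem_filter] at ha hb
          by_contra hne
          exact hM.2 a ha.2.2 b hb.2.2 (fun h => hne (Subtype.ext h)) v ⟨ha.2.1, hb.2.1⟩
        exact_mod_cast this
      · intro a ha b hb s t hs ht hst
        simp only [Set.mem_ofPred_eq] at ha hb ⊢
        have : ∀ e : G.edgeFinset, (if v ∈ (e : Sym2 V) then (s • a + t • b) e else 0) =
            s * (if v ∈ (e : Sym2 V) then a e else 0) + t * (if v ∈ (e : Sym2 V) then b e else 0) := fun e => by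
          split_ifs <;> simp
        rw [Finset.sum_congr rfl fun e _ => this e, Finset.sum_add_distrib, ← Finset.mul_sum, ← Finset.mul_sum]
        nlinarith
    exact hsub hy
  have : ∀ e : G.edgeFinset, (if v ∈ (e : Sym2 V) then ((1 - δ) • y) e else 0) =
      (1 - δ) * (if v ∈ (e : Sym2 V) then y e else 0) := fun e => by
    split_ifs <;> simp
  simp only [this]
  rw [← Finset.mul_sum]
  nlinarith

/-- sum over neighbours is bounded by sum over incident edges -/
lemma nbr_sum_le {V : Type} [Fintype V] [DecidableEq V] (G : SimpleGraph V) [DecidableRel G.Adj]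
    (f : Sym2 V → ℝ) (hf : ∀ e, 0 ≤ f e) (v : V) :
    ∑ w, (if G.Adj v w then f s(v, w) else 0) ≤
      ∑ e : G.edgeFinset, (if v ∈ (e : Sym2 V) then f e else 0) := by
  rw [Finset.sum_coe_sort G.edgeFinset (fun e => if v ∈ e then f e else 0), ← Finset.sum_filter,
    ← Finset.sum_filter]
  have hinj : Set.InjOn (fun w : V => s(v, w)) (univ.filter fun w => G.Adj v w) := by
    intro a _ b _ hab
    exact Sym2.congr_right.1 hab
  rw [← Finset.sum_image (f := f) hinj]
  refine Finset.sum_le_sum_of_subset_of_nonneg ?_ fun e _ _ => hf e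
  intro e he
  obtain ⟨w, hw, rfl⟩ := mem_image.1 he
  rw [mem_filter] at hw ⊢
  exact ⟨by rw [SimpleGraph.mem_edgeFinset]; exact hw.2, Sym2.mem_mk_left _ _⟩

/-- deterministic reduction -/
lemma top {θ δ Δ : ℝ} {k : ℕ} (hδ : 0 < δ) (hδ1 : δ < 1) {P : ℝ} (hP : 0 < P) (hPθ : P ≤ θ)
    (hΔ : 0 ≤ Δ) (hk : 0 < k) (hk1 : Δ / k ≤ δ / 2) (hPk : 1 / P ≤ k)
    (hnum : (Δ + 1) ^ 3 * ((Δ + 2 * (Δ * k)) * Real.exp (-(θ / P))) ≤ 1 / 4)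
    (hS : ∀ (V C : Type) [Fintype V] [Fintype C] [Nonempty C]
      (H : SimpleGraph V) (p : V → V → C → ℝ) (D K P : ℝ), St H p D K P (1 - δ / 2) → 0 < P → P ≤ θ →
      (D + 1) ^ 3 * ((D + 2 * K) * Real.exp (-(θ / P))) ≤ 1 / 4 → Col H p)
    (V : Type) [Fintype V] [DecidableEq V] (G : SimpleGraph V) [DecidableRel G.Adj] (L : Sym2 V → Finset ℕ)
    (hdeg : (G.maxDegree : ℝ) ≤ Δ) (hL : ∀ e ∈ G.edgeFinset, 1 / P ≤ ((L e).card : ℝ))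
    (hx : (fun e : G.edgeFinset => (1 : ℝ) / ((L (e : Sym2 V)).card : ℝ)) ∈ (1 - δ) • matchingPolytope G) :
    ∃ γ : Sym2 V → ℕ, IsLEdgeColouring G L γ := by
  classical
  have hex : ∀ e, ∃ t ⊆ L e, t.card = min (L e).card k := fun e => Finset.exists_subset_card_eq (min_le_left _ _)
  choose L' hL' hc' using hex
  let S : Finset ℕ := insert 0 (univ.biUnion L')
  have hmemS : ∀ e c, c ∈ L' e → c ∈ S := fun e c hc =>
    Finset.mem_insert_of_mem (mem_biUnion.2 ⟨e, mem_univ _, hc⟩)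
  let C : Type := {c // c ∈ S}
  have : Nonempty C := ⟨⟨0, Finset.mem_insert_self _ _⟩⟩
  let p : V → V → C → ℝ := fun v w c => if G.Adj v w ∧ (c : ℕ) ∈ L' s(v, w) then 1 / ((L' s(v, w)).card : ℝ) else 0
  have hPi : 0 < 1 / P := by positivity
  have hcard : ∀ v w, G.Adj v w → 1 / P ≤ ((L' s(v, w)).card : ℝ) := by
    intro v w h
    rw [hc', Nat.cast_min]
    exact le_min (hL _ (by rw [SimpleGraph.mem_edgeFinset]; exact h)) hPk
  have hkr : (0 : ℝ) < k := by exact_mod_cast hk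
  have hdegv : ∀ v, ((univ.filter fun y => G.Adj v y).card : ℝ) ≤ Δ := by
    intro v
    refine le_trans ?_ hdeg
    have := G.degree_le_maxDegree v
    rw [← SimpleGraph.card_neighborFinset_eq_degree, SimpleGraph.neighborFinset_eq_filter] at this
    exact_mod_cast this
  have hSt : St G p Δ (Δ * k) P (1 - δ / 2) := by
    refine ⟨?_, ?_, ?_, ?_, ?_, ?_, ?_, ?_⟩
    · intro x y c
      simp only [p]
      simp only [G.adj_comm x y, Sym2.eq_swap (a := x) (b := y)]
    · intro x y c
      simp only [p]
      split_ifs <;> positivity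
    · intro x y c h
      simp [p, h]
    · intro x y h
      simp only [p, h, true_and]
      have hpos := hPi.trans_le (hcard x y h)
      rw [← Finset.sum_filter, Finset.sum_const, nsmul_eq_mul]
      have : (univ.filter fun c : C => (c : ℕ) ∈ L' s(x, y)).card = (L' s(x, y)).card := by
        refine Finset.card_bij (fun c _ => (c : ℕ)) (fun c hc => (mem_filter.1 hc).2)
          (fun a _ b _ hab => Subtype.ext hab) (fun c hc => ⟨⟨c, hmemS _ c hc⟩, ?_, rfl⟩)
        exact mem_filter.2 ⟨mem_univ _, hc⟩
      rw [this]
      field_simp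
    · intro x y c
      simp only [p]
      split_ifs with h
      · have := one_div_le_one_div_of_le hPi (hcard x y h.1)
        rwa [one_div_one_div] at this
      · exact hP.le
    · intro x c
      have b1 : ∀ y, p x y c ≤ (if G.Adj x y then 1 / ((L s(x, y)).card : ℝ) else 0) +
          (if G.Adj x y then 1 / (k : ℝ) else 0) := by
        intro y
        simp only [p]
        by_cases h : G.Adj x y
        · simp only [h, true_and, if_true]
          have e1 : (0 : ℝ) ≤ 1 / ((L s(x, y)).card : ℝ) := by positivity
          have e2 : (0 : ℝ) ≤ 1 / (k : ℝ) := by positivity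
          split_ifs
          · rw [hc']
            rcases min_choice (L s(x, y)).card k with e | e <;> rw [e] <;> linarith
          · linarith
        · simp [h]
      refine (Finset.sum_le_sum fun y _ => b1 y).trans ?_
      rw [Finset.sum_add_distrib]
      have s1 := (nbr_sum_le G (fun e => 1 / ((L e).card : ℝ)) (fun e => by positivity) x).trans
        (degree_sum_le G hδ1 _ hx x)
      have s2 : ∑ y, (if G.Adj x y then 1 / (k : ℝ) else 0) ≤ δ / 2 := by
        rw [← Finset.sum_filter, Finset.sum_const, nsmul_eq_mul]
        refine le_trans ?_ hk1
        rw [div_eq_mul_one_div Δ]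
        exact mul_le_mul_of_nonneg_right (hdegv x) (by positivity)
      linarith
    · intro x
      convert hdegv x
    · intro x
      have hsub : ((univ.filter fun c : C => ∃ y, p x y c ≠ 0).image (fun c : C => (c : ℕ))) ⊆
          (univ.filter fun y => G.Adj x y).biUnion fun y => L' s(x, y) := by
        intro c hc
        obtain ⟨c', hc1, rfl⟩ := mem_image.1 hc
        obtain ⟨y, hy⟩ := (mem_filter.1 hc1).2
        have : G.Adj x y ∧ (c' : ℕ) ∈ L' s(x, y) := by
          by_contra hcon; exact hy (if_neg hcon)
        exact mem_biUnion.2 ⟨y, mem_filter.2 ⟨mem_univ _, this.1⟩, this.2⟩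
      have h1 := Finset.card_le_card hsub
      rw [Finset.card_image_of_injective _ Subtype.val_injective] at h1
      have h2 := h1.trans (Finset.card_biUnion_le_card_mul _ _ k fun y _ => by rw [hc']; exact min_le_right _ _)
      have h3 : ((univ.filter fun c : C => ∃ y, p x y c ≠ 0).card : ℝ) ≤ ((univ.filter fun y => G.Adj x y).card : ℝ) * k := by
        exact_mod_cast h2
      refine le_trans ?_ (h3.trans (mul_le_mul_of_nonneg_right (hdegv x) hkr.le))
      exact le_of_eq (by congr)
  obtain ⟨γ, g1, g2⟩ := hS V C G p Δ (Δ * k) P hSt hP hPθ hnum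
  refine ⟨fun e => (γ e : ℕ), ?_, ?_⟩
  · intro e
    induction e using Sym2.ind with
    | _ x y =>
      intro h
      have := g1 x y h
      by_contra hcon
      exact this (if_neg fun hh => hcon (hL' _ hh.2))
  · rintro e he f hf hne ⟨v, hve, hvf⟩ heq
    obtain ⟨y, rfl⟩ := Sym2.mem_iff_exists.1 hve
    obtain ⟨z, rfl⟩ := Sym2.mem_iff_exists.1 hvf
    exact g2 v y z (fun h => hne (by rw [h])) he hf (Subtype.ext heq)

end LK

theorem stmt_4 :
    ∀ δ ν : ℝ, 0 < δ → δ < 1 → 0 < ν →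
    ∃ Δ₀ : ℝ, ∀ Δ : ℝ, Δ₀ ≤ Δ →
    ∀ (V : Type) [Fintype V] [DecidableEq V]
      (G : SimpleGraph V) [DecidableRel G.Adj] (L : Sym2 V → Finset ℕ),
      (G.maxDegree : ℝ) ≤ Δ →
      -- (i)
      (∀ e ∈ G.edgeFinset, (Real.log Δ) ^ (25 : ℕ) ≤ ((L e).card : ℝ)) →
      -- (ii)
      (fun e : G.edgeFinset => (1 : ℝ) / ((L (e : Sym2 V)).card : ℝ)) ∈
        (1 - δ) • matchingPolytope G →
      ∃ γ : Sym2 V → ℕ, IsLEdgeColouring G L γ := by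
  intro δ ν hδ hδ1 _
  obtain ⟨θ, hθ, hS⟩ := LK.SS_all (δ := δ / 2) (by linarith) (by linarith)
  have l1 : ∀ᶠ Δ : ℝ in Filter.atTop, Real.log Δ ^ 25 ≤ Δ := by
    have := (Real.isLittleO_pow_log_id_atTop (n := 25)).bound (show (0 : ℝ) < 1 by norm_num)
    filter_upwards [this, Filter.eventually_ge_atTop (1 : ℝ)] with Δ h h1
    rw [one_mul, Real.norm_eq_abs, Real.norm_eq_abs, id, abs_of_nonneg (show (0 : ℝ) ≤ Δ by linarith)] at h
    exact (le_abs_self _).trans h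
  have l2 : ∀ᶠ Δ : ℝ in Filter.atTop, 1 + 1 / θ + 7 / θ ≤ Real.log Δ :=
    Real.tendsto_log_atTop.eventually_ge_atTop _
  obtain ⟨Δ₀, hΔ₀⟩ := Filter.eventually_atTop.1
    (((l1.and l2).and (Filter.eventually_ge_atTop (2 / δ))).and (Filter.eventually_ge_atTop (160 : ℝ)))
  refine ⟨Δ₀, fun Δ hΔ V _ _ G _ L hdeg hL hx => ?_⟩
  obtain ⟨⟨⟨h1, h2⟩, h3⟩, h4⟩ := hΔ₀ Δ hΔ
  have hθ1 : 0 < 1 / θ := by positivity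
  have hθ7 : 0 < 7 / θ := by positivity
  have hl1 : 1 ≤ Real.log Δ := by linarith
  have hlpos : 0 < Real.log Δ := by linarith
  have hl24 : Real.log Δ ≤ Real.log Δ ^ 24 := le_self_pow₀ hl1 (by norm_num)
  have hl25 : Real.log Δ ≤ Real.log Δ ^ 25 := le_self_pow₀ hl1 (by norm_num)
  have hk2 : 2 * Δ / δ ≤ (⌈2 * Δ / δ⌉₊ : ℝ) := Nat.le_ceil _
  have hkpos : 0 < 2 * Δ / δ := by positivity
  have hk3 : (⌈2 * Δ / δ⌉₊ : ℝ) < 2 * Δ / δ + 1 := Nat.ceil_lt_add_one hkpos.le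
  have hkk : Δ ≤ 2 * Δ / δ := by
    rw [le_div_iff₀ hδ]; nlinarith
  have hk4 : 2 * Δ / δ ≤ Δ ^ 2 := by
    have : 2 * Δ / δ = (2 / δ) * Δ := by ring
    rw [this, sq]
    exact mul_le_mul_of_nonneg_right h3 (by linarith)
  refine LK.top (θ := θ) (δ := δ) (Δ := Δ) (k := ⌈2 * Δ / δ⌉₊) hδ hδ1 (P := 1 / Real.log Δ ^ 25) (by positivity) ?_
    (by linarith) (Nat.ceil_pos.2 hkpos) ?_ ?_ ?_ hS V G L hdeg ?_ hx
  · rw [div_le_iff₀ (by positivity)]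
    have : 1 / θ ≤ Real.log Δ ^ 25 := by linarith
    rw [div_le_iff₀ hθ] at this
    linarith
  · rw [div_le_iff₀ (by linarith)]
    rw [div_le_iff₀ hδ] at hk2
    linarith
  · rw [one_div_one_div]; linarith
  · have he : Real.exp (-(θ / (1 / Real.log Δ ^ 25))) ≤ 1 / Δ ^ 7 := by
      have : Δ ^ 7 = Real.exp (7 * Real.log Δ) := by
        rw [show (7 : ℝ) = ((7 : ℕ) : ℝ) by norm_num, ← Real.log_pow, Real.exp_log (by positivity)]
      rw [this, one_div (Real.exp _), ← Real.exp_neg]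
      apply Real.exp_le_exp.2
      rw [neg_le_neg_iff, div_div_eq_mul_div, div_one]
      have h7 : 7 / θ ≤ Real.log Δ ^ 24 := by linarith
      rw [div_le_iff₀ hθ] at h7
      calc 7 * Real.log Δ ≤ (Real.log Δ ^ 24 * θ) * Real.log Δ := mul_le_mul_of_nonneg_right h7 hlpos.le
        _ = θ * Real.log Δ ^ 25 := by ring
    have hk5 : (⌈2 * Δ / δ⌉₊ : ℝ) ≤ 2 * Δ ^ 2 := by nlinarith
    have hk0 : (0 : ℝ) ≤ (⌈2 * Δ / δ⌉₊ : ℝ) := Nat.cast_nonneg _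
    have hΔ0 : 0 < Δ := by linarith
    calc (Δ + 1) ^ 3 * ((Δ + 2 * (Δ * (⌈2 * Δ / δ⌉₊ : ℝ))) * Real.exp (-(θ / (1 / Real.log Δ ^ 25))))
        ≤ (2 * Δ) ^ 3 * ((Δ ^ 3 + 2 * (Δ * (2 * Δ ^ 2))) * (1 / Δ ^ 7)) := by
          have : Δ ≤ Δ ^ 3 := le_self_pow₀ (by linarith) (by norm_num)
          have : Δ + 1 ≤ 2 * Δ := by linarith
          gcongr
      _ = 40 / Δ := by field_simp; ring
      _ ≤ 1 / 4 := by rw [div_le_iff₀ hΔ0]; linarith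
  · rw [one_div_one_div]; exact hL
end

section
/- Let G = (V,E) be a finite k-uniform linear hypergraph with an edge correspondence σ and weighted lists of colours (L,μ) assigned to its edges, where all lists L(e) are finite. Let ℓ, n > 0 be such that, for all edges e ∈ E: (i) ℓ/n ≥ 3ek, (ii) |L(e)|_μ ≥ ℓ, and (iii) |N_{G,L,σ}(e,v,c)|_μ ≤ n for all v ∈ e and c ∈ L(e). Then G is (L,σ)-colourable. -/
/-- Two hyperedges are incident if they are distinct and intersect. -/
def HIncident {V : Type} [DecidableEq V] (e f : Finset V) : Prop :=
  e ≠ f ∧ (e ∩ f).Nonempty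

instance {V : Type} [DecidableEq V] (e f : Finset V) : Decidable (HIncident e f) :=
  inferInstanceAs (Decidable (e ≠ f ∧ (e ∩ f).Nonempty))

/-- `σ` is an edge correspondence on the edge set `E`: for incident edges,
`σ_{f,e}` is the inverse of `σ_{e,f}`. -/
def IsEdgeCorrespondence {V : Type} [DecidableEq V] (E : Finset (Finset V))
    (σ : Finset V → Finset V → ℕ ≃ ℕ) : Prop :=
  ∀ e ∈ E, ∀ f ∈ E, HIncident e f → σ f e = (σ e f).symm

/-- The weighted size `|N_{G,L,σ}(e,v,c)|_μ` of the colour neighbourhood of `(e,v,c)`: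
the `μ`-weight of all pairs `(f, c')` with `v ∈ f`, `f ≠ e`, `c' ∈ L f` and
`(f, c')` blocking `(e, c)`, i.e. `σ f e c' = c`. -/
def NWeight {V : Type} [DecidableEq V] (E : Finset (Finset V))
    (L : Finset V → Finset ℕ) (μ : Finset V → ℕ → ℝ)
    (σ : Finset V → Finset V → ℕ ≃ ℕ) (e : Finset V) (v : V) (c : ℕ) : ℝ :=
  ∑ f ∈ E.filter (fun f => v ∈ f ∧ f ≠ e),
    ∑ c' ∈ (L f).filter (fun c' => σ f e c' = c), μ f c'

/-- An `(L,σ)`-colouring of the hypergraph with edge set `E`. -/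
def IsLσColouring {V : Type} [DecidableEq V] (E : Finset (Finset V))
    (L : Finset V → Finset ℕ) (σ : Finset V → Finset V → ℕ ≃ ℕ)
    (γ : Finset V → ℕ) : Prop :=
  (∀ e ∈ E, γ e ∈ L e) ∧
  ∀ e ∈ E, ∀ f ∈ E, HIncident e f → σ e f (γ e) ≠ γ f


open Finset in
/-- Resampling one coordinate does not change the expectation. -/
lemma resample {ι : Type} [Fintype ι] [DecidableEq ι] (t : ι → Finset ℕ) (p : ι → ℕ → ℝ)
    (e : ι) (h1 : ∑ c ∈ t e, p e c = 1) (H : (ι → ℕ) → ℝ) :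
    ∑ γ ∈ Fintype.piFinset t, (∏ i, p i (γ i)) * H γ =
    ∑ γ ∈ Fintype.piFinset t, (∏ i, p i (γ i)) *
      ∑ c ∈ t e, p e c * H (Function.update γ e c) := by
  have hL : ∑ γ ∈ Fintype.piFinset t, (∏ i, p i (γ i)) * H γ =
      ∑ x ∈ Fintype.piFinset t ×ˢ t e, (∏ i, p i (x.1 i)) * H x.1 * p e x.2 := by
    rw [Finset.sum_product]
    refine Finset.sum_congr rfl fun γ _ => ?_
    simp only
    rw [← Finset.mul_sum, h1, mul_one]
  have hR : ∑ γ ∈ Fintype.piFinset t, (∏ i, p i (γ i)) *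
      ∑ c ∈ t e, p e c * H (Function.update γ e c) =
      ∑ x ∈ Fintype.piFinset t ×ˢ t e,
        (∏ i, p i (x.1 i)) * (p e x.2 * H (Function.update x.1 e x.2)) := by
    rw [Finset.sum_product]
    refine Finset.sum_congr rfl fun γ _ => ?_
    simp only
    rw [← Finset.mul_sum]
  rw [hL, hR]
  have key : ∀ x ∈ Fintype.piFinset t ×ˢ t e,
      (Function.update x.1 e x.2, x.1 e) ∈ Fintype.piFinset t ×ˢ t e := by
    intro x hx
    rw [Finset.mem_product, Fintype.mem_piFinset] at hx ⊢
    refine ⟨fun i => ?_, hx.1 e⟩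
    by_cases hi : i = e
    · subst hi; simpa using hx.2
    · simpa [hi] using hx.1 i
  refine Finset.sum_nbij' (fun x => (Function.update x.1 e x.2, x.1 e))
    (fun x => (Function.update x.1 e x.2, x.1 e)) key key ?_ ?_ ?_
  · intro x _; simp
  · intro x _; simp
  · intro x _
    simp only [Function.update_idem, Function.update_eq_self]
    rw [← Finset.mul_prod_erase univ (fun i => p i (x.1 i)) (mem_univ e),
      ← Finset.mul_prod_erase univ (fun i => p i (Function.update x.1 e x.2 i)) (mem_univ e)]
    have : ∏ i ∈ univ.erase e, p i (Function.update x.1 e x.2 i)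
        = ∏ i ∈ univ.erase e, p i (x.1 i) := by
      refine Finset.prod_congr rfl fun i hi => ?_
      rw [Function.update_of_ne (Finset.ne_of_mem_erase hi)]
    rw [this]
    simp only [Function.update_self]
    ring

/-- Properness of a colouring on a subset. -/
def ProperOn {ι : Type} (R : ι → ι → ℕ → ℕ → Prop) (S : Finset ι) (γ : ι → ℕ) : Prop :=
  ∀ e ∈ S, ∀ f ∈ S, ¬ R e f (γ e) (γ f)

lemma properOn_update {ι : Type} [DecidableEq ι] (R : ι → ι → ℕ → ℕ → Prop) (S : Finset ι)
    (γ : ι → ℕ) (e : ι) (he : e ∉ S) (c : ℕ) :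
    ProperOn R S (Function.update γ e c) ↔ ProperOn R S γ := by
  unfold ProperOn
  refine forall₂_congr fun a ha => forall₂_congr fun b hb => ?_
  rw [Function.update_of_ne (ne_of_mem_of_not_mem ha he),
    Function.update_of_ne (ne_of_mem_of_not_mem hb he)]

open Finset Classical in
/-- The probability that a random colouring is proper on `S`. -/
noncomputable def ZP {ι : Type} [Fintype ι] (t : ι → Finset ℕ) (p : ι → ℕ → ℝ)
    (R : ι → ι → ℕ → ℕ → Prop) (S : Finset ι) : ℝ :=
  ∑ γ ∈ Fintype.piFinset t, (∏ i, p i (γ i)) * (if ProperOn R S γ then 1 else 0)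

open Finset Classical in
lemma ZP_step {ι : Type} [Fintype ι] (t : ι → Finset ℕ) (p : ι → ℕ → ℝ)
    (R : ι → ι → ℕ → ℕ → Prop)
    (hp : ∀ e, ∀ c ∈ t e, 0 ≤ p e c) (h1 : ∀ e, ∑ c ∈ t e, p e c = 1)
    (hsymm : ∀ e f c d, R e f c d → R f e d c)
    (hirr : ∀ e c d, ¬ R e e c d)
    (hsum : ∀ e, ∑ f, ∑ d ∈ t f, p f d * ∑ c ∈ t e, p e c * (if R e f c d then 1 else 0) ≤ 1 / 4)
    (S : Finset ι) : ∀ e, e ∉ S → ZP t p R S ≤ 2 * ZP t p R (insert e S) := by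
  induction S using Finset.strongInduction with
  | H S ih =>
  intro e he
  have hw : ∀ γ ∈ Fintype.piFinset t, 0 ≤ ∏ i, p i (γ i) := fun γ hγ =>
    Finset.prod_nonneg fun i _ => hp i _ (Fintype.mem_piFinset.1 hγ i)
  have hZ : ∀ T, 0 ≤ ZP t p R T := fun T =>
    Finset.sum_nonneg fun γ hγ => mul_nonneg (hw γ hγ) (by split_ifs <;> norm_num)
  have hpair : ∀ f ∈ S, ∑ γ ∈ Fintype.piFinset t, (∏ i, p i (γ i)) *
      ((if R e f (γ e) (γ f) then 1 else 0) * (if ProperOn R (S.erase f) γ then 1 else 0)) =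
      (∑ d ∈ t f, p f d * ∑ c ∈ t e, p e c * (if R e f c d then 1 else 0)) *
        ZP t p R (S.erase f) := by
    intro f hf
    have hef : f ≠ e := ne_of_mem_of_not_mem hf he
    rw [resample t p e (h1 e), resample t p f (h1 f)]
    rw [ZP, Finset.mul_sum]
    refine Finset.sum_congr rfl fun γ _ => ?_
    rw [mul_left_comm]
    congr 1
    rw [Finset.sum_mul]
    refine Finset.sum_congr rfl fun d _ => ?_
    rw [mul_assoc]
    congr 1
    rw [Finset.sum_mul]
    refine Finset.sum_congr rfl fun c _ => ?_
    rw [mul_assoc]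
    congr 1
    simp only [properOn_update R (S.erase f) _ e (fun h => he (Finset.mem_of_mem_erase h)),
      properOn_update R (S.erase f) _ f (Finset.notMem_erase f S),
      Function.update_self, Function.update_of_ne hef]
  have hle : ZP t p R S ≤ ZP t p R (insert e S) + ∑ f ∈ S,
      ∑ γ ∈ Fintype.piFinset t, (∏ i, p i (γ i)) *
      ((if R e f (γ e) (γ f) then 1 else 0) * (if ProperOn R (S.erase f) γ then 1 else 0)) := by
    rw [Finset.sum_comm, ZP, ZP, ← Finset.sum_add_distrib]
    refine Finset.sum_le_sum fun γ hγ => ?_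
    rw [← Finset.mul_sum, ← mul_add]
    refine mul_le_mul_of_nonneg_left ?_ (hw γ hγ)
    have hnn : ∀ f ∈ S, (0:ℝ) ≤ (if R e f (γ e) (γ f) then 1 else 0) *
        (if ProperOn R (S.erase f) γ then 1 else 0) := fun f _ =>
      mul_nonneg (by split_ifs <;> norm_num) (by split_ifs <;> norm_num)
    have hnn' := Finset.sum_nonneg hnn
    by_cases hS : ProperOn R S γ
    · by_cases hI : ProperOn R (insert e S) γ
      · rw [if_pos hS, if_pos hI]; linarith
      · have : ∃ f ∈ S, R e f (γ e) (γ f) := by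
          by_contra hno
          push Not at hno
          apply hI
          intro a ha b hb
          rcases Finset.mem_insert.1 ha with rfl | ha'
          · rcases Finset.mem_insert.1 hb with rfl | hb
            · exact hirr _ _ _
            · exact hno b hb
          · rcases Finset.mem_insert.1 hb with rfl | hb
            · exact fun h => hno a ha' (hsymm _ _ _ _ h)
            · exact hS a ha' b hb
        obtain ⟨f, hf, hR⟩ := this
        have h2 := Finset.single_le_sum hnn hf
        have h3 : ProperOn R (S.erase f) γ := fun a ha b hb =>
          hS a (Finset.mem_of_mem_erase ha) b (Finset.mem_of_mem_erase hb)
        rw [if_pos hR, if_pos h3] at h2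
        rw [if_pos hS, if_neg hI]; linarith
    · rw [if_neg hS]
      have : (0:ℝ) ≤ if ProperOn R (insert e S) γ then 1 else 0 := by split_ifs <;> norm_num
      linarith
  rw [Finset.sum_congr rfl hpair] at hle
  have hA : ∀ f, 0 ≤ ∑ d ∈ t f, p f d * ∑ c ∈ t e, p e c * (if R e f c d then (1:ℝ) else 0) :=
    fun f => Finset.sum_nonneg fun d hd => mul_nonneg (hp f d hd) <|
      Finset.sum_nonneg fun c hc => mul_nonneg (hp e c hc) (by split_ifs <;> norm_num)
  have h4 : ∑ f ∈ S, (∑ d ∈ t f, p f d * ∑ c ∈ t e, p e c * (if R e f c d then (1:ℝ) else 0)) *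
        ZP t p R (S.erase f) ≤ ∑ f ∈ S, (∑ d ∈ t f, p f d *
          ∑ c ∈ t e, p e c * (if R e f c d then (1:ℝ) else 0)) * (2 * ZP t p R S) := by
    refine Finset.sum_le_sum fun f hf => mul_le_mul_of_nonneg_left ?_ (hA f)
    have := ih (S.erase f) (Finset.erase_ssubset hf) f (Finset.notMem_erase f S)
    rwa [Finset.insert_erase hf] at this
  rw [← Finset.sum_mul] at h4
  have h5 : ∑ f ∈ S, (∑ d ∈ t f, p f d *
          ∑ c ∈ t e, p e c * (if R e f c d then (1:ℝ) else 0)) ≤ 1 / 4 :=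
    (Finset.sum_le_sum_of_subset_of_nonneg (Finset.subset_univ S) fun f _ _ => hA f).trans (hsum e)
  have h6 := mul_le_mul_of_nonneg_right h5 (mul_nonneg zero_le_two (hZ S))
  linarith

open Finset Classical in
lemma exists_proper {ι : Type} [Fintype ι] (t : ι → Finset ℕ) (p : ι → ℕ → ℝ)
    (R : ι → ι → ℕ → ℕ → Prop)
    (hp : ∀ e, ∀ c ∈ t e, 0 ≤ p e c) (h1 : ∀ e, ∑ c ∈ t e, p e c = 1)
    (hsymm : ∀ e f c d, R e f c d → R f e d c)
    (hirr : ∀ e c d, ¬ R e e c d)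
    (hsum : ∀ e, ∑ f, ∑ d ∈ t f, p f d * ∑ c ∈ t e, p e c * (if R e f c d then 1 else 0) ≤ 1 / 4) :
    ∃ γ : ι → ℕ, (∀ e, γ e ∈ t e) ∧ ∀ e f, ¬ R e f (γ e) (γ f) := by
  have hpos : ∀ S, 0 < ZP t p R S := by
    intro S
    induction S using Finset.induction_on with
    | empty =>
      have : ZP t p R ∅ = 1 := by
        have hE : ∀ γ, ProperOn R ∅ γ := fun γ a ha => absurd ha (Finset.notMem_empty a)
        simp only [ZP, hE, if_true, mul_one]
        rw [← Finset.prod_univ_sum]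
        simp [h1]
      rw [this]; exact one_pos
    | insert e S he ih =>
      have := ZP_step t p R hp h1 hsymm hirr hsum S e he
      linarith
  obtain ⟨γ, hγ, hne⟩ := Finset.exists_ne_zero_of_sum_ne_zero (hpos univ).ne'
  refine ⟨γ, Fintype.mem_piFinset.1 hγ, fun e f => ?_⟩
  by_cases h : ProperOn R univ γ
  · exact h e (mem_univ e) f (mem_univ f)
  · simp [h] at hne

theorem stmt_5 :
    ∀ (V : Type) [Fintype V] [DecidableEq V] (k : ℕ)
      (E : Finset (Finset V)) (σ : Finset V → Finset V → ℕ ≃ ℕ)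
      (L : Finset V → Finset ℕ) (μ : Finset V → ℕ → ℝ) (ℓ n : ℝ),
      -- G is k-uniform
      (∀ e ∈ E, e.card = k) →
      -- G is linear
      (∀ e ∈ E, ∀ f ∈ E, e ≠ f → (e ∩ f).card ≤ 1) →
      IsEdgeCorrespondence E σ →
      -- (L, μ) is an assignment of weighted lists: weights lie in (0,1]
      (∀ e ∈ E, ∀ c ∈ L e, 0 < μ e c ∧ μ e c ≤ 1) →
      0 < ℓ → 0 < n →
      -- (i)
      3 * Real.exp 1 * k ≤ ℓ / n →
      -- (ii)
      (∀ e ∈ E, ℓ ≤ ∑ c ∈ L e, μ e c) →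
      -- (iii)
      (∀ e ∈ E, ∀ v ∈ e, ∀ c ∈ L e, NWeight E L μ σ e v c ≤ n) →
      ∃ γ : Finset V → ℕ, IsLσColouring E L σ γ := by
  classical
  intro V _ _ k E σ L μ ℓ n hk _ hσ hμ hℓ hn hi hii hiii
  have hW : ∀ e ∈ E, 0 < ∑ c ∈ L e, μ e c := fun e he => hℓ.trans_le (hii e he)
  have hkn : k * n / ℓ ≤ 1 / 4 := by
    rw [le_div_iff₀ hn] at hi
    rw [div_le_iff₀ hℓ]
    have h2 : (2:ℝ) ≤ Real.exp 1 := by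
      have := Real.add_one_le_exp (1:ℝ); linarith
    have h3 : (0:ℝ) ≤ k * n := mul_nonneg (Nat.cast_nonneg k) hn.le
    nlinarith [mul_le_mul_of_nonneg_right h2 h3]
  -- pointwise bound
  have hpt : ∀ e ∈ E, ∀ c ∈ L e,
      ∑ f ∈ E, ∑ d ∈ L f, (μ f d / ∑ x ∈ L f, μ f x) *
        (if HIncident e f ∧ σ e f c = d then 1 else 0) ≤ 1 / 4 := by
    intro e he c hc
    have ha : ∀ f ∈ E, 0 ≤ ∑ d ∈ (L f).filter (fun d => σ f e d = c), μ f d := fun f hf =>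
      Finset.sum_nonneg fun d hd => (hμ f hf d (Finset.mem_filter.1 hd).1).1.le
    have hN : ∑ v ∈ e, NWeight E L μ σ e v c ≤ k * n := by
      have := Finset.sum_le_card_nsmul e (fun v => NWeight E L μ σ e v c) n
        (fun v hv => hiii e he v hv c hc)
      rwa [hk e he, nsmul_eq_mul] at this
    have hbound : ∑ f ∈ E, ∑ d ∈ L f, (μ f d / ∑ x ∈ L f, μ f x) *
        (if HIncident e f ∧ σ e f c = d then 1 else 0) ≤
        (∑ v ∈ e, NWeight E L μ σ e v c) / ℓ := by
      simp only [NWeight, Finset.sum_filter (s := E)]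
      rw [Finset.sum_comm, Finset.sum_div]
      refine Finset.sum_le_sum fun f hf => ?_
      have hnn : ∀ v ∈ e, 0 ≤ if v ∈ f ∧ f ≠ e then
          ∑ d ∈ (L f).filter (fun d => σ f e d = c), μ f d else 0 := by
        intro v _
        split_ifs
        · exact ha f hf
        · exact le_rfl
      by_cases hInc : HIncident e f
      · obtain ⟨v, hv⟩ := hInc.2
        rw [Finset.mem_inter] at hv
        have h1 := Finset.single_le_sum hnn hv.1
        rw [if_pos ⟨hv.2, hInc.1.symm⟩] at h1
        refine le_trans ?_ (div_le_div_of_nonneg_right h1 hℓ.le)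
        rw [Finset.sum_filter, Finset.sum_div]
        refine Finset.sum_le_sum fun d hd => ?_
        have hiff : σ e f c = d ↔ σ f e d = c := by
          rw [hσ e he f hf hInc, Equiv.symm_apply_eq, eq_comm]
        by_cases hd' : σ f e d = c
        · rw [if_pos ⟨hInc, hiff.2 hd'⟩, if_pos hd', mul_one]
          exact div_le_div_of_nonneg_left (hμ f hf d hd).1.le hℓ (hii f hf)
        · rw [if_neg (fun h => hd' (hiff.1 h.2)), if_neg hd']
          simp
      · simp only [hInc, false_and, if_false, mul_zero, Finset.sum_const_zero]
        exact div_nonneg (Finset.sum_nonneg hnn) hℓ.le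
    exact hbound.trans ((div_le_div_of_nonneg_right hN hℓ.le).trans hkn)
  obtain ⟨γ, hγ, hR⟩ := exists_proper (ι := {e // e ∈ E}) (fun e => L e.1)
    (fun e c => μ e.1 c / ∑ x ∈ L e.1, μ e.1 x)
    (fun e f c d => HIncident e.1 f.1 ∧ σ e.1 f.1 c = d)
    (fun e c hc => div_nonneg (hμ e.1 e.2 c hc).1.le (hW e.1 e.2).le)
    (fun e => by rw [← Finset.sum_div, div_self (hW e.1 e.2).ne'])
    (by
      rintro ⟨e, he⟩ ⟨f, hf⟩ c d ⟨h1, h2⟩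
      refine ⟨⟨h1.1.symm, by rw [Finset.inter_comm]; exact h1.2⟩, ?_⟩
      simp only at h1 h2 ⊢
      rw [hσ e he f hf h1, ← h2, Equiv.symm_apply_apply])
    (fun e c d h => h.1.1 rfl)
    (by
      rintro ⟨e, he⟩
      simp only
      refine le_of_eq_of_le (b := ∑ f ∈ E, ∑ d ∈ L f, (μ f d / ∑ x ∈ L f, μ f x) *
        ∑ c ∈ L e, (μ e c / ∑ x ∈ L e, μ e x) *
          (if HIncident e f ∧ σ e f c = d then (1:ℝ) else 0)) ?_ ?_
      · rw [← Finset.sum_coe_sort E]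
        congr!
      have : ∑ f ∈ E, ∑ d ∈ L f, (μ f d / ∑ x ∈ L f, μ f x) *
          ∑ c ∈ L e, (μ e c / ∑ x ∈ L e, μ e x) *
          (if HIncident e f ∧ σ e f c = d then (1:ℝ) else 0) =
          ∑ c ∈ L e, (μ e c / ∑ x ∈ L e, μ e x) * ∑ f ∈ E, ∑ d ∈ L f,
            (μ f d / ∑ x ∈ L f, μ f x) *
            (if HIncident e f ∧ σ e f c = d then (1:ℝ) else 0) := by
        simp only [Finset.mul_sum]
        rw [Finset.sum_comm (s := L e) (t := E)]
        refine Finset.sum_congr rfl fun f _ => ?_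
        rw [Finset.sum_comm (s := L e) (t := L f)]
        exact Finset.sum_congr rfl fun d _ => Finset.sum_congr rfl fun c _ => by ring
      rw [this]
      refine (Finset.sum_le_sum fun c hc => mul_le_mul_of_nonneg_left (hpt e he c hc)
        (div_nonneg (hμ e he c hc).1.le (hW e he).le)).trans ?_
      rw [← Finset.sum_mul, ← Finset.sum_div, div_self (hW e he).ne', one_mul])
  refine ⟨fun e => if h : e ∈ E then γ ⟨e, h⟩ else 0, ?_, ?_⟩
  · intro e he
    simp only [he, dif_pos]
    exact hγ ⟨e, he⟩
  · intro e he f hf hInc h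
    simp only [he, hf, dif_pos] at h
    exact hR ⟨e, he⟩ ⟨f, hf⟩ ⟨hInc, h⟩
end

section
/- Let G = (V,E) be a finite k-uniform linear hypergraph with a vertex correspondence σ and weighted lists of colours (L,μ) assigned to its vertices, where each list L(v) is finite. Let ℓ, n > 0 be such that: (i) ℓ/n ≥ 3e, (ii) |L(v)|_μ ≥ ℓ for all v ∈ V, and (iii) |N_{G,L,σ}(v,c)|_μ ≤ n for all v ∈ V and c ∈ L(v). Then G has an (L,σ)-colouring. -/
/-- Two vertices of the hypergraph with edge set `E` are adjacent if they are distinct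
and some edge contains both. -/
def HAdj {V : Type} (E : Finset (Finset V)) (u v : V) : Prop :=
  u ≠ v ∧ ∃ e ∈ E, u ∈ e ∧ v ∈ e

instance {V : Type} [DecidableEq V] (E : Finset (Finset V)) (u v : V) :
    Decidable (HAdj E u v) :=
  inferInstanceAs (Decidable (u ≠ v ∧ ∃ e ∈ E, u ∈ e ∧ v ∈ e))

/-- `σ` is a vertex correspondence: for adjacent vertices, `σ_{v,u}` is the inverse
of `σ_{u,v}`. -/
def IsVertexCorrespondence {V : Type} (E : Finset (Finset V))
    (σ : V → V → ℕ ≃ ℕ) : Prop :=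
  ∀ u v : V, HAdj E u v → σ v u = (σ u v).symm

/-- The weighted size `|N_{G,L,σ}(v,c)|_μ`: the `μ`-weight of all pairs `(w, c')` with
`w` adjacent to `v`, `c' ∈ L w` and `(w, c')` blocking `(v, c)`, i.e. `σ w v c' = c`. -/
def NWeightV {V : Type} [Fintype V] [DecidableEq V] (E : Finset (Finset V))
    (L : V → Finset ℕ) (μ : V → ℕ → ℝ) (σ : V → V → ℕ ≃ ℕ) (v : V) (c : ℕ) : ℝ :=
  ∑ w ∈ Finset.univ.filter (fun w => HAdj E w v),
    ∑ c' ∈ (L w).filter (fun c' => σ w v c' = c), μ w c'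

/-- An `(L,σ)`-colouring of the vertices of the hypergraph with edge set `E`. -/
def IsLσVertexColouring {V : Type} (E : Finset (Finset V)) (L : V → Finset ℕ)
    (σ : V → V → ℕ ≃ ℕ) (γ : V → ℕ) : Prop :=
  (∀ v : V, γ v ∈ L v) ∧
  ∀ u v : V, HAdj E u v → σ u v (γ u) ≠ γ v

open Finset in
theorem aux_indep {V : Type} [Fintype V] [DecidableEq V] (L : V → Finset ℕ) (p : V → ℕ → ℝ)
    (hp1 : ∀ v, ∑ c ∈ L v, p v c = 1) (u : V) (c : ℕ) (hc : c ∈ L u)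
    (F : (V → ℕ) → ℝ) (hF : ∀ γ d, F (Function.update γ u d) = F γ) :
    ∑ γ ∈ Fintype.piFinset L, (∏ x, p x (γ x)) * (F γ * (if γ u = c then 1 else 0))
      = p u c * ∑ γ ∈ Fintype.piFinset L, (∏ x, p x (γ x)) * F γ := by
  have key : ∀ γ : V → ℕ, ∀ d, (∏ x, p x (Function.update γ u d x))
      = p u d * ∏ x ∈ univ.erase u, p x (γ x) := by
    intro γ d
    rw [← Finset.mul_prod_erase univ _ (mem_univ u)]
    congr 1
    · simp
    · refine Finset.prod_congr rfl fun x hx => ?_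
      rw [Function.update_of_ne (Finset.ne_of_mem_erase hx)]
  have h1 : ∑ γ ∈ Fintype.piFinset L, (∏ x, p x (γ x)) * (F γ * (if γ u = c then 1 else 0))
      = ∑ γ ∈ (Fintype.piFinset L).filter (fun γ => γ u = c), (∏ x, p x (γ x)) * F γ := by
    rw [Finset.sum_filter]
    refine Finset.sum_congr rfl fun γ _ => ?_
    split_ifs <;> simp
  have h2 : ∑ γ ∈ Fintype.piFinset L, (∏ x, p x (γ x)) * F γ
      = ∑ q ∈ ((Fintype.piFinset L).filter (fun γ => γ u = c)) ×ˢ L u,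
        (∏ x, p x (Function.update q.1 u q.2 x)) * F q.1 := by
    symm
    refine Finset.sum_bij' (fun q _ => Function.update q.1 u q.2)
      (fun γ _ => (Function.update γ u c, γ u)) ?_ ?_ ?_ ?_ ?_
    · rintro ⟨γ, d⟩ h
      simp only [mem_product, mem_filter, Fintype.mem_piFinset] at h ⊢
      intro x
      by_cases hx : x = u
      · subst hx; simpa using h.2
      · rw [Function.update_of_ne hx]; exact h.1.1 x
    · intro γ h
      simp only [mem_product, mem_filter, Fintype.mem_piFinset] at h ⊢
      refine ⟨⟨fun x => ?_, by simp⟩, h u⟩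
      by_cases hx : x = u
      · subst hx; simpa using hc
      · rw [Function.update_of_ne hx]; exact h x
    · rintro ⟨γ, d⟩ h
      simp only [mem_product, mem_filter, Fintype.mem_piFinset] at h
      have := h.1.2
      subst this
      simp
    · intro γ h
      simp
    · rintro ⟨γ, d⟩ h
      simp only [hF]
  rw [h1, h2, Finset.sum_product, Finset.mul_sum]
  refine Finset.sum_congr rfl fun γ hγ => ?_
  have hu : γ u = c := (mem_filter.1 hγ).2
  simp only [key]
  rw [← Finset.sum_mul, ← Finset.sum_mul, hp1, ← Finset.mul_prod_erase univ _ (mem_univ u), hu]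
  ring

/-- `γ` is proper on the vertex set `S`. -/
def AuxProper {V : Type} (E : Finset (Finset V)) (σ : V → V → ℕ ≃ ℕ) (S : Finset V)
    (γ : V → ℕ) : Prop :=
  ∀ u ∈ S, ∀ w ∈ S, HAdj E u w → σ u w (γ u) ≠ γ w

open Classical in
/-- Probability that a random colouring is proper on `S`. -/
noncomputable def AuxZ {V : Type} [Fintype V] [DecidableEq V] (E : Finset (Finset V))
    (L : V → Finset ℕ) (p : V → ℕ → ℝ) (σ : V → V → ℕ ≃ ℕ) (S : Finset V) : ℝ :=
  ∑ γ ∈ Fintype.piFinset L, (∏ x, p x (γ x)) * (if AuxProper E σ S γ then 1 else 0)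

theorem aux_proper_update {V : Type} [DecidableEq V] (E : Finset (Finset V))
    (σ : V → V → ℕ ≃ ℕ) (S : Finset V) (u : V) (hu : u ∉ S) (γ : V → ℕ) (d : ℕ) :
    AuxProper E σ S (Function.update γ u d) ↔ AuxProper E σ S γ := by
  have h : ∀ x ∈ S, Function.update γ u d x = γ x := fun x hx =>
    Function.update_of_ne (by rintro rfl; exact hu hx) _ _
  unfold AuxProper
  constructor
  · intro H a ha b hb hab
    have := H a ha b hb hab
    rwa [h a ha, h b hb] at this
  · intro H a ha b hb hab
    rw [h a ha, h b hb]
    exact H a ha b hb hab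

open Finset Classical in
theorem aux_pair {V : Type} [Fintype V] [DecidableEq V] (E : Finset (Finset V))
    (L : V → Finset ℕ) (p : V → ℕ → ℝ) (hp1 : ∀ v, ∑ c ∈ L v, p v c = 1)
    (σ : V → V → ℕ ≃ ℕ) (S : Finset V) (u v : V) (hu : u ∉ S) (hv : v ∉ S) (huv : u ≠ v)
    (c d : ℕ) (hc : c ∈ L u) (hd : d ∈ L v) :
    ∑ γ ∈ Fintype.piFinset L, (∏ x, p x (γ x)) * (((if AuxProper E σ S γ then 1 else 0) *
      (if γ u = c then 1 else 0)) * (if γ v = d then 1 else 0))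
      = p v d * (p u c * AuxZ E L p σ S) := by
  rw [aux_indep L p hp1 v d hd (fun γ => ((if AuxProper E σ S γ then 1 else 0) *
      (if γ u = c then 1 else 0))), aux_indep L p hp1 u c hc
      (fun γ => if AuxProper E σ S γ then 1 else 0)]
  · rfl
  · intro γ d; simp only [aux_proper_update E σ S u hu]
  · intro γ d
    simp only [aux_proper_update E σ S v hv, Function.update_of_ne huv]

open Finset Classical in
theorem aux_step {V : Type} [Fintype V] [DecidableEq V] (E : Finset (Finset V))
    (L : V → Finset ℕ) (p : V → ℕ → ℝ) (hp1 : ∀ v, ∑ c ∈ L v, p v c = 1)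
    (hp0 : ∀ v, ∀ c ∈ L v, 0 ≤ p v c)
    (σ : V → V → ℕ ≃ ℕ) (hσ : IsVertexCorrespondence E σ) (S : Finset V) (v : V) (hv : v ∉ S) :
    AuxZ E L p σ S ≤ AuxZ E L p σ (insert v S) +
      ∑ d ∈ L v, ∑ u ∈ univ.filter (fun w => HAdj E w v ∧ w ∈ S),
        ∑ c ∈ (L u).filter (fun c' => σ u v c' = d),
          p v d * (p u c * AuxZ E L p σ (S.erase u)) := by
  have e1 : ∑ d ∈ L v, ∑ u ∈ univ.filter (fun w => HAdj E w v ∧ w ∈ S),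
        ∑ c ∈ (L u).filter (fun c' => σ u v c' = d),
          p v d * (p u c * AuxZ E L p σ (S.erase u))
      = ∑ γ ∈ Fintype.piFinset L, (∏ x, p x (γ x)) *
        ∑ d ∈ L v, ∑ u ∈ univ.filter (fun w => HAdj E w v ∧ w ∈ S),
        ∑ c ∈ (L u).filter (fun c' => σ u v c' = d),
        (((if AuxProper E σ (S.erase u) γ then (1:ℝ) else 0) *
          (if γ u = c then 1 else 0)) * (if γ v = d then 1 else 0)) := by
    simp only [Finset.mul_sum]
    symm
    rw [Finset.sum_comm]
    refine Finset.sum_congr rfl fun d hd => ?_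
    rw [Finset.sum_comm]
    refine Finset.sum_congr rfl fun u hu => ?_
    rw [Finset.sum_comm]
    refine Finset.sum_congr rfl fun c hc => ?_
    rw [aux_pair E L p hp1 σ (S.erase u) u v (by simp) (by simp [hv])
      (mem_filter.1 hu).2.1.1 c d (mem_filter.1 hc).1 hd]
  rw [e1]
  unfold AuxZ
  rw [← Finset.sum_add_distrib]
  refine Finset.sum_le_sum fun γ hγ => ?_
  have hγ' := Fintype.mem_piFinset.1 hγ
  rw [← mul_add]
  refine mul_le_mul_of_nonneg_left ?_ (Finset.prod_nonneg fun x _ => hp0 x _ (hγ' x))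
  have hnn : ∀ d u c, (0:ℝ) ≤ (((if AuxProper E σ (S.erase u) γ then (1:ℝ) else 0) *
          (if γ u = c then 1 else 0)) * (if γ v = d then 1 else 0)) := by
    intro d u c
    split_ifs <;> simp
  have hs1 : ∀ d u, (0:ℝ) ≤ ∑ c ∈ (L u).filter (fun c' => σ u v c' = d),
        (((if AuxProper E σ (S.erase u) γ then (1:ℝ) else 0) *
          (if γ u = c then 1 else 0)) * (if γ v = d then 1 else 0)) :=
    fun d u => Finset.sum_nonneg fun c _ => hnn d u c
  have hs2 : ∀ d, (0:ℝ) ≤ ∑ u ∈ univ.filter (fun w => HAdj E w v ∧ w ∈ S),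
      ∑ c ∈ (L u).filter (fun c' => σ u v c' = d),
        (((if AuxProper E σ (S.erase u) γ then (1:ℝ) else 0) *
          (if γ u = c then 1 else 0)) * (if γ v = d then 1 else 0)) :=
    fun d => Finset.sum_nonneg fun u _ => hs1 d u
  have hs3 := Finset.sum_nonneg fun d (_ : d ∈ L v) => hs2 d
  by_cases hS : AuxProper E σ S γ
  swap
  · rw [if_neg hS]
    refine add_nonneg (by split_ifs <;> simp) hs3
  by_cases hSv : AuxProper E σ (insert v S) γ
  · rw [if_pos hS, if_pos hSv]
    linarith
  -- a violation
  obtain ⟨u, huS, huv, hbad⟩ : ∃ u ∈ S, HAdj E u v ∧ σ u v (γ u) = γ v := by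
    by_contra hcon
    push Not at hcon
    apply hSv
    intro a ha b hb hab
    rcases Finset.mem_insert.1 ha with rfl | ha1
    · rcases Finset.mem_insert.1 hb with rfl | hb
      · exact absurd rfl hab.1
      · have hba : HAdj E b a := ⟨hab.1.symm, by
          obtain ⟨e, he, h1, h2⟩ := hab.2
          exact ⟨e, he, h2, h1⟩⟩
        intro h
        apply hcon b hb hba
        rw [hσ a b hab, ← h]
        simp
    · rcases Finset.mem_insert.1 hb with rfl | hb
      · exact hcon a ha1 hab
      · exact hS a ha1 b hb hab
  have hSe : AuxProper E σ (S.erase u) γ := fun a ha b hb hab =>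
    hS a (Finset.mem_of_mem_erase ha) b (Finset.mem_of_mem_erase hb) hab
  rw [if_pos hS, if_neg hSv, zero_add]
  refine le_trans ?_ (Finset.single_le_sum (fun d _ => hs2 d) (hγ' v))
  refine le_trans ?_ (Finset.single_le_sum (fun u _ => hs1 (γ v) u)
    (mem_filter.2 ⟨mem_univ u, huv, huS⟩))
  refine le_trans ?_ (Finset.single_le_sum (fun c _ => hnn (γ v) u c)
    (mem_filter.2 ⟨hγ' u, hbad⟩))
  simp [hSe]

theorem auxZ_nonneg {V : Type} [Fintype V] [DecidableEq V] (E : Finset (Finset V))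
    (L : V → Finset ℕ) (p : V → ℕ → ℝ) (hp0 : ∀ v, ∀ c ∈ L v, 0 ≤ p v c)
    (σ : V → V → ℕ ≃ ℕ) (S : Finset V) : 0 ≤ AuxZ E L p σ S := by
  classical
  refine Finset.sum_nonneg fun γ hγ => ?_
  refine mul_nonneg (Finset.prod_nonneg fun x _ => hp0 x _ (Fintype.mem_piFinset.1 hγ x)) ?_
  split_ifs <;> simp

open Finset in
theorem aux_half {V : Type} [Fintype V] [DecidableEq V] (E : Finset (Finset V))
    (L : V → Finset ℕ) (p : V → ℕ → ℝ) (hp1 : ∀ v, ∑ c ∈ L v, p v c = 1)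
    (hp0 : ∀ v, ∀ c ∈ L v, 0 ≤ p v c)
    (σ : V → V → ℕ ≃ ℕ) (hσ : IsVertexCorrespondence E σ)
    (hN : ∀ v, ∀ c ∈ L v, NWeightV E L p σ v c ≤ 1 / 4) :
    ∀ m : ℕ, ∀ S : Finset V, S.card = m → ∀ v ∉ S,
      AuxZ E L p σ S ≤ 2 * AuxZ E L p σ (insert v S) := by
  intro m
  induction m using Nat.strong_induction_on with
  | _ m ih =>
  intro S hS v hv
  have hstep := aux_step E L p hp1 hp0 σ hσ S v hv
  have hZ := auxZ_nonneg E L p hp0 σ S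
  have hbound : ∑ d ∈ L v, ∑ u ∈ univ.filter (fun w => HAdj E w v ∧ w ∈ S),
        ∑ c ∈ (L u).filter (fun c' => σ u v c' = d),
          p v d * (p u c * AuxZ E L p σ (S.erase u)) ≤ AuxZ E L p σ S / 2 := by
    calc _ ≤ ∑ d ∈ L v, p v d * (AuxZ E L p σ S / 2) := ?_
      _ = AuxZ E L p σ S / 2 := by rw [← Finset.sum_mul, hp1, one_mul]
    refine Finset.sum_le_sum fun d hd => ?_
    simp only [← Finset.mul_sum]
    refine mul_le_mul_of_nonneg_left ?_ (hp0 v d hd)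
    calc _ ≤ ∑ u ∈ univ.filter (fun w => HAdj E w v ∧ w ∈ S),
          ∑ c ∈ (L u).filter (fun c' => σ u v c' = d), p u c * (2 * AuxZ E L p σ S) := by
          refine Finset.sum_le_sum fun u hu => Finset.sum_le_sum fun c hc => ?_
          have huS := (mem_filter.1 hu).2.2
          refine mul_le_mul_of_nonneg_left ?_ (hp0 u c (mem_filter.1 hc).1)
          have := ih (S.erase u).card (hS ▸ Finset.card_erase_lt_of_mem huS) (S.erase u) rfl u
            (by simp)
          rwa [Finset.insert_erase huS] at this
      _ ≤ ∑ u ∈ univ.filter (fun w => HAdj E w v),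
          ∑ c ∈ (L u).filter (fun c' => σ u v c' = d), p u c * (2 * AuxZ E L p σ S) := by
          refine Finset.sum_le_sum_of_subset_of_nonneg ?_ ?_
          · intro w hw
            simp only [mem_filter] at hw ⊢
            exact ⟨hw.1, hw.2.1⟩
          · intro u _ _
            refine Finset.sum_nonneg fun c hc => ?_
            have := hp0 u c (mem_filter.1 hc).1
            positivity
      _ = NWeightV E L p σ v d * (2 * AuxZ E L p σ S) := by
          simp only [← Finset.sum_mul]
          rfl
      _ ≤ 1 / 4 * (2 * AuxZ E L p σ S) :=
          mul_le_mul_of_nonneg_right (hN v d hd) (by positivity)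
      _ = _ := by ring
  linarith

theorem auxZ_pos {V : Type} [Fintype V] [DecidableEq V] (E : Finset (Finset V))
    (L : V → Finset ℕ) (p : V → ℕ → ℝ) (hp1 : ∀ v, ∑ c ∈ L v, p v c = 1)
    (hp0 : ∀ v, ∀ c ∈ L v, 0 ≤ p v c)
    (σ : V → V → ℕ ≃ ℕ) (hσ : IsVertexCorrespondence E σ)
    (hN : ∀ v, ∀ c ∈ L v, NWeightV E L p σ v c ≤ 1 / 4) (S : Finset V) :
    0 < AuxZ E L p σ S := by
  induction S using Finset.induction_on with
  | empty =>
    have : AuxZ E L p σ ∅ = 1 := by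
      simp only [AuxZ, AuxProper]
      simp [← Finset.prod_univ_sum, hp1]
    rw [this]; exact one_pos
  | insert v S hv ih =>
    have := aux_half E L p hp1 hp0 σ hσ hN _ S rfl v hv
    linarith

theorem stmt_7 :
    ∀ (V : Type) [Fintype V] [DecidableEq V] (k : ℕ)
      (E : Finset (Finset V)) (σ : V → V → ℕ ≃ ℕ)
      (L : V → Finset ℕ) (μ : V → ℕ → ℝ) (ℓ n : ℝ),
      -- G is k-uniform
      (∀ e ∈ E, e.card = k) →
      -- G is linear
      (∀ e ∈ E, ∀ f ∈ E, e ≠ f → (e ∩ f).card ≤ 1) →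
      IsVertexCorrespondence E σ →
      -- (L, μ) is an assignment of weighted lists to the vertices: weights in (0,1]
      (∀ v : V, ∀ c ∈ L v, 0 < μ v c ∧ μ v c ≤ 1) →
      0 < ℓ → 0 < n →
      -- (i)
      3 * Real.exp 1 ≤ ℓ / n →
      -- (ii)
      (∀ v : V, ℓ ≤ ∑ c ∈ L v, μ v c) →
      -- (iii)
      (∀ v : V, ∀ c ∈ L v, NWeightV E L μ σ v c ≤ n) →
      ∃ γ : V → ℕ, IsLσVertexColouring E L σ γ := by
  intro V _ _ k E σ L μ ℓ n _ _ hσ hμ hℓ hn hratio hL hN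
  have hW : ∀ v, 0 < ∑ c ∈ L v, μ v c := fun v => lt_of_lt_of_le hℓ (hL v)
  have hnl : n / ℓ ≤ 1 / 4 := by
    have he := Real.add_one_le_exp 1
    rw [le_div_iff₀ hn] at hratio
    rw [div_le_iff₀ hℓ]
    nlinarith
  have hp1 : ∀ v, ∑ c ∈ L v, μ v c / ∑ c ∈ L v, μ v c = 1 := fun v => by
    rw [← Finset.sum_div, div_self (hW v).ne']
  have hp0 : ∀ v, ∀ c ∈ L v, 0 ≤ μ v c / ∑ c ∈ L v, μ v c := fun v c hc =>
    div_nonneg (hμ v c hc).1.le (hW v).le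
  have hpN : ∀ v, ∀ c ∈ L v,
      NWeightV E L (fun v c => μ v c / ∑ c ∈ L v, μ v c) σ v c ≤ 1 / 4 := by
    intro v c hc
    refine le_trans ?_ hnl
    refine le_trans ?_ (div_le_div_of_nonneg_right (hN v c hc) hℓ.le)
    unfold NWeightV
    simp only [Finset.sum_div]
    refine Finset.sum_le_sum fun u hu => Finset.sum_le_sum fun d hd => ?_
    exact div_le_div_of_nonneg_left (hμ u d (Finset.mem_filter.1 hd).1).1.le hℓ (hL u)
  have hpos := auxZ_pos E L (fun v c => μ v c / ∑ c ∈ L v, μ v c) hp1 hp0 σ hσ hpN Finset.univ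
  by_contra hcon
  push Not at hcon
  refine hpos.ne' ?_
  refine Finset.sum_eq_zero fun γ hγ => ?_
  rw [if_neg, mul_zero]
  intro hprop
  exact hcon γ ⟨Fintype.mem_piFinset.1 hγ, fun u v huv =>
    hprop u (Finset.mem_univ u) v (Finset.mem_univ v) huv⟩
end

section
/- For every 0 < ε ≤ 1/4 and k ∈ ℕ there exists δ such that the following holds for all real numbers ℓ, n > δ with 1+ε < ℓ/n < 3ek. Define K = 1 − (n/ℓ)·(1+ε/8)/ln n, ℓ' = ℓ·K^k − n^{2/3}, and n' = n·K^{k−1}·(1 − ((1−ε/8)/ln n)·K^k) + n^{2/3}. Then ℓ' ≥ (1 − 2k/ln n)·ℓ, n' ≥ (1 − 3k/ln n)·n, and ℓ'/n' ≥ (1 + ε/(16 ln n))·(ℓ/n). -/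
theorem core8 (ε x a K : ℝ) (m : ℕ) (hε : 0 < ε) (hε1 : ε ≤ 1 / 4) (hx : 0 < x)
    (hxe : ((m : ℝ) + 5) * x ≤ ε / 2) (ha : 0 < a) (ha1 : a ≤ 1 - 7 / 10 * ε)
    (hK : K = 1 - a * x) :
    (1 - 2 * ((m : ℝ) + 1) * x) ≤ K ^ (m + 1) - x ^ 2 ∧
    (1 - 3 * ((m : ℝ) + 1) * x) ≤ K ^ m * (1 - (1 - ε / 8) * x * K ^ (m + 1)) ∧
    0 < K ^ m * (1 - (1 - ε / 8) * x * K ^ (m + 1)) ∧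
    (1 + ε * x / 16) * (K ^ m * (1 - (1 - ε / 8) * x * K ^ (m + 1)) + x ^ 2) ≤
      K ^ (m + 1) - x ^ 2 := by
  have hm : (0 : ℝ) ≤ m := Nat.cast_nonneg m
  have hmx : 0 ≤ (m : ℝ) * x := by positivity
  have hx1 : x ≤ 1 / 40 := by nlinarith
  have hax : a * x ≤ x := by nlinarith
  have hax0 : 0 < a * x := by positivity
  have hK0 : 0 < K := by linarith
  have hK1 : K ≤ 1 := by linarith
  have hP1 : K ^ m ≤ 1 := pow_le_one₀ hK0.le hK1
  have hQ1 : K ^ (m + 1) ≤ 1 := pow_le_one₀ hK0.le hK1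
  have hQ0 : 0 < K ^ (m + 1) := by positivity
  have hP : 1 - (m : ℝ) * x ≤ K ^ m := by
    have h := one_add_mul_le_pow (a := -(a * x)) (by linarith) m
    have e : 1 + -(a * x) = K := by rw [hK]; ring
    rw [e] at h
    nlinarith
  have hQ : 1 - ((m : ℝ) + 1) * x ≤ K ^ (m + 1) := by
    have h := one_add_mul_le_pow (a := -(a * x)) (by linarith) (m + 1)
    have e : 1 + -(a * x) = K := by rw [hK]; ring
    rw [e] at h
    push_cast at h
    nlinarith
  have hPQ : K ^ (m + 1) = K ^ m * K := pow_succ K m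
  set P := K ^ m
  set Q := K ^ (m + 1)
  have hPh : 1 / 2 ≤ P := by nlinarith
  have hxx : x ^ 2 ≤ x := by nlinarith
  have hd : (1 - ε / 8) * x * Q ≤ x := by
    have h1 : (1 - ε / 8) * x ≤ x := by nlinarith
    have h2 : 0 ≤ (1 - ε / 8) * x := mul_nonneg (by linarith) hx.le
    nlinarith
  have hdl : (1 - ε / 8) * x - ((m : ℝ) + 1) * x ^ 2 ≤ (1 - ε / 8) * x * Q := by
    have h1 : (1 - ε / 8) * x ≤ x := by nlinarith
    have h2 : 0 ≤ (1 - ε / 8) * x := mul_nonneg (by linarith) hx.le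
    have h3 := mul_le_mul_of_nonneg_left hQ h2
    have h4 : (1 - ε / 8) * x * (((m : ℝ) + 1) * x) ≤ x * (((m : ℝ) + 1) * x) :=
      mul_le_mul_of_nonneg_right h1 (by positivity)
    nlinarith
  set D := (1 - ε / 8) * x * Q
  have hD0 : 0 ≤ D := mul_nonneg (mul_nonneg (by linarith) hx.le) hQ0.le
  refine ⟨by nlinarith, by nlinarith, mul_pos (by linarith) (by linarith), ?_⟩
  have hx2 : x ^ 2 ≤ P * (2 * x ^ 2) := by nlinarith [sq_nonneg x]
  have hT : 1 - D + 2 * x ^ 2 ≤ 1 - (1 - ε / 8) * x + ((m : ℝ) + 3) * x ^ 2 := by linarith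
  have hy : ((m : ℝ) + 5) * x ^ 2 ≤ ε / 2 * x := by nlinarith
  have hy2 : 0 ≤ ((m : ℝ) + 5) * x ^ 2 := by positivity
  have hT1 : 1 - D + 2 * x ^ 2 ≤ 1 := by nlinarith [sq_nonneg x]
  have hεx : 0 < ε * x := by positivity
  have key : (1 + ε * x / 16) * (1 - D + 2 * x ^ 2) ≤ K - 2 * x ^ 2 := by
    have : ε * x / 16 * (1 - D + 2 * x ^ 2) ≤ ε * x / 16 * 1 :=
      mul_le_mul_of_nonneg_left hT1 (by positivity)
    have h5 : a * x ≤ (1 - 7 / 10 * ε) * x := mul_le_mul_of_nonneg_right ha1 hx.le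
    rw [hK]
    nlinarith
  calc (1 + ε * x / 16) * (P * (1 - D) + x ^ 2)
      ≤ (1 + ε * x / 16) * (P * (1 - D) + P * (2 * x ^ 2)) :=
        mul_le_mul_of_nonneg_left (by linarith) (by positivity)
    _ = P * ((1 + ε * x / 16) * (1 - D + 2 * x ^ 2)) := by ring
    _ ≤ P * (K - 2 * x ^ 2) := mul_le_mul_of_nonneg_left key (by linarith)
    _ ≤ Q - x ^ 2 := by rw [hPQ]; linarith

open Filter in
theorem stmt_8 :
    ∀ (ε : ℝ) (k : ℕ), 0 < ε → ε ≤ 1 / 4 → 0 < k →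
    ∃ δ : ℝ, ∀ ℓ n : ℝ, δ < ℓ → δ < n →
      1 + ε < ℓ / n → ℓ / n < 3 * Real.exp 1 * k →
      ∀ K ℓ' n' : ℝ,
        K = 1 - n / ℓ * ((1 + ε / 8) / Real.log n) →
        ℓ' = ℓ * K ^ k - n ^ ((2 : ℝ) / 3) →
        n' = n * K ^ (k - 1) * (1 - (1 - ε / 8) / Real.log n * K ^ k) +
              n ^ ((2 : ℝ) / 3) →
        (1 - 2 * k / Real.log n) * ℓ ≤ ℓ' ∧
        (1 - 3 * k / Real.log n) * n ≤ n' ∧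
        (1 + ε / (16 * Real.log n)) * (ℓ / n) ≤ ℓ' / n' := by
  intro ε k hε hε1 hk
  obtain ⟨m, rfl⟩ : ∃ m, k = m + 1 := ⟨k - 1, by omega⟩
  have e1 : ∀ᶠ n : ℝ in atTop, 1 < n := eventually_gt_atTop 1
  have e2 : ∀ᶠ n : ℝ in atTop, ((m : ℝ) + 5) / (ε / 2) ≤ Real.log n :=
    Real.tendsto_log_atTop.eventually_ge_atTop _
  have e3 : ∀ᶠ n : ℝ in atTop, ‖Real.log n‖ ≤ 1 * ‖n ^ ((1 : ℝ) / 6)‖ :=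
    (isLittleO_log_rpow_atTop (by norm_num : (0 : ℝ) < 1 / 6)).def one_pos
  obtain ⟨δ, hδ⟩ := eventually_atTop.1 (e1.and (e2.and e3))
  refine ⟨δ, fun ℓ n hl hn h1 _ K ℓ' n' hK hl' hn' => ?_⟩
  obtain ⟨n1, n2, n3⟩ := hδ n hn.le
  have n0 : 0 < n := by linarith
  have L0 : 0 < Real.log n := Real.log_pos n1
  rw [Real.norm_of_nonneg L0.le, Real.norm_of_nonneg (by positivity), one_mul] at n3
  have hln : (1 + ε) * n < ℓ := (lt_div_iff₀ n0).1 h1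
  have hnl : n < ℓ := by nlinarith
  have l0 : 0 < ℓ := by linarith
  obtain ⟨x, hxd⟩ : ∃ x, x = 1 / Real.log n := ⟨_, rfl⟩
  have hx : 0 < x := by rw [hxd]; positivity
  have hxL : x * Real.log n = 1 := by rw [hxd]; field_simp
  have hs : n ^ ((2 : ℝ) / 3) ≤ n * x ^ 2 := by
    have h6 : Real.log n ^ 2 ≤ n ^ ((1 : ℝ) / 3) := by
      calc Real.log n ^ 2 ≤ (n ^ ((1 : ℝ) / 6)) ^ 2 := by gcongr
        _ = n ^ ((1 : ℝ) / 3) := by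
          rw [← Real.rpow_natCast, ← Real.rpow_mul n0.le]; norm_num
    have h7 : n ^ ((2 : ℝ) / 3) * n ^ ((1 : ℝ) / 3) = n := by
      rw [← Real.rpow_add n0]; norm_num
    have h8 : n ^ ((2 : ℝ) / 3) * Real.log n ^ 2 ≤ n := by
      calc _ ≤ n ^ ((2 : ℝ) / 3) * n ^ ((1 : ℝ) / 3) := by gcongr
        _ = n := h7
    calc n ^ ((2 : ℝ) / 3) = n ^ ((2 : ℝ) / 3) * Real.log n ^ 2 * x ^ 2 := by
          rw [mul_assoc, ← mul_pow, mul_comm (Real.log n), hxL]; ring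
      _ ≤ n * x ^ 2 := by gcongr
  have hs0 : 0 < n ^ ((2 : ℝ) / 3) := by positivity
  have hxe : ((m : ℝ) + 5) * x ≤ ε / 2 := by
    rw [div_le_iff₀ (by positivity)] at n2
    calc ((m : ℝ) + 5) * x ≤ Real.log n * (ε / 2) * x := by gcongr
      _ = (x * Real.log n) * (ε / 2) := by ring
      _ = ε / 2 := by rw [hxL]; ring
  have ha1 : n / ℓ * (1 + ε / 8) ≤ 1 - 7 / 10 * ε := by
    rw [div_mul_eq_mul_div, div_le_iff₀ l0]
    have : (1 - 7 / 10 * ε) * ((1 + ε) * n) ≤ (1 - 7 / 10 * ε) * ℓ :=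
      mul_le_mul_of_nonneg_left hln.le (by linarith)
    have h9 : n * (1 + ε / 8) ≤ n * ((1 - 7 / 10 * ε) * (1 + ε)) :=
      mul_le_mul_of_nonneg_left (by nlinarith) n0.le
    linarith
  obtain ⟨c1, c2, c3, c4⟩ := core8 ε x (n / ℓ * (1 + ε / 8)) K m hε hε1 hx hxe
    (by positivity) ha1 (by rw [hK, hxd]; ring)
  have r1 : (1 - ε / 8) / Real.log n = (1 - ε / 8) * x := by rw [hxd]; ring
  have r2 : ε / (16 * Real.log n) = ε * x / 16 := by rw [hxd]; field_simp
  have r3 : ∀ c : ℝ, c / Real.log n = c * x := fun c => by rw [hxd]; ring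
  rw [r1, Nat.add_sub_cancel] at hn'
  rw [r2, r3, r3]
  push_cast
  generalize n ^ ((2 : ℝ) / 3) = s at *
  set B := K ^ m * (1 - (1 - ε / 8) * x * K ^ (m + 1)) with hB
  have hnB : n' = n * B + s := by rw [hn', hB]; ring
  have hsl : s ≤ ℓ * x ^ 2 := hs.trans (by gcongr)
  have hl2 : ℓ * (K ^ (m + 1) - x ^ 2) ≤ ℓ' := by rw [hl']; linarith
  have hn2 : n' ≤ n * (B + x ^ 2) := by rw [hnB]; linarith
  have hn0 : 0 < n' := by rw [hnB]; positivity
  refine ⟨?_, ?_, ?_⟩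
  · have := mul_le_mul_of_nonneg_left c1 l0.le
    linarith
  · have := mul_le_mul_of_nonneg_left c2 n0.le
    linarith
  · rw [le_div_iff₀ hn0]
    calc (1 + ε * x / 16) * (ℓ / n) * n' ≤ (1 + ε * x / 16) * (ℓ / n) * (n * (B + x ^ 2)) := by
          gcongr
      _ = ℓ * ((1 + ε * x / 16) * (B + x ^ 2)) := by field_simp
      _ ≤ ℓ * (K ^ (m + 1) - x ^ 2) := by gcongr
      _ ≤ ℓ' := hl2
end
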